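/- arXiv:2012.14801 — 9 statements merged into one kernel-verified Lean document; each statement's English description precedes it below -/
import Mathlib

section
/- Let p be a prime, let n ≥ 5, and let a : Fin n → ℚ_p with a i ≠ 0 for every i. Then the diagonal quadratic form ∑ i, a i * (x i)^2 is isotropic over ℚ_p: there exists x : Fin n → ℚ_p with x ≠ 0 and ∑ i, a i * (x i)^2 = 0. -/
open Polynomial in
/-- **Hensel's lemma for diagonal forms.** An approximate zero of a diagonal quadratic form over
`ℤ_[p]` at which some partial derivative is large lifts to a nontrivial zero. -/
theorem PadicInt.exists_diagonal_zero_of_norm_lt {p : ℕ} [Fact p.Prime] {ι : Type*} [Fintype ι]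
    (u x : ι → ℤ_[p]) (j : ι) (h : ‖∑ i, u i * x i ^ 2‖ < ‖2 * u j * x j‖ ^ 2) :
    ∃ y : ι → ℤ_[p], y ≠ 0 ∧ ∑ i, u i * y i ^ 2 = 0 := by
  classical
  have hsum (z : ℤ_[p]) : ∑ i, u i * Function.update x j z i ^ 2 =
      u j * z ^ 2 + ∑ i ∈ Finset.univ.erase j, u i * x i ^ 2 := by
    rw [← Finset.add_sum_erase _ _ (Finset.mem_univ j), Function.update_self]
    congr 1
    refine Finset.sum_congr rfl fun i hi => ?_
    rw [Function.update_of_ne (Finset.ne_of_mem_erase hi)]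
  set r := ∑ i ∈ Finset.univ.erase j, u i * x i ^ 2 with hr
  let F : ℤ_[p][X] := C (u j) * X ^ 2 + C r
  have hF (z : ℤ_[p]) : F.aeval z = u j * z ^ 2 + r := by simp [F]
  have hF' (z : ℤ_[p]) : F.derivative.aeval z = 2 * u j * z := by
    simp [F]; ring
  have hx := hsum (x j)
  rw [Function.update_eq_self] at hx
  obtain ⟨z, hz, -, hz', -⟩ := hensels_lemma (F := F) (a := x j) (by rwa [hF, hF', ← hx])
  refine ⟨Function.update x j z, fun h0 => ?_, by rw [hsum, ← hF, hz]⟩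
  have hz0 : z = 0 := by simpa using congrFun h0 j
  rw [hF', hF', hz0, mul_zero, norm_zero] at hz'
  rw [← hz'] at h
  exact absurd h (by simp)

/-- A diagonal quadratic form, given by its coefficients, is isotropic. -/
def DiagonalIsotropic {ι K : Type*} [Fintype ι] [Field K] (a : ι → K) : Prop :=
  ∃ x : ι → K, x ≠ 0 ∧ ∑ i, a i * x i ^ 2 = 0

namespace DiagonalIsotropic

variable {ι κ K : Type*} [Fintype ι] [Fintype κ] [Field K]

theorem of_comp {a : ι → K} {f : κ → ι} (hf : Function.Injective f)
    (h : DiagonalIsotropic (a ∘ f)) : DiagonalIsotropic a := by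
  obtain ⟨x, hx, hs⟩ := h
  refine ⟨Function.extend f x 0, fun h0 => hx ?_, ?_⟩
  · funext i
    simpa [hf.extend_apply] using congrFun h0 (f i)
  · rw [← hs]
    symm
    refine Fintype.sum_of_injective f hf _ _ (fun i hi => ?_) fun i => ?_
    · rw [Function.extend_apply' _ _ _ (by simpa using hi)]
      simp
    · simp [hf.extend_apply]

theorem of_mul_sq {a b t : ι → K} (ht : ∀ i, t i ≠ 0) (hab : ∀ i, a i = b i * t i ^ 2)
    (h : DiagonalIsotropic b) : DiagonalIsotropic a := by
  obtain ⟨x, hx, hs⟩ := h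
  refine ⟨fun i => x i / t i, fun h0 => hx ?_, ?_⟩
  · funext i
    simpa [ht i] using congrFun h0 i
  · rw [← hs]
    refine Finset.sum_congr rfl fun i _ => ?_
    have := ht i
    rw [hab]
    field_simp

theorem of_const_mul {a : ι → K} {c : K} (hc : c ≠ 0)
    (h : DiagonalIsotropic fun i => c * a i) : DiagonalIsotropic a := by
  obtain ⟨x, hx, hs⟩ := h
  refine ⟨x, hx, ?_⟩
  simp only [mul_assoc, ← Finset.mul_sum] at hs
  exact (mul_eq_zero.mp hs).resolve_left hc

theorem of_padicInt {p : ℕ} [Fact p.Prime] {u : ι → ℤ_[p]}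
    (h : ∃ y : ι → ℤ_[p], y ≠ 0 ∧ ∑ i, u i * y i ^ 2 = 0) :
    DiagonalIsotropic fun i => (u i : ℚ_[p]) := by
  obtain ⟨y, hy, hs⟩ := h
  refine ⟨fun i => y i, fun h0 => hy ?_, ?_⟩
  · funext i
    simpa using congrFun h0 i
  · simpa [PadicInt.coe_sum] using congrArg ((↑) : ℤ_[p] → ℚ_[p]) hs

end DiagonalIsotropic

section Decomposition

variable {p : ℕ} [Fact p.Prime]

theorem Padic.exists_eq_unit_mul_sq {a : ℚ_[p]} (ha : a ≠ 0) (hv : Even a.valuation) :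
    ∃ (u : ℤ_[p]) (t : ℚ_[p]), ‖u‖ = 1 ∧ t ≠ 0 ∧ a = u * t ^ 2 := by
  obtain ⟨k, hk⟩ := hv
  have hp : (p : ℚ_[p]) ≠ 0 := by exact_mod_cast (Fact.out : p.Prime).ne_zero
  have hp' : (p : ℝ) ≠ 0 := by exact_mod_cast (Fact.out : p.Prime).ne_zero
  have ht : ((p : ℚ_[p]) ^ k) ≠ 0 := zpow_ne_zero _ hp
  have hnorm : ‖a / ((p : ℚ_[p]) ^ k) ^ 2‖ = 1 := by
    rw [norm_div, norm_pow, Padic.norm_p_zpow, Padic.norm_eq_zpow_neg_valuation ha, hk, pow_two,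
      ← zpow_add₀ hp', neg_add, div_self (zpow_ne_zero _ hp')]
  exact ⟨⟨_, hnorm.le⟩, (p : ℚ_[p]) ^ k, hnorm, ht, by simp [ht]⟩

theorem Padic.valuation_p_mul {a : ℚ_[p]} (ha : a ≠ 0) :
    (p * a).valuation = a.valuation + 1 := by
  have hp : (p : ℚ_[p]) ≠ 0 := by exact_mod_cast (Fact.out : p.Prime).ne_zero
  rw [Padic.valuation_mul hp ha, Padic.valuation_p, add_comm]

theorem Padic.exists_eq_p_mul_unit_mul_sq {a : ℚ_[p]} (ha : a ≠ 0) (hv : ¬ Even a.valuation) :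
    ∃ (u : ℤ_[p]) (t : ℚ_[p]), ‖u‖ = 1 ∧ t ≠ 0 ∧ a = (p * u : ℤ_[p]) * t ^ 2 := by
  have hp : (p : ℚ_[p]) ≠ 0 := by exact_mod_cast (Fact.out : p.Prime).ne_zero
  obtain ⟨u, t, hu, ht, h⟩ := Padic.exists_eq_unit_mul_sq (mul_ne_zero hp ha)
    (by rw [Padic.valuation_p_mul ha]; exact (Int.not_even_iff_odd.mp hv).add_one)
  refine ⟨u, t / p, hu, div_ne_zero ht hp, mul_left_cancel₀ hp ?_⟩
  rw [h]
  push_cast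
  field_simp

end Decomposition

section OddPrime

variable {p : ℕ} [Fact p.Prime]

open Polynomial in
theorem ZMod.exists_ternary_diagonal_zero (hp : p ≠ 2) {a b : ZMod p} (c : ZMod p)
    (ha : a ≠ 0) (hb : b ≠ 0) : ∃ x y : ZMod p, c + a * x ^ 2 + b * y ^ 2 = 0 := by
  obtain ⟨x, y, h⟩ := FiniteField.exists_root_sum_quadratic
    (f := C a * X ^ 2 + C 0 * X + C c) (g := C b * X ^ 2 + C 0 * X + C 0)
    (degree_quadratic ha) (degree_quadratic hb)
    (by rw [ZMod.card]; exact (Fact.out : p.Prime).eq_two_or_odd.resolve_left hp)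
  refine ⟨x, y, ?_⟩
  simp at h
  linear_combination h

theorem PadicInt.exists_ternary_diagonal_zero (hp : p ≠ 2) (u : Fin 3 → ℤ_[p])
    (hu : ∀ i, ‖u i‖ = 1) : ∃ y : Fin 3 → ℤ_[p], y ≠ 0 ∧ ∑ i, u i * y i ^ 2 = 0 := by
  have hker (z : ℤ_[p]) : toZMod z = 0 ↔ ‖z‖ < 1 := by
    rw [← RingHom.mem_ker, ker_toZMod, IsLocalRing.mem_maximalIdeal, mem_nonunits]
  have hne (i) : toZMod (u i) ≠ 0 := fun h => ((hker _).mp h).ne (hu i)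
  obtain ⟨x, y, hxy⟩ := ZMod.exists_ternary_diagonal_zero hp (toZMod (u 0)) (hne 1) (hne 2)
  obtain ⟨x, rfl⟩ := ZMod.ringHom_surjective (toZMod (p := p)) x
  obtain ⟨y, rfl⟩ := ZMod.ringHom_surjective (toZMod (p := p)) y
  have h2 : ‖(2 : ℤ_[p])‖ = 1 := by
    have := PadicInt.norm_natCast_eq_one_iff (p := p) (n := 2)
    exact this.mpr ((Nat.coprime_primes Fact.out Nat.prime_two).mpr hp)
  refine exists_diagonal_zero_of_norm_lt u ![1, x, y] 0 ?_
  simp only [norm_mul, h2, hu, Fin.sum_univ_three]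
  simp only [Matrix.cons_val_zero, Matrix.cons_val_one, Matrix.cons_val, norm_one, one_pow, mul_one]
  rw [← hker]
  simpa using hxy

end OddPrime

section Two

theorem PadicInt.exists_int_add_eight_mul (u : ℤ_[2]) : ∃ (c : ℤ) (w : ℤ_[2]), u = c + 8 * w := by
  obtain ⟨w, hw⟩ := Ideal.mem_span_singleton.mp (PadicInt.appr_spec 3 u)
  refine ⟨u.appr 3, w, ?_⟩
  push_cast at hw ⊢
  linear_combination hw

theorem PadicInt.exists_int_add_eight_mul_of_norm_eq_one {u : ℤ_[2]} (hu : ‖u‖ = 1) :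
    ∃ (c : ℤ) (w : ℤ_[2]), c % 2 = 1 ∧ u = c + 8 * w := by
  obtain ⟨c, w, h⟩ := PadicInt.exists_int_add_eight_mul u
  refine ⟨c, w, ?_, h⟩
  by_contra hc
  obtain ⟨d, rfl⟩ : (2 : ℤ) ∣ c := by omega
  have : ‖u‖ < 1 := by
    rw [PadicInt.norm_lt_one_iff_dvd, h]
    exact ⟨d + 4 * w, by push_cast; ring⟩
  exact this.ne hu

/-- An integer zero modulo `8` of a diagonal form over `ℤ_[2]` with an odd coordinate at a unit
coefficient lifts to a nontrivial zero. -/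
theorem PadicInt.exists_diagonal_zero_of_eight_dvd {ι : Type*} [Fintype ι] {u w : ι → ℤ_[2]}
    {c : ι → ℤ} (hc : ∀ i, u i = c i + 8 * w i) (j : ι) (hj : ‖u j‖ = 1) (x : ι → ℤ)
    (hxj : x j = 1) (h : (∑ i, c i * x i ^ 2) % 8 = 0) :
    ∃ y : ι → ℤ_[2], y ≠ 0 ∧ ∑ i, u i * y i ^ 2 = 0 := by
  refine exists_diagonal_zero_of_norm_lt u (fun i => x i) j ?_
  have hdvd : (2 : ℤ_[2]) ^ 3 ∣ ∑ i, u i * (x i : ℤ_[2]) ^ 2 := by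
    obtain ⟨k, hk⟩ := Int.dvd_of_emod_eq_zero h
    refine ⟨k + ∑ i, w i * (x i : ℤ_[2]) ^ 2, ?_⟩
    have hk' := congrArg (Int.cast : ℤ → ℤ_[2]) hk
    push_cast at hk'
    simp only [hc, add_mul, Finset.sum_add_distrib, hk', mul_add, mul_assoc, ← Finset.mul_sum]
    norm_num
  have h2 : ‖(2 : ℤ_[2])‖ = 1 / 2 := by simpa using PadicInt.norm_p (p := 2)
  obtain ⟨k, hk⟩ := hdvd
  rw [hk]
  simp only [norm_mul, norm_pow, h2, hj, hxj, Int.cast_one, norm_one]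
  have := PadicInt.norm_le_one k
  linarith

theorem PadicInt.exists_quaternary_diagonal_zero (u : Fin 4 → ℤ_[2])
    (h0 : ‖u 0‖ = 1) (h1 : ‖u 1‖ = 1) (h2 : ‖u 2‖ = 1)
    (h3 : ∃ v : ℤ_[2], ‖v‖ = 1 ∧ u 3 = 2 * v) :
    ∃ y : Fin 4 → ℤ_[2], y ≠ 0 ∧ ∑ i, u i * y i ^ 2 = 0 := by
  obtain ⟨v, hv, h3⟩ := h3
  obtain ⟨c₀, w₀, o₀, e₀⟩ := exists_int_add_eight_mul_of_norm_eq_one h0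
  obtain ⟨c₁, w₁, o₁, e₁⟩ := exists_int_add_eight_mul_of_norm_eq_one h1
  obtain ⟨c₂, w₂, o₂, e₂⟩ := exists_int_add_eight_mul_of_norm_eq_one h2
  obtain ⟨c₃, w₃, o₃, e₃⟩ := exists_int_add_eight_mul_of_norm_eq_one hv
  have lift (x₁ x₂ x₃ : ℤ)
      (h : (c₀ + c₁ * x₁ ^ 2 + c₂ * x₂ ^ 2 + 2 * c₃ * x₃ ^ 2) % 8 = 0) :
      ∃ y : Fin 4 → ℤ_[2], y ≠ 0 ∧ ∑ i, u i * y i ^ 2 = 0 := by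
    refine exists_diagonal_zero_of_eight_dvd (w := ![w₀, w₁, w₂, 2 * w₃])
      (c := ![c₀, c₁, c₂, 2 * c₃]) (fun i => ?_) 0 h0 ![1, x₁, x₂, x₃] rfl ?_
    · fin_cases i
      · exact e₀
      · exact e₁
      · exact e₂
      · simp [h3, e₃]; ring
    · simpa [Fin.sum_univ_four] using h
  have cases : (c₀ + c₁) % 4 = 0 ∨ (c₀ + c₁ + 2 * c₃) % 4 = 0 := by omega
  rcases cases with h | h
  · rcases (by omega : (c₀ + c₁) % 8 = 0 ∨ (c₀ + c₁ + c₂ * 4) % 8 = 0) with h | h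
    · exact lift 1 0 0 (by simpa using h)
    · exact lift 1 2 0 (by simpa using h)
  · rcases (by omega : (c₀ + c₁ + 2 * c₃) % 8 = 0 ∨ (c₀ + c₁ + c₂ * 4 + 2 * c₃) % 8 = 0) with h | h
    · exact lift 1 0 1 (by simpa using h)
    · exact lift 1 2 1 (by simpa using h)

theorem PadicInt.exists_quinary_diagonal_zero (u : Fin 5 → ℤ_[2]) (hu : ∀ i, ‖u i‖ = 1) :
    ∃ y : Fin 5 → ℤ_[2], y ≠ 0 ∧ ∑ i, u i * y i ^ 2 = 0 := by
  choose c w o e using fun i => exists_int_add_eight_mul_of_norm_eq_one (hu i)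
  have lift (x₁ x₂ x₃ x₄ : ℤ)
      (h : (c 0 + c 1 * x₁ ^ 2 + c 2 * x₂ ^ 2 + c 3 * x₃ ^ 2 + c 4 * x₄ ^ 2) % 8 = 0) :
      ∃ y : Fin 5 → ℤ_[2], y ≠ 0 ∧ ∑ i, u i * y i ^ 2 = 0 := by
    refine exists_diagonal_zero_of_eight_dvd e 0 (hu 0) ![1, x₁, x₂, x₃, x₄] rfl ?_
    simpa [Fin.sum_univ_five] using h
  have o₀ := o 0
  have o₁ := o 1
  have o₂ := o 2
  have o₃ := o 3
  have o₄ := o 4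
  have cases : (c 0 + c 1) % 4 = 0 ∨ (c 0 + c 2) % 4 = 0 ∨ (c 0 + c 3) % 4 = 0 ∨
      (c 0 + c 1 + c 2 + c 3) % 4 = 0 := by omega
  rcases cases with h | h | h | h
  · rcases (by omega : (c 0 + c 1) % 8 = 0 ∨ (c 0 + c 1 + c 4 * 4) % 8 = 0) with h | h
    · exact lift 1 0 0 0 (by simpa using h)
    · exact lift 1 0 0 2 (by simpa using h)
  · rcases (by omega : (c 0 + c 2) % 8 = 0 ∨ (c 0 + c 2 + c 4 * 4) % 8 = 0) with h | h
    · exact lift 0 1 0 0 (by simpa using h)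
    · exact lift 0 1 0 2 (by simpa using h)
  · rcases (by omega : (c 0 + c 3) % 8 = 0 ∨ (c 0 + c 3 + c 4 * 4) % 8 = 0) with h | h
    · exact lift 0 0 1 0 (by simpa using h)
    · exact lift 0 0 1 2 (by simpa using h)
  · rcases (by omega : (c 0 + c 1 + c 2 + c 3) % 8 = 0 ∨
      (c 0 + c 1 + c 2 + c 3 + c 4 * 4) % 8 = 0) with h | h
    · exact lift 1 1 1 0 (by simpa using h)
    · exact lift 1 1 1 2 (by simpa using h)

end Two

theorem Padic.diagonalIsotropic_of_three_even {p : ℕ} [Fact p.Prime] (a : Fin 5 → ℚ_[p])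
    (ha : ∀ i, a i ≠ 0) {i j k : Fin 5} (hij : i ≠ j) (hik : i ≠ k) (hjk : j ≠ k)
    (hi : Even (a i).valuation) (hj : Even (a j).valuation) (hk : Even (a k).valuation) :
    DiagonalIsotropic a := by
  by_cases hp : p = 2
  · subst hp
    by_cases hall : ∀ l, Even (a l).valuation
    · choose u t hu ht h using fun l => Padic.exists_eq_unit_mul_sq (ha l) (hall l)
      exact .of_mul_sq ht h (.of_padicInt (PadicInt.exists_quinary_diagonal_zero u hu))
    · push Not at hall
      obtain ⟨l, hl⟩ := hall
      obtain ⟨u₀, t₀, hu₀, ht₀, h₀⟩ := Padic.exists_eq_unit_mul_sq (ha i) hi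
      obtain ⟨u₁, t₁, hu₁, ht₁, h₁⟩ := Padic.exists_eq_unit_mul_sq (ha j) hj
      obtain ⟨u₂, t₂, hu₂, ht₂, h₂⟩ := Padic.exists_eq_unit_mul_sq (ha k) hk
      obtain ⟨u₃, t₃, hu₃, ht₃, h₃⟩ := Padic.exists_eq_p_mul_unit_mul_sq (ha l) hl
      have hil : i ≠ l := fun h => hl (h ▸ hi)
      have hjl : j ≠ l := fun h => hl (h ▸ hj)
      have hkl : k ≠ l := fun h => hl (h ▸ hk)
      have hinj : Function.Injective ![i, j, k, l] := by
        intro m n hmn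
        fin_cases m <;> fin_cases n <;> simp_all
      refine .of_comp hinj (.of_mul_sq (t := ![t₀, t₁, t₂, t₃]) ?_ ?_ (.of_padicInt
        (PadicInt.exists_quaternary_diagonal_zero ![u₀, u₁, u₂, (2 : ℕ) * u₃] hu₀ hu₁ hu₂
          ⟨u₃, hu₃, rfl⟩)))
      · intro m
        fin_cases m <;> assumption
      · intro m
        fin_cases m <;> assumption
  · obtain ⟨u₀, t₀, hu₀, ht₀, h₀⟩ := Padic.exists_eq_unit_mul_sq (ha i) hi
    obtain ⟨u₁, t₁, hu₁, ht₁, h₁⟩ := Padic.exists_eq_unit_mul_sq (ha j) hj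
    obtain ⟨u₂, t₂, hu₂, ht₂, h₂⟩ := Padic.exists_eq_unit_mul_sq (ha k) hk
    have hinj : Function.Injective ![i, j, k] := by
      intro m n hmn
      fin_cases m <;> fin_cases n <;> simp_all
    refine .of_comp hinj (.of_mul_sq (t := ![t₀, t₁, t₂]) ?_ ?_ (.of_padicInt
      (PadicInt.exists_ternary_diagonal_zero hp ![u₀, u₁, u₂] ?_)))
    all_goals
      intro m
      fin_cases m <;> assumption

theorem Padic.diagonalIsotropic_fin_five {p : ℕ} [Fact p.Prime] (a : Fin 5 → ℚ_[p])
    (ha : ∀ i, a i ≠ 0) : DiagonalIsotropic a := by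
  classical
  obtain ⟨b, hb⟩ := Fintype.exists_lt_card_fiber_of_mul_lt_card (n := 2)
    (fun i => decide (Even (a i).valuation)) (by simp)
  obtain ⟨i, j, k, hi, hj, hk, hij, hik, hjk⟩ := Finset.two_lt_card_iff.mp hb
  simp only [Finset.mem_filter, Finset.mem_univ, true_and] at hi hj hk
  cases b with
  | true =>
    exact diagonalIsotropic_of_three_even a ha hij hik hjk (of_decide_eq_true hi)
      (of_decide_eq_true hj) (of_decide_eq_true hk)
  | false =>
    have hp : (p : ℚ_[p]) ≠ 0 := by exact_mod_cast (Fact.out : p.Prime).ne_zero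
    have heven {l : Fin 5} (hl : decide (Even (a l).valuation) = false) :
        Even (p * a l).valuation := by
      rw [valuation_p_mul (ha l)]
      exact (Int.not_even_iff_odd.mp (of_decide_eq_false hl)).add_one
    exact .of_const_mul hp (diagonalIsotropic_of_three_even _ (fun l => mul_ne_zero hp (ha l))
      hij hik hjk (heven hi) (heven hj) (heven hk))

/-- Every nondegenerate diagonal quadratic form of rank at least 5 over the field
of p-adic numbers is isotropic. -/
theorem padic_rank_five_isotropic
    (p : ℕ) [Fact p.Prime] (n : ℕ) (hn : 5 ≤ n)
    (a : Fin n → ℚ_[p]) (ha : ∀ i, a i ≠ 0) :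
    ∃ x : Fin n → ℚ_[p], x ≠ 0 ∧ ∑ i, a i * (x i) ^ 2 = 0 :=
  DiagonalIsotropic.of_comp (Fin.castLE_injective hn)
    (Padic.diagonalIsotropic_fin_five _ fun i => ha (Fin.castLE hn i))
end

section
/- Let p be a prime and let a, b : Fin 4 → ℚ_p with a i ≠ 0 and b i ≠ 0 for every i. If both diagonal quadratic forms q_a(x) = ∑ i, a i * (x i)^2 and q_b(x) = ∑ i, b i * (x i)^2 are anisotropic over ℚ_p, then q_a and q_b are equivalent: there exists a linear automorphism T of ℚ_p⁴ such that q_b(T x) = q_a(x) for all x. (Uniqueness of the rank-4 anisotropic form over a p-adic field.) -/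
section Field

variable {F : Type*} [Field F]

/-- `x` is a value of the binary form `a² - d b²`, the norm form of `F(√d)`. -/
def IsBinaryNorm (d x : F) : Prop := ∃ a b : F, x = a ^ 2 - d * b ^ 2

namespace IsBinaryNorm

theorem sq (d s : F) : IsBinaryNorm d (s ^ 2) := ⟨s, 0, by ring⟩

theorem one (d : F) : IsBinaryNorm d 1 := ⟨1, 0, by ring⟩

theorem neg_self (d : F) : IsBinaryNorm d (-d) := ⟨0, 1, by ring⟩

theorem mul {d x y : F} (hx : IsBinaryNorm d x) (hy : IsBinaryNorm d y) :
    IsBinaryNorm d (x * y) := by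
  obtain ⟨a, b, rfl⟩ := hx
  obtain ⟨a', b', rfl⟩ := hy
  exact ⟨a * a' + d * b * b', a * b' + b * a', by ring⟩

theorem mul_sq_iff {d x s : F} (hs : s ≠ 0) :
    IsBinaryNorm d (x * s ^ 2) ↔ IsBinaryNorm d x := by
  refine ⟨fun h => ?_, fun h => h.mul (sq d s)⟩
  have := h.mul (sq d s⁻¹)
  rwa [mul_assoc, ← mul_pow, mul_inv_cancel₀ hs, one_pow, mul_one] at this

theorem mul_left_iff {d x y : F} (hx : IsBinaryNorm d x) (h0 : x ≠ 0) :
    IsBinaryNorm d (x * y) ↔ IsBinaryNorm d y := by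
  refine ⟨fun h => ?_, hx.mul⟩
  rw [← mul_sq_iff h0]
  convert hx.mul h using 1
  ring

theorem disc_mul_sq_iff {d x s : F} (hs : s ≠ 0) :
    IsBinaryNorm (d * s ^ 2) x ↔ IsBinaryNorm d x := by
  constructor
  · rintro ⟨a, b, rfl⟩
    exact ⟨a, s * b, by ring⟩
  · rintro ⟨a, b, rfl⟩
    exact ⟨a, b / s, by field_simp⟩

variable [NeZero (2 : F)]

theorem of_sq {s : F} (hs : s ≠ 0) (x : F) : IsBinaryNorm (s ^ 2) x := by
  have h2 : (2 : F) ≠ 0 := NeZero.ne 2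
  exact ⟨(x + 1) / 2, (x - 1) / (2 * s), by field_simp; ring⟩

theorem symm {d x : F} (hx : x ≠ 0) (h : IsBinaryNorm d x) : IsBinaryNorm x d := by
  obtain ⟨a, b, rfl⟩ := h
  by_cases hb : b = 0
  · subst hb
    have ha : a ≠ 0 := by
      rintro rfl
      simp at hx
    simpa using of_sq ha d
  · exact ⟨a / b, 1 / b, by field_simp; ring⟩

end IsBinaryNorm

/-- The properties of the quadratic Hilbert symbol of a non-archimedean local field that determine
its anisotropic quaternary forms: norm groups of quadratic extensions have index two, and `-1` is
a sum of four squares. -/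
structure HasLocalSymbol (F : Type*) [Field F] : Prop where
  mul_of_not : ∀ {d x y : F}, d ≠ 0 → x ≠ 0 → y ≠ 0 →
    ¬ IsBinaryNorm d x → ¬ IsBinaryNorm d y → IsBinaryNorm d (x * y)
  exists_not : ∀ {d : F}, d ≠ 0 → ¬ IsSquare d → ∃ x, x ≠ 0 ∧ ¬ IsBinaryNorm d x
  neg_one_four_squares : ∃ x y z w : F, x ^ 2 + y ^ 2 + z ^ 2 + w ^ 2 = -1

/-- The diagonal form with coefficients `b` pulls back to the one with coefficients `a` along some
linear endomorphism. -/
def DiagRep {ι : Type*} [Fintype ι] (a b : ι → F) : Prop :=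
  ∃ T : (ι → F) →ₗ[F] (ι → F), ∀ x, ∑ i, b i * (T x i) ^ 2 = ∑ i, a i * (x i) ^ 2

namespace DiagRep

variable {ι : Type*} [Fintype ι]

theorem trans {a b c : ι → F} (h : DiagRep a b) (h' : DiagRep b c) : DiagRep a c := by
  obtain ⟨T, hT⟩ := h
  obtain ⟨S, hS⟩ := h'
  exact ⟨S ∘ₗ T, fun x => by rw [← hT, ← hS]; rfl⟩

theorem of_sq_scale {a b : ι → F} (s : ι → F) (h : ∀ i, a i = b i * s i ^ 2) : DiagRep a b :=
  ⟨LinearMap.pi fun i => s i • LinearMap.proj i, fun x =>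
    Finset.sum_congr rfl fun i _ => by simp [h]; ring⟩

theorem exists_linearEquiv {a b : ι → F} (h : DiagRep a b)
    (ha : ∀ x : ι → F, ∑ i, a i * (x i) ^ 2 = 0 → x = 0) :
    ∃ T : (ι → F) ≃ₗ[F] (ι → F), ∀ x, ∑ i, b i * (T x i) ^ 2 = ∑ i, a i * (x i) ^ 2 := by
  obtain ⟨T, hT⟩ := h
  have hinj : Function.Injective T := by
    rw [injective_iff_map_eq_zero]
    intro x hx
    apply ha
    rw [← hT, hx]
    simp
  exact ⟨LinearEquiv.ofInjectiveEndo T hinj, hT⟩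

theorem of_matrix {a b : Fin 4 → F} (M : Matrix (Fin 4) (Fin 4) F)
    (h : ∀ x : Fin 4 → F, ∑ i, b i * (M.mulVec x i) ^ 2 = ∑ i, a i * (x i) ^ 2) : DiagRep a b :=
  ⟨M.mulVecLin, h⟩

end DiagRep

/-- Coefficients of the norm form of the quaternion algebra `(d, t)` scaled by `c`. -/
def quatForm (c d t : F) : Fin 4 → F := ![c, -(c * d), -(c * t), c * t * d]

namespace quatForm

theorem swap (c d t : F) : DiagRep (quatForm c d t) (quatForm c t d) :=
  .of_matrix !![1, 0, 0, 0; 0, 0, 1, 0; 0, 1, 0, 0; 0, 0, 0, 1] fun x => by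
    simp [quatForm, Matrix.mulVec, dotProduct, Fin.sum_univ_four]
    ring

theorem neg_mul_right {t : F} (ht : t ≠ 0) (c d : F) :
    DiagRep (quatForm c d t) (quatForm (-(c * t)) d t) :=
  .of_matrix !![0, 0, 1, 0; 0, 0, 0, 1; t⁻¹, 0, 0, 0; 0, t⁻¹, 0, 0] fun x => by
    simp [quatForm, Matrix.mulVec, dotProduct, Fin.sum_univ_four]
    field_simp
    ring

theorem right_mul {d n : F} (hn : n ≠ 0) (h : IsBinaryNorm d n) (c t : F) :
    DiagRep (quatForm c d t) (quatForm c d (t * n)) := by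
  obtain ⟨x, y, hxy⟩ := h
  refine .of_matrix !![1, 0, 0, 0; 0, 1, 0, 0; 0, 0, x / n, d * y / n; 0, 0, y / n, x / n]
    fun v => ?_
  simp [quatForm, Matrix.mulVec, dotProduct, Fin.sum_univ_four]
  field_simp
  rw [hxy]
  ring

theorem left_mul {d n : F} (hn : n ≠ 0) (h : IsBinaryNorm d n) (c t : F) :
    DiagRep (quatForm c d t) (quatForm (c * n) d t) := by
  obtain ⟨x, y, hxy⟩ := h
  refine .of_matrix !![x / n, d * y / n, 0, 0; y / n, x / n, 0, 0;
    0, 0, x / n, d * y / n; 0, 0, y / n, x / n] fun v => ?_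
  simp [quatForm, Matrix.mulVec, dotProduct, Fin.sum_univ_four]
  field_simp
  rw [hxy]
  ring

theorem neg_of_four_squares (h : ∃ x y z w : F, x ^ 2 + y ^ 2 + z ^ 2 + w ^ 2 = -1) (c : F) :
    DiagRep (quatForm c (-1) (-1)) (quatForm (-c) (-1) (-1)) := by
  obtain ⟨x, y, z, w, h⟩ := h
  refine .of_matrix !![x, -y, -z, -w; y, x, -w, z; z, w, x, -y; w, -z, y, x] fun v => ?_
  simp [quatForm, Matrix.mulVec, dotProduct, Fin.sum_univ_four]
  linear_combination (-c * (v 0 ^ 2 + v 1 ^ 2 + v 2 ^ 2 + v 3 ^ 2)) * h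

end quatForm

namespace HasLocalSymbol

theorem div_of_not (hF : HasLocalSymbol F) {d x y : F} (hd : d ≠ 0) (hx : x ≠ 0) (hy : y ≠ 0)
    (hnx : ¬ IsBinaryNorm d x) (hny : ¬ IsBinaryNorm d y) : IsBinaryNorm d (x / y) := by
  have := hF.mul_of_not hd hx hy hnx hny
  rw [← IsBinaryNorm.mul_sq_iff hy]
  convert this using 1
  field_simp

theorem isBinaryNorm_of_disjoint (hF : HasLocalSymbol F) {d d' k x : F} (hd' : d' ≠ 0)
    (hk : k ≠ 0) (hx : x ≠ 0)
    (h : ∀ m, m ≠ 0 → IsBinaryNorm d' m → ¬ IsBinaryNorm d (k * m))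
    (hdx : IsBinaryNorm d x) : IsBinaryNorm d' x := by
  by_contra hn
  have hk' : ¬ IsBinaryNorm d' k⁻¹ := fun h' => h _ (inv_ne_zero hk) h' <| by
    rw [mul_inv_cancel₀ hk]
    exact .one d
  refine h (k⁻¹ * x) (mul_ne_zero (inv_ne_zero hk) hx)
    (hF.mul_of_not hd' (inv_ne_zero hk) hx hk' hn) ?_
  rwa [mul_inv_cancel_left₀ hk]

theorem quatForm_right (hF : HasLocalSymbol F) {d t t' : F} (hd : d ≠ 0) (ht : t ≠ 0) (ht' : t' ≠ 0)
    (h : ¬ IsBinaryNorm d t) (h' : ¬ IsBinaryNorm d t') (c : F) :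
    DiagRep (quatForm c d t) (quatForm c d t') := by
  have := quatForm.right_mul (div_ne_zero ht' ht) (hF.div_of_not hd ht' ht h' h) c t
  rwa [mul_div_cancel₀ _ ht] at this

variable [NeZero (2 : F)]

theorem isSquare_mul (hF : HasLocalSymbol F) {d d' : F} (hd : d ≠ 0) (hd' : d' ≠ 0)
    (h : ∀ x, x ≠ 0 → (IsBinaryNorm d x ↔ IsBinaryNorm d' x)) : IsSquare (d * d') := by
  by_contra hns
  obtain ⟨x, hx, hnx⟩ := hF.exists_not (mul_ne_zero hd hd') hns
  refine hnx (IsBinaryNorm.symm (mul_ne_zero hd hd') ?_)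
  by_cases hdx : IsBinaryNorm d x
  · exact (hdx.symm hx).mul (((h x hx).1 hdx).symm hx)
  · exact hF.mul_of_not hx hd hd' (fun h' => hdx (h'.symm hd))
      (fun h' => hdx ((h x hx).2 (h'.symm hd')))

theorem quatForm_unique (hF : HasLocalSymbol F) {d t d' t' : F} (hd : d ≠ 0) (ht : t ≠ 0)
    (hd' : d' ≠ 0) (ht' : t' ≠ 0)
    (h : ¬ IsBinaryNorm d t) (h' : ¬ IsBinaryNorm d' t') (c : F) :
    DiagRep (quatForm c d t) (quatForm c d' t') := by
  obtain ⟨s, hs, hds, hns⟩ : ∃ s, s ≠ 0 ∧ ¬ IsBinaryNorm d s ∧ ¬ IsBinaryNorm d' s := by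
    by_cases h1 : IsBinaryNorm d' t
    · by_cases h2 : IsBinaryNorm d t'
      · refine ⟨t * t', mul_ne_zero ht ht', ?_, ?_⟩
        · rwa [mul_comm, h2.mul_left_iff ht']
        · rwa [h1.mul_left_iff ht]
      · exact ⟨t', ht', h2, h'⟩
    · exact ⟨t, ht, h, h1⟩
  exact (hF.quatForm_right hd ht hs h hds c).trans <| (quatForm.swap c d s).trans <|
    (hF.quatForm_right hs hd hd' (fun h => hds (h.symm hd)) (fun h => hns (h.symm hd')) c).trans <|
    (quatForm.swap c s d').trans <| hF.quatForm_right hd' hs ht' hns h' c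

theorem quatForm_neg (hF : HasLocalSymbol F) {d t : F} (hd : d ≠ 0) (ht : t ≠ 0)
    (h : ¬ IsBinaryNorm d t) (c : F) :
    DiagRep (quatForm c d t) (quatForm (-c) d t) := by
  have h1 : (-1 : F) ≠ 0 := neg_ne_zero.2 one_ne_zero
  by_cases hd1 : IsBinaryNorm d (-1)
  · simpa using quatForm.left_mul h1 hd1 c t
  have hns : ¬ IsSquare (-1 : F) := by
    rintro ⟨i, hi⟩
    rw [hi, ← sq] at hd1
    exact hd1 (.sq d i)
  by_cases h11 : IsBinaryNorm (-1 : F) (-1)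
  · obtain ⟨s, hs, hns⟩ := hF.exists_not h1 hns
    have := quatForm.left_mul h1 h11 c s
    rw [mul_neg_one] at this
    exact (hF.quatForm_unique hd ht h1 hs h hns c).trans <| this.trans <|
      hF.quatForm_unique h1 hs hd ht hns h (-c)
  · exact (hF.quatForm_unique hd ht h1 h1 h h11 c).trans <|
      (quatForm.neg_of_four_squares hF.neg_one_four_squares c).trans <|
      hF.quatForm_unique h1 h1 hd ht h11 h (-c)

theorem quatForm_scale (hF : HasLocalSymbol F) {d t c c' : F} (hd : d ≠ 0) (ht : t ≠ 0)
    (hc : c ≠ 0) (hc' : c' ≠ 0)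
    (h : ¬ IsBinaryNorm d t) : DiagRep (quatForm c d t) (quatForm c' d t) := by
  by_cases hn : IsBinaryNorm d (c' / c)
  · have := quatForm.left_mul (div_ne_zero hc' hc) hn c t
    rwa [mul_div_cancel₀ _ hc] at this
  · have hn' := hF.div_of_not hd (div_ne_zero hc' hc) ht hn h
    have := quatForm.left_mul (div_ne_zero (div_ne_zero hc' hc) ht) hn' (c * t) t
    rw [show c * t * (c' / c / t) = c' by field_simp] at this
    have hneg := hF.quatForm_neg hd ht h (-(c * t))
    rw [neg_neg] at hneg
    exact (quatForm.neg_mul_right ht c d).trans (hneg.trans this)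

/-- An anisotropic quaternary form is a scaled quaternion norm form. -/
theorem exists_quatForm (hF : HasLocalSymbol F) {a : Fin 4 → F} (ha : ∀ i, a i ≠ 0)
    (haniso : ∀ x : Fin 4 → F, ∑ i, a i * (x i) ^ 2 = 0 → x = 0) :
    ∃ c d t : F, c ≠ 0 ∧ d ≠ 0 ∧ t ≠ 0 ∧ ¬ IsBinaryNorm d t ∧
      DiagRep a (quatForm c d t) ∧ DiagRep (quatForm c d t) a := by
  have h0 := ha 0
  have h1 := ha 1
  have h2 := ha 2
  have h3 := ha 3
  set d := -(a 1 / a 0) with hd_def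
  set d' := -(a 3 / a 2) with hd'_def
  set k := -(a 2 / a 0) with hk_def
  have hd : d ≠ 0 := neg_ne_zero.2 (div_ne_zero h1 h0)
  have hd' : d' ≠ 0 := neg_ne_zero.2 (div_ne_zero h3 h2)
  have hk : k ≠ 0 := neg_ne_zero.2 (div_ne_zero h2 h0)
  have disj : ∀ m, m ≠ 0 → IsBinaryNorm d' m → ¬ IsBinaryNorm d (k * m) := by
    rintro m hm ⟨x, y, rfl⟩ ⟨z, w, hzw⟩
    have hv := haniso ![z, w, x, y] <| by
      rw [hd_def, hd'_def, hk_def] at hzw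
      field_simp at hzw
      simp [Fin.sum_univ_four]
      linear_combination -hzw
    have hx : x = 0 := congrFun hv 2
    have hy : y = 0 := congrFun hv 3
    simp [hx, hy] at hm
  have disj' : ∀ m, m ≠ 0 → IsBinaryNorm d m → ¬ IsBinaryNorm d' (k⁻¹ * m) := fun m hm h h' =>
    disj _ (mul_ne_zero (inv_ne_zero hk) hm) h' (by rwa [mul_inv_cancel_left₀ hk])
  obtain ⟨r, hr⟩ := hF.isSquare_mul hd hd' fun x hx =>
    ⟨hF.isBinaryNorm_of_disjoint hd' hk hx disj,
      hF.isBinaryNorm_of_disjoint hd (inv_ne_zero hk) hx disj'⟩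
  have hkd : ¬ IsBinaryNorm d k := by simpa using disj 1 one_ne_zero (.one d')
  have hr0 : r ≠ 0 := by
    rintro rfl
    exact mul_ne_zero hd hd' (by simpa using hr)
  have h3r : a 3 = a 0 * k * d * (r / d) ^ 2 := by
    rw [div_pow, sq r, ← hr, hd'_def, hk_def]
    field_simp
  refine ⟨a 0, d, k, h0, hd, hk, hkd, .of_sq_scale ![1, 1, 1, r / d] ?_,
    .of_sq_scale ![1, 1, 1, (r / d)⁻¹] ?_⟩
  · intro i
    fin_cases i
    · simp [quatForm]
    · simp [quatForm, hd_def]; field_simp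
    · simp [quatForm, hk_def]; field_simp
    · simpa [quatForm] using h3r
  · intro i
    fin_cases i
    · simp [quatForm]
    · simp [quatForm, hd_def]; field_simp
    · simp [quatForm, hk_def]; field_simp
    · simp only [quatForm, Fin.reduceFinMk, Matrix.cons_val]
      rw [h3r]
      field_simp

theorem diagRep_of_anisotropic (hF : HasLocalSymbol F) {a b : Fin 4 → F} (ha : ∀ i, a i ≠ 0)
    (hb : ∀ i, b i ≠ 0)
    (haniso : ∀ x : Fin 4 → F, ∑ i, a i * (x i) ^ 2 = 0 → x = 0)
    (hbniso : ∀ x : Fin 4 → F, ∑ i, b i * (x i) ^ 2 = 0 → x = 0) : DiagRep a b := by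
  obtain ⟨c, d, t, hc, hd, ht, h, hac, -⟩ := hF.exists_quatForm ha haniso
  obtain ⟨c', d', t', hc', hd', ht', h', -, hcb⟩ := hF.exists_quatForm hb hbniso
  exact hac.trans <| (hF.quatForm_unique hd ht hd' ht' h h' c).trans <|
    (hF.quatForm_scale hd' ht' hc hc' h').trans hcb

end HasLocalSymbol

end Field

section Padic

theorem IsBinaryNorm.mul_of_not_of_cosets {F : Type*} [Field F] {d t x y : F} (ht : t ≠ 0)
    (h : ∀ x, x ≠ 0 → IsBinaryNorm d x ∨ IsBinaryNorm d (t * x))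
    (hx : x ≠ 0) (hy : y ≠ 0) (hnx : ¬ IsBinaryNorm d x) (hny : ¬ IsBinaryNorm d y) :
    IsBinaryNorm d (x * y) := by
  have := ((h x hx).resolve_left hnx).mul ((h y hy).resolve_left hny)
  rw [← IsBinaryNorm.mul_sq_iff ht]
  convert this using 1
  ring

variable {p : ℕ} [Fact p.Prime]

theorem Padic.exists_unit_mul_sq {x : ℚ_[p]} (hx : x ≠ 0) :
    ∃ (u : ℤ_[p]) (s : ℚ_[p]), IsUnit u ∧ s ≠ 0 ∧ (x = u * s ^ 2 ∨ x = u * p * s ^ 2) := by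
  have hp : (p : ℚ_[p]) ≠ 0 := by exact_mod_cast (Fact.out : p.Prime).ne_zero
  have hnorm : ‖x * (p : ℚ_[p]) ^ (-x.valuation)‖ = 1 := by
    rw [norm_mul, Padic.norm_eq_zpow_neg_valuation hx, Padic.norm_p_zpow, neg_neg,
      ← zpow_add₀ (by exact_mod_cast (Fact.out : p.Prime).ne_zero), neg_add_cancel, zpow_zero]
  obtain ⟨u, hu, hxu⟩ : ∃ u : ℤ_[p], IsUnit u ∧ x = u * (p : ℚ_[p]) ^ x.valuation :=
    ⟨⟨_, hnorm.le⟩, PadicInt.isUnit_iff.2 hnorm, by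
      rw [mul_assoc, ← zpow_add₀ hp, neg_add_cancel, zpow_zero, mul_one]⟩
  obtain ⟨k, hk | hk⟩ := Int.even_or_odd' x.valuation
  · refine ⟨u, (p : ℚ_[p]) ^ k, hu, zpow_ne_zero _ hp, .inl ?_⟩
    rw [← zpow_natCast, ← zpow_mul, mul_comm k]
    exact hk ▸ hxu
  · refine ⟨u, (p : ℚ_[p]) ^ k, hu, zpow_ne_zero _ hp, .inr ?_⟩
    rw [← zpow_natCast, ← zpow_mul, mul_comm k, mul_assoc, ← zpow_one_add₀ hp, add_comm]
    exact hk ▸ hxu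

theorem PadicInt.isSquare_of_norm_lt {u y : ℤ_[p]} (h : ‖y ^ 2 - u‖ < ‖2 * y‖ ^ 2) :
    IsSquare u := by
  obtain ⟨z, hz, -⟩ := hensels_lemma (F := (Polynomial.X ^ 2 - Polynomial.C u : Polynomial ℤ_[p]))
    (a := y) (by simpa [one_add_one_eq_two] using h)
  exact ⟨z, by simpa [sub_eq_zero, sq, eq_comm] using hz⟩

/-- A zero of `a² - d b² - t z²` can be scaled to an integral one with a coordinate equal to `1`. -/
theorem IsBinaryNorm.exists_integral {d t : ℤ_[p]} (h : IsBinaryNorm (d : ℚ_[p]) t) :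
    ∃ a b z : ℤ_[p], a ^ 2 - d * b ^ 2 = t * z ^ 2 ∧ (a = 1 ∨ b = 1 ∨ z = 1) := by
  obtain ⟨a, b, hab⟩ := h
  let v : Fin 3 → ℚ_[p] := ![a, b, 1]
  obtain ⟨i, hi⟩ := Finite.exists_max fun i => ‖v i‖
  have hvi : 0 < ‖v i‖ := lt_of_lt_of_le (by simp [v]) (hi 2)
  have hv0 : v i ≠ 0 := norm_pos_iff.1 hvi
  let w : Fin 3 → ℤ_[p] := fun j =>
    ⟨v j / v i, by rw [norm_div]; exact div_le_one_of_le₀ (hi j) hvi.le⟩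
  have hwi : w i = 1 := Subtype.ext (div_self hv0)
  refine ⟨w 0, w 1, w 2, ?_, ?_⟩
  · have h0 : ((w 0 : ℤ_[p]) : ℚ_[p]) = a / v i := rfl
    have h1 : ((w 1 : ℤ_[p]) : ℚ_[p]) = b / v i := rfl
    have h2 : ((w 2 : ℤ_[p]) : ℚ_[p]) = 1 / v i := rfl
    apply Subtype.coe_injective
    push_cast
    rw [h0, h1, h2, hab]
    field_simp
  · fin_cases i
    · exact .inl hwi
    · exact .inr (.inl hwi)
    · exact .inr (.inr hwi)

theorem PadicInt.toZMod_eq_zero_iff {x : ℤ_[p]} : toZMod x = 0 ↔ ‖x‖ < 1 := by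
  rw [← RingHom.mem_ker, ker_toZMod, IsLocalRing.mem_maximalIdeal, mem_nonunits]

theorem PadicInt.toZMod_ne_zero {x : ℤ_[p]} (hx : IsUnit x) : toZMod x ≠ 0 := by
  rw [Ne, toZMod_eq_zero_iff, isUnit_iff.1 hx]
  exact lt_irrefl _

theorem PadicInt.toZMod_surjective : Function.Surjective (toZMod : ℤ_[p] → ZMod p) :=
  ZMod.ringHom_surjective _

theorem PadicInt.isUnit_of_toZMod_ne_zero {x : ℤ_[p]} (hx : toZMod x ≠ 0) : IsUnit x := by
  rw [Ne, toZMod_eq_zero_iff, not_lt] at hx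
  exact isUnit_iff.2 (le_antisymm x.norm_le_one hx)

section Odd

theorem PadicInt.norm_two_of_ne_two (hp : p ≠ 2) : ‖(2 : ℤ_[p])‖ = 1 := by
  have : ¬ ‖((2 : ℕ) : ℤ_[p])‖ < 1 := by
    rw [PadicInt.norm_natCast_lt_one_iff, Nat.prime_dvd_prime_iff_eq Fact.out Nat.prime_two]
    exact hp
  exact le_antisymm (PadicInt.norm_le_one _) (not_lt.1 this)

theorem PadicInt.isSquare_of_toZMod (hp : p ≠ 2) {u : ℤ_[p]} (hu : IsUnit u) (h : IsSquare
    (toZMod u)) :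
    IsSquare u := by
  obtain ⟨r, hr⟩ := h
  obtain ⟨y, rfl⟩ := toZMod_surjective r
  have hy : IsUnit y := isUnit_of_toZMod_ne_zero fun h0 =>
    toZMod_ne_zero hu (by rw [hr, h0, mul_zero])
  apply isSquare_of_norm_lt (y := y)
  rw [norm_mul, norm_two_of_ne_two hp, isUnit_iff.1 hy, mul_one, one_pow,
    ← toZMod_eq_zero_iff, map_sub, map_pow, hr]
  ring

theorem PadicInt.exists_isUnit_not_isSquare (hp : p ≠ 2) :
    ∃ u : ℤ_[p], IsUnit u ∧ ¬ IsSquare (toZMod u) := by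
  obtain ⟨r, hr⟩ := FiniteField.exists_nonsquare (F := ZMod p) (by rwa [ZMod.ringChar_zmod_n])
  obtain ⟨u, rfl⟩ := toZMod_surjective r
  exact ⟨u, isUnit_of_toZMod_ne_zero fun h0 => hr (by rw [h0]; exact IsSquare.zero), hr⟩

theorem PadicInt.isSquare_or_isSquare_mul (hp : p ≠ 2) {u w : ℤ_[p]} (hu : IsUnit u)
    (hns : ¬ IsSquare (toZMod u)) (hw : IsUnit w) : IsSquare w ∨ IsSquare (u * w) := by
  by_cases h : IsSquare (toZMod w)
  · exact .inl (isSquare_of_toZMod hp hw h)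
  · refine .inr (isSquare_of_toZMod hp (hu.mul hw) ?_)
    rw [map_mul,
      ← quadraticChar_one_iff_isSquare (mul_ne_zero (toZMod_ne_zero hu) (toZMod_ne_zero hw)),
      map_mul, quadraticChar_neg_one_iff_not_isSquare.2 hns,
      quadraticChar_neg_one_iff_not_isSquare.2 h]
    norm_num

/-- Units are norms from unramified quadratic extensions. -/
theorem PadicInt.isBinaryNorm_of_isUnit (hp : p ≠ 2) {v w : ℤ_[p]} (hv : IsUnit v) (hw : IsUnit w) :
    IsBinaryNorm (v : ℚ_[p]) w := by
  have hv0 : toZMod v ≠ 0 := toZMod_ne_zero hv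
  obtain ⟨α, β, hαβ⟩ : ∃ α β : ZMod p, α ^ 2 - toZMod v * β ^ 2 = toZMod w := by
    obtain ⟨α, β, h⟩ := FiniteField.exists_root_sum_quadratic
      (f := (Polynomial.X ^ 2 : Polynomial (ZMod p)))
      (g := Polynomial.C (-toZMod v) * Polynomial.X ^ 2 + Polynomial.C 0 * Polynomial.X +
        Polynomial.C (-toZMod w))
      (Polynomial.degree_X_pow 2) (Polynomial.degree_quadratic (neg_ne_zero.2 hv0)) (by
        rw [ZMod.card]
        exact (Fact.out : p.Prime).eq_two_or_odd.resolve_left hp)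
    refine ⟨α, β, ?_⟩
    simp at h
    linear_combination h
  obtain ⟨a, rfl⟩ := toZMod_surjective α
  obtain ⟨b, rfl⟩ := toZMod_surjective β
  by_cases ha : toZMod a = 0
  · have hsq : IsSquare (-v * w) := by
      refine isSquare_of_toZMod hp (hv.neg.mul hw) ⟨toZMod v * toZMod b, ?_⟩
      rw [map_mul, map_neg, ← hαβ, ha]
      ring
    obtain ⟨r, hr⟩ := hsq
    have hv' : (v : ℚ_[p]) ≠ 0 := by
      simpa using hv.ne_zero
    have hr' : -(v : ℚ_[p]) * w = r * r := by exact_mod_cast congrArg ((↑) : ℤ_[p] → ℚ_[p]) hr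
    refine ⟨0, r / v, ?_⟩
    field_simp
    linear_combination -hr'
  · have hsq : IsSquare (w + v * b ^ 2) := by
      refine isSquare_of_toZMod hp (isUnit_of_toZMod_ne_zero ?_) ⟨toZMod a, ?_⟩
      · rw [map_add, map_mul, map_pow, ← hαβ, sub_add_cancel]
        exact pow_ne_zero 2 ha
      · rw [map_add, map_mul, map_pow, ← hαβ]
        ring
    obtain ⟨r, hr⟩ := hsq
    have hr' : (w : ℚ_[p]) + v * b ^ 2 = r * r := by
      exact_mod_cast congrArg ((↑) : ℤ_[p] → ℚ_[p]) hr
    exact ⟨r, b, by linear_combination hr'⟩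

/-- Uniformizers are not norms from the unramified quadratic extension. -/
theorem PadicInt.not_isBinaryNorm_mul_p {u w : ℤ_[p]} (hns : ¬ IsSquare (toZMod u))
    (hw : IsUnit w) : ¬ IsBinaryNorm (u : ℚ_[p]) (w * p) := by
  intro h
  obtain ⟨a, b, z, habz, h1⟩ := IsBinaryNorm.exists_integral (d := u) (t := w * p)
    (by push_cast; exact h)
  have hmod : toZMod a ^ 2 - toZMod u * toZMod b ^ 2 = 0 := by
    simpa using congrArg toZMod habz
  have hb : toZMod b = 0 := by
    by_contra hb
    exact hns ⟨toZMod a / toZMod b, by field_simp; linear_combination -hmod⟩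
  have ha : toZMod a = 0 := by simpa [hb] using hmod
  have hp0 : (p : ℤ_[p]) ≠ 0 := by exact_mod_cast (Fact.out : p.Prime).ne_zero
  obtain ⟨a', rfl⟩ := (norm_lt_one_iff_dvd a).1 (toZMod_eq_zero_iff.1 ha)
  obtain ⟨b', rfl⟩ := (norm_lt_one_iff_dvd b).1 (toZMod_eq_zero_iff.1 hb)
  have hz : toZMod z = 0 := by
    have : w * z ^ 2 = p * (a' ^ 2 - u * b' ^ 2) := by
      apply mul_left_cancel₀ hp0
      linear_combination -habz
    have := congrArg toZMod this
    simpa [toZMod_ne_zero hw] using this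
  rcases h1 with h1 | h1 | h1
  · simp [h1] at ha
  · simp [h1] at hb
  · simp [h1] at hz

theorem Padic.hasLocalSymbol_of_ne_two (hp : p ≠ 2) : HasLocalSymbol ℚ_[p] := by
  have hp0 : (p : ℚ_[p]) ≠ 0 := by exact_mod_cast (Fact.out : p.Prime).ne_zero
  have coe_ne {u : ℤ_[p]} (hu : IsUnit u) : (u : ℚ_[p]) ≠ 0 := by simpa using hu.ne_zero
  have coe_sq {u : ℤ_[p]} (d : ℚ_[p]) (hu : IsSquare u) : IsBinaryNorm d u := by
    obtain ⟨r, rfl⟩ := hu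
    push_cast
    rw [← sq]
    exact .sq d _
  obtain ⟨u, hu, hns⟩ := PadicInt.exists_isUnit_not_isSquare hp
  refine ⟨fun {d x y} hd hx hy => ?_, fun {d} hd hd' => ?_, ?_⟩
  · obtain ⟨v, s, hv, hs, rfl | rfl⟩ := Padic.exists_unit_mul_sq hd
    · refine IsBinaryNorm.mul_of_not_of_cosets hp0 (fun x hx => ?_) hx hy
      rw [IsBinaryNorm.disc_mul_sq_iff hs, IsBinaryNorm.disc_mul_sq_iff hs]
      obtain ⟨w, r, hw, hr, rfl | rfl⟩ := Padic.exists_unit_mul_sq hx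
      · rw [IsBinaryNorm.mul_sq_iff hr]
        exact .inl (PadicInt.isBinaryNorm_of_isUnit hp hv hw)
      · right
        rw [show (p : ℚ_[p]) * (w * p * r ^ 2) = w * (p * r) ^ 2 by ring,
          IsBinaryNorm.mul_sq_iff (mul_ne_zero hp0 hr)]
        exact PadicInt.isBinaryNorm_of_isUnit hp hv hw
    · refine IsBinaryNorm.mul_of_not_of_cosets (coe_ne hu) (fun x hx => ?_) hx hy
      rw [IsBinaryNorm.disc_mul_sq_iff hs, IsBinaryNorm.disc_mul_sq_iff hs]
      have unit_case (w : ℤ_[p]) (hw : IsUnit w) :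
          IsBinaryNorm (v * p : ℚ_[p]) w ∨ IsBinaryNorm (v * p : ℚ_[p]) (u * w) := by
        rw [← PadicInt.coe_mul]
        exact (PadicInt.isSquare_or_isSquare_mul hp hu hns hw).imp (coe_sq _) (coe_sq _)
      obtain ⟨w, r, hw, hr, rfl | rfl⟩ := Padic.exists_unit_mul_sq hx
      · rw [← mul_assoc, IsBinaryNorm.mul_sq_iff hr, IsBinaryNorm.mul_sq_iff hr]
        exact unit_case w hw
      · have hneg := IsBinaryNorm.neg_self (v * p : ℚ_[p])
        have hneg0 : -(v * p : ℚ_[p]) ≠ 0 := neg_ne_zero.2 (mul_ne_zero (coe_ne hv) hp0)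
        have hpr : (p : ℚ_[p]) * r ≠ 0 := mul_ne_zero hp0 hr
        rw [← hneg.mul_left_iff hneg0, ← hneg.mul_left_iff hneg0 (y := (u : ℚ_[p]) * _),
          show -(v * p : ℚ_[p]) * (w * p * r ^ 2) = (-v * w : ℤ_[p]) * (p * r) ^ 2 by
            push_cast; ring,
          show -(v * p : ℚ_[p]) * (u * (w * p * r ^ 2)) = u * (-v * w : ℤ_[p]) * (p * r) ^ 2 by
            push_cast; ring, IsBinaryNorm.mul_sq_iff hpr, IsBinaryNorm.mul_sq_iff hpr]
        exact unit_case _ (hv.neg.mul hw)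
  · obtain ⟨v, s, hv, hs, rfl | rfl⟩ := Padic.exists_unit_mul_sq hd
    · refine ⟨p, hp0, ?_⟩
      rw [IsBinaryNorm.disc_mul_sq_iff hs]
      have := PadicInt.not_isBinaryNorm_mul_p (u := v) (w := 1) (fun h => hd' ?_) isUnit_one
      · simpa using this
      · obtain ⟨r, rfl⟩ := PadicInt.isSquare_of_toZMod hp hv h
        exact ⟨r * s, by push_cast; ring⟩
    · refine ⟨u, coe_ne hu, ?_⟩
      rw [IsBinaryNorm.disc_mul_sq_iff hs]
      exact fun h => PadicInt.not_isBinaryNorm_mul_p hns hv (h.symm (coe_ne hu))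
  · obtain ⟨a, b, h⟩ := PadicInt.isBinaryNorm_of_isUnit hp (isUnit_one (M := ℤ_[p])).neg
      (isUnit_one (M := ℤ_[p])).neg
    refine ⟨a, b, 0, 0, ?_⟩
    push_cast at h
    linear_combination -h

end Odd

section Two

theorem PadicInt.isSquare_of_toZModPow_eq_one {u : ℤ_[2]} (h : toZModPow 3 u = 1) :
    IsSquare u := by
  apply isSquare_of_norm_lt (y := 1)
  have hmem : 1 - u ∈ RingHom.ker (toZModPow (p := 2) 3) := by
    rw [RingHom.mem_ker, map_sub, map_one, h, sub_self]
  rw [ker_toZModPow, ← PadicInt.norm_le_pow_iff_mem_span_pow] at hmem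
  rw [one_pow, mul_one]
  have h2 : ‖(2 : ℤ_[2])‖ = 2⁻¹ := by simpa using PadicInt.norm_p (p := 2)
  rw [h2]
  refine hmem.trans_lt ?_
  norm_num [zpow_neg]

theorem Padic.exists_sq_eq_intCast {n : ℤ} (h : (n : ZMod (2 ^ 3)) = 1) :
    ∃ r : ℚ_[2], r ^ 2 = n := by
  obtain ⟨r, hr⟩ := PadicInt.isSquare_of_toZModPow_eq_one (u := (n : ℤ_[2])) (by simpa using h)
  refine ⟨r, ?_⟩
  rw [sq]
  exact_mod_cast congrArg ((↑) : ℤ_[2] → ℚ_[2]) hr.symm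

theorem PadicInt.exists_sq_eq_mul {u : ℤ_[2]} (hu : IsUnit u) :
    ∃ c : ℤ, c ∈ ({1, -1, 5, -5} : Set ℤ) ∧ IsSquare (c * u) := by
  have key : ∀ m : ZMod (2 ^ 3), IsUnit m → 1 * m = 1 ∨ -1 * m = 1 ∨ 5 * m = 1 ∨ -5 * m = 1 := by
    decide
  rcases key _ (hu.map (toZModPow 3)) with h | h | h | h
  · exact ⟨1, by simp, isSquare_of_toZModPow_eq_one (by simpa using h)⟩
  · exact ⟨-1, by simp, isSquare_of_toZModPow_eq_one (by simpa using h)⟩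
  · exact ⟨5, by simp, isSquare_of_toZModPow_eq_one (by rwa [map_mul, map_intCast])⟩
  · exact ⟨-5, by simp, isSquare_of_toZModPow_eq_one (by rwa [map_mul, map_intCast])⟩

/-- Representatives of the square classes of `ℚ_2`. -/
theorem Padic.exists_squareClass {x : ℚ_[2]} (hx : x ≠ 0) :
    ∃ (c : ℤ) (s : ℚ_[2]), c ∈ ({1, -1, 5, -5, 2, -2, 10, -10} : Set ℤ) ∧ s ≠ 0 ∧
      x = c * s ^ 2 := by
  obtain ⟨u, s, hu, hs, hx⟩ := Padic.exists_unit_mul_sq hx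
  obtain ⟨c, hc, r, hr⟩ := PadicInt.exists_sq_eq_mul hu
  have hc0 : (c : ℚ_[2]) ≠ 0 := by
    rcases hc with rfl | rfl | rfl | rfl <;> norm_num
  have hr' : (c : ℚ_[2]) * u = r * r := by exact_mod_cast congrArg ((↑) : ℤ_[2] → ℚ_[2]) hr
  have hu0 : (u : ℚ_[2]) ≠ 0 := by simpa using hu.ne_zero
  have hr0 : (r : ℚ_[2]) ≠ 0 := by
    intro h
    rw [h, mul_zero] at hr'
    exact mul_ne_zero hc0 hu0 hr'
  rcases hx with rfl | rfl
  · refine ⟨c, r / c * s, ?_, mul_ne_zero (div_ne_zero hr0 hc0) hs, ?_⟩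
    · rcases hc with rfl | rfl | rfl | rfl <;> simp
    · field_simp
      linear_combination hr'
  · refine ⟨2 * c, r / c * s, ?_, mul_ne_zero (div_ne_zero hr0 hc0) hs, ?_⟩
    · rcases hc with rfl | rfl | rfl | rfl <;> simp
    · push_cast
      field_simp
      linear_combination hr'

/-- To bound the index of a norm group of `ℚ_2` by two it suffices to look at `-1`, `2`, `5`. -/
theorem Padic.isBinaryNorm_cosets {d t : ℚ_[2]} (ht : t ≠ 0)
    (h1 : IsBinaryNorm d (-1) ∨ IsBinaryNorm d (t * -1))
    (h2 : IsBinaryNorm d 2 ∨ IsBinaryNorm d (t * 2))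
    (h5 : IsBinaryNorm d 5 ∨ IsBinaryNorm d (t * 5)) (x : ℚ_[2]) (hx : x ≠ 0) :
    IsBinaryNorm d x ∨ IsBinaryNorm d (t * x) := by
  have hmul {x y : ℚ_[2]} (hx : IsBinaryNorm d x ∨ IsBinaryNorm d (t * x))
      (hy : IsBinaryNorm d y ∨ IsBinaryNorm d (t * y)) :
      IsBinaryNorm d (x * y) ∨ IsBinaryNorm d (t * (x * y)) := by
    rcases hx with hx | hx <;> rcases hy with hy | hy
    · exact .inl (hx.mul hy)
    · exact .inr (by convert hx.mul hy using 1; ring)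
    · exact .inr (by convert hx.mul hy using 1; ring)
    · left
      rw [← IsBinaryNorm.mul_sq_iff ht]
      convert hx.mul hy using 1
      ring
  obtain ⟨c, s, hc, hs, rfl⟩ := Padic.exists_squareClass hx
  refine hmul ?_ (.inl (.sq d s))
  rcases hc with rfl | rfl | rfl | rfl | rfl | rfl | rfl | rfl
  · exact .inl (by simpa using IsBinaryNorm.one d)
  · simpa using h1
  · simpa using h5
  · simpa using hmul h1 h5
  · simpa using h2
  · simpa using hmul h1 h2
  · have := hmul h2 h5
    norm_num at this ⊢
    exact this
  · have := hmul h1 (hmul h2 h5)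
    norm_num at this ⊢
    exact this

theorem PadicInt.not_isBinaryNorm_of_mod_eight {d t : ℤ}
    (h : ∀ a b z : ZMod (2 ^ 3), a ^ 2 - (d : ZMod (2 ^ 3)) * b ^ 2 = (t : ZMod (2 ^ 3)) * z ^ 2 →
      ¬ (a = 1 ∨ b = 1 ∨ z = 1)) :
    ¬ IsBinaryNorm (d : ℚ_[2]) t := by
  intro hn
  obtain ⟨a, b, z, habz, h1⟩ := IsBinaryNorm.exists_integral (d := (d : ℤ_[2])) (t := (t : ℤ_[2]))
    (by push_cast; exact hn)
  refine h (toZModPow 3 a) (toZModPow 3 b) (toZModPow 3 z) ?_ ?_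
  · simpa using congrArg (toZModPow 3) habz
  · rcases h1 with rfl | rfl | rfl <;> simp

theorem Padic.exists_cosets {c : ℤ} (hc : c ∈ ({1, -1, 5, -5, 2, -2, 10, -10} : Set ℤ)) :
    ∃ t : ℚ_[2], t ≠ 0 ∧
      ∀ x, x ≠ 0 → IsBinaryNorm (c : ℚ_[2]) x ∨ IsBinaryNorm (c : ℚ_[2]) (t * x) := by
  have h1 : (-1 : ℚ_[2]) ≠ 0 := by norm_num
  rcases hc with rfl | rfl | rfl | rfl | rfl | rfl | rfl | rfl
  · refine ⟨1, one_ne_zero, fun x _ => .inl ?_⟩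
    simpa using IsBinaryNorm.of_sq one_ne_zero x
  · exact ⟨-1, h1, Padic.isBinaryNorm_cosets h1 (.inr ⟨1, 0, by norm_num⟩)
      (.inl ⟨1, 1, by norm_num⟩) (.inl ⟨1, 2, by norm_num⟩)⟩
  · exact ⟨2, two_ne_zero, Padic.isBinaryNorm_cosets two_ne_zero (.inl ⟨1 / 2, 1 / 2, by norm_num⟩)
      (.inr ⟨2, 0, by norm_num⟩) (.inl ⟨5 / 2, 1 / 2, by norm_num⟩)⟩
  · obtain ⟨r, hr⟩ := Padic.exists_sq_eq_intCast (n := -15) (by decide)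
    have hr0 : r ≠ 0 := by
      rintro rfl
      norm_num at hr
    refine ⟨-1, h1, Padic.isBinaryNorm_cosets h1 (.inr ⟨1, 0, by norm_num⟩)
      (.inr ⟨5 / r, 1 / r, ?_⟩) (.inl ⟨0, 1, by norm_num⟩)⟩
    field_simp
    rw [hr]
    norm_num
  · exact ⟨5, by norm_num, Padic.isBinaryNorm_cosets (by norm_num) (.inl ⟨1, 1, by norm_num⟩)
      (.inl ⟨2, 1, by norm_num⟩) (.inr ⟨5, 0, by norm_num⟩)⟩
  · obtain ⟨r, hr⟩ := Padic.exists_sq_eq_intCast (n := -15) (by decide)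
    have hr0 : r ≠ 0 := by
      rintro rfl
      norm_num at hr
    refine ⟨-1, h1, Padic.isBinaryNorm_cosets h1 (.inr ⟨1, 0, by norm_num⟩)
      (.inl ⟨0, 1, by norm_num⟩) (.inr ⟨5 / r, 5 / r, ?_⟩)⟩
    field_simp
    rw [hr]
    norm_num
  · exact ⟨2, two_ne_zero, Padic.isBinaryNorm_cosets two_ne_zero (.inl ⟨3, 1, by norm_num⟩)
      (.inr ⟨2, 0, by norm_num⟩) (.inr ⟨10, 3, by norm_num⟩)⟩
  · obtain ⟨r, hr⟩ := Padic.exists_sq_eq_intCast (n := -55) (by decide)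
    have hr0 : r ≠ 0 := by
      rintro rfl
      norm_num at hr
    refine ⟨-1, h1, Padic.isBinaryNorm_cosets h1 (.inr ⟨1, 0, by norm_num⟩)
      (.inr ⟨10 / r, 1 / r, ?_⟩) (.inr ⟨5 / r, 5 / r, ?_⟩)⟩
    · field_simp
      rw [hr]
      norm_num
    · field_simp
      rw [hr]
      norm_num

theorem Padic.exists_not_isBinaryNorm_two {c : ℤ}
    (hc : c ∈ ({-1, 5, -5, 2, -2, 10, -10} : Set ℤ)) :
    ∃ t : ℤ, t ≠ 0 ∧ ¬ IsBinaryNorm (c : ℚ_[2]) t := by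
  rcases hc with rfl | rfl | rfl | rfl | rfl | rfl | rfl
  · exact ⟨-1, by decide, PadicInt.not_isBinaryNorm_of_mod_eight (by decide)⟩
  · exact ⟨2, by decide, PadicInt.not_isBinaryNorm_of_mod_eight (by decide)⟩
  · exact ⟨-1, by decide, PadicInt.not_isBinaryNorm_of_mod_eight (by decide)⟩
  · exact ⟨5, by decide, PadicInt.not_isBinaryNorm_of_mod_eight (by decide)⟩
  · exact ⟨-1, by decide, PadicInt.not_isBinaryNorm_of_mod_eight (by decide)⟩
  · exact ⟨3, by decide, PadicInt.not_isBinaryNorm_of_mod_eight (by decide)⟩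
  · exact ⟨-1, by decide, PadicInt.not_isBinaryNorm_of_mod_eight (by decide)⟩

theorem Padic.hasLocalSymbol_two : HasLocalSymbol ℚ_[2] := by
  refine ⟨fun {d x y} hd hx hy => ?_, fun {d} hd hns => ?_, ?_⟩
  · obtain ⟨c, s, hc, hs, rfl⟩ := Padic.exists_squareClass hd
    simp only [IsBinaryNorm.disc_mul_sq_iff hs]
    obtain ⟨t, ht, h⟩ := Padic.exists_cosets hc
    exact IsBinaryNorm.mul_of_not_of_cosets ht h hx hy
  · obtain ⟨c, s, hc, hs, rfl⟩ := Padic.exists_squareClass hd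
    simp only [IsBinaryNorm.disc_mul_sq_iff hs]
    rcases hc with rfl | hc
    · exact absurd ⟨s, by push_cast; ring⟩ hns
    · obtain ⟨t, ht, h⟩ := Padic.exists_not_isBinaryNorm_two hc
      exact ⟨t, by exact_mod_cast ht, h⟩
  · obtain ⟨r, hr⟩ := Padic.exists_sq_eq_intCast (n := -7) (by decide)
    have hr0 : r ≠ 0 := by
      rintro rfl
      norm_num at hr
    refine ⟨2 / r, 1 / r, 1 / r, 1 / r, ?_⟩
    field_simp
    rw [hr]
    norm_num

end Two

theorem Padic.hasLocalSymbol (p : ℕ) [Fact p.Prime] : HasLocalSymbol ℚ_[p] := by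
  by_cases hp : p = 2
  · subst hp
    exact Padic.hasLocalSymbol_two
  · exact Padic.hasLocalSymbol_of_ne_two hp

end Padic

/-- Uniqueness of the rank-4 anisotropic quadratic form over a p-adic field:
any two anisotropic diagonal quadratic forms of rank 4 over ℚ_p are equivalent. -/
theorem padic_rank_four_anisotropic_unique
    (p : ℕ) [Fact p.Prime] (a b : Fin 4 → ℚ_[p])
    (ha : ∀ i, a i ≠ 0) (hb : ∀ i, b i ≠ 0)
    (haniso : ∀ x : Fin 4 → ℚ_[p], ∑ i, a i * (x i) ^ 2 = 0 → x = 0)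
    (hbniso : ∀ x : Fin 4 → ℚ_[p], ∑ i, b i * (x i) ^ 2 = 0 → x = 0) :
    ∃ T : (Fin 4 → ℚ_[p]) ≃ₗ[ℚ_[p]] (Fin 4 → ℚ_[p]),
      ∀ x : Fin 4 → ℚ_[p], ∑ i, b i * (T x i) ^ 2 = ∑ i, a i * (x i) ^ 2 :=
  ((Padic.hasLocalSymbol p).diagRep_of_anisotropic ha hb haniso hbniso).exists_linearEquiv haniso
end

section
/- Let p be an odd prime and let u be a unit of the ring ℤ_p of p-adic integers whose residue in 𝔽_p = ZMod p is not a square. Then the rank-4 diagonal quadratic form with coefficients (1, −u, −p, u·p) is anisotropic over ℚ_p: if x₀² − u x₁² − p x₂² + u p x₃² = 0 with x₀, x₁, x₂, x₃ ∈ ℚ_p, then x₀ = x₁ = x₂ = x₃ = 0. -/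
/-- If the residue of `a` is nonzero then `a` has norm one. -/
theorem PadicInt.norm_eq_one_of_toZMod_ne_zero {p : ℕ} [Fact p.Prime] {a : ℤ_[p]}
    (ha : PadicInt.toZMod a ≠ 0) : ‖(a : ℚ_[p])‖ = 1 := by
  have hmem : a ∉ IsLocalRing.maximalIdeal ℤ_[p] := by
    rwa [← PadicInt.ker_toZMod, RingHom.mem_ker]
  have hunit : IsUnit a := by
    by_contra hn
    exact hmem ((IsLocalRing.mem_maximalIdeal a).2 hn)
  simpa using PadicInt.isUnit_iff.1 hunit

/-- If the residue of `u` is not a square, the binary form `x ^ 2 - u * y ^ 2` has the norm of the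
square of whichever of `x`, `y` has the larger norm. -/
theorem Padic.exists_norm_sq_sub_mul_sq_eq {p : ℕ} [Fact p.Prime] {u : ℤ_[p]}
    (hu : ¬ IsSquare (PadicInt.toZMod u)) (x y : ℚ_[p]) :
    ∃ z : ℚ_[p], ‖x‖ ≤ ‖z‖ ∧ ‖y‖ ≤ ‖z‖ ∧ ‖x ^ 2 - u * y ^ 2‖ = ‖z ^ 2‖ := by
  rcases le_total ‖y‖ ‖x‖ with hle | hle
  · refine ⟨x, le_rfl, hle, ?_⟩
    rcases eq_or_ne x 0 with rfl | hx
    · have hy : y = 0 := by simpa using hle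
      simp [hy]
    obtain ⟨t, ht⟩ : ∃ t : ℤ_[p], (t : ℚ_[p]) = y / x :=
      ⟨⟨y / x, by rw [norm_div]; exact div_le_one_of_le₀ hle (norm_nonneg _)⟩, rfl⟩
    have hres : PadicInt.toZMod (1 - u * t ^ 2) ≠ 0 := by
      intro h0
      simp only [map_sub, map_one, map_mul, map_pow] at h0
      have ht0 : PadicInt.toZMod t ≠ 0 := by
        intro h1
        simp [h1] at h0
      refine hu ⟨(PadicInt.toZMod t)⁻¹, ?_⟩
      field_simp
      linear_combination -h0
    have hfac : x ^ 2 - u * y ^ 2 = x ^ 2 * ((1 - u * t ^ 2 : ℤ_[p]) : ℚ_[p]) := by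
      push_cast
      rw [ht]
      field_simp
    rw [hfac, norm_mul, PadicInt.norm_eq_one_of_toZMod_ne_zero hres, mul_one]
  · refine ⟨y, hle, le_rfl, ?_⟩
    rcases eq_or_ne y 0 with rfl | hy
    · have hx : x = 0 := by simpa using hle
      simp [hx]
    obtain ⟨t, ht⟩ : ∃ t : ℤ_[p], (t : ℚ_[p]) = x / y :=
      ⟨⟨x / y, by rw [norm_div]; exact div_le_one_of_le₀ hle (norm_nonneg _)⟩, rfl⟩
    have hres : PadicInt.toZMod (t ^ 2 - u) ≠ 0 := by
      intro h0
      simp only [map_sub, map_pow] at h0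
      exact hu ⟨PadicInt.toZMod t, by linear_combination -h0⟩
    have hfac : x ^ 2 - u * y ^ 2 = y ^ 2 * ((t ^ 2 - u : ℤ_[p]) : ℚ_[p]) := by
      push_cast
      rw [ht]
      field_simp
    rw [hfac, norm_mul, PadicInt.norm_eq_one_of_toZMod_ne_zero hres, mul_one]

/-- By parity of valuations, `z ^ 2` and `p * w ^ 2` have equal norm only if `w = 0`. -/
theorem Padic.eq_zero_of_norm_sq_eq_norm_p_mul_sq {p : ℕ} [hp : Fact p.Prime] {z w : ℚ_[p]}
    (h : ‖z ^ 2‖ = ‖(p : ℚ_[p]) * w ^ 2‖) : w = 0 := by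
  by_contra hw
  have hp0 : (p : ℚ_[p]) ≠ 0 := by exact_mod_cast hp.out.ne_zero
  have hpw : (p : ℚ_[p]) * w ^ 2 ≠ 0 := mul_ne_zero hp0 (pow_ne_zero 2 hw)
  have hz2 : z ^ 2 ≠ 0 := norm_ne_zero_iff.1 (h ▸ norm_ne_zero_iff.2 hpw)
  rw [Padic.norm_eq_zpow_neg_valuation hz2, Padic.norm_eq_zpow_neg_valuation hpw] at h
  have hval := zpow_right_injective₀ (by exact_mod_cast hp.out.pos)
    (by exact_mod_cast hp.out.ne_one) h
  rw [Padic.valuation_mul hp0 (pow_ne_zero 2 hw), Padic.valuation_pow, Padic.valuation_pow,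
    Padic.valuation_p] at hval
  push_cast at hval
  omega


/-- For an odd prime p and a unit u of ℤ_p whose residue mod p is a non-square,
the form ⟨1, -u, -p, up⟩ is anisotropic over ℚ_p. -/
theorem padic_anisotropic_rank_four
    (p : ℕ) [Fact p.Prime] (hp : p ≠ 2) (u : ℤ_[p]ˣ)
    (hu : ¬ IsSquare (PadicInt.toZMod ((u : ℤ_[p])) : ZMod p))
    (x₀ x₁ x₂ x₃ : ℚ_[p])
    (h : x₀ ^ 2 - ((u : ℤ_[p]) : ℚ_[p]) * x₁ ^ 2 - (p : ℚ_[p]) * x₂ ^ 2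
        + ((u : ℤ_[p]) : ℚ_[p]) * (p : ℚ_[p]) * x₃ ^ 2 = 0) :
    x₀ = 0 ∧ x₁ = 0 ∧ x₂ = 0 ∧ x₃ = 0 := by
  obtain ⟨z, hz₀, hz₁, hz⟩ := Padic.exists_norm_sq_sub_mul_sq_eq hu x₀ x₁
  obtain ⟨w, hw₂, hw₃, hw⟩ := Padic.exists_norm_sq_sub_mul_sq_eq hu x₂ x₃
  have hsplit : x₀ ^ 2 - ((u : ℤ_[p]) : ℚ_[p]) * x₁ ^ 2
      = p * (x₂ ^ 2 - ((u : ℤ_[p]) : ℚ_[p]) * x₃ ^ 2) := by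
    linear_combination h
  have hnorm : ‖z ^ 2‖ = ‖(p : ℚ_[p]) * w ^ 2‖ := by
    rw [← hz, hsplit, norm_mul, norm_mul, hw]
  obtain rfl := Padic.eq_zero_of_norm_sq_eq_norm_p_mul_sq hnorm
  obtain rfl : z = 0 := by simpa using hnorm
  rw [norm_zero, norm_le_zero_iff] at hz₀ hz₁ hw₂ hw₃
  exact ⟨hz₀, hz₁, hw₂, hw₃⟩
end

section
/- Let p be an odd prime, let r ≥ 1, and let u : Fin r → ℤ_pˣ be units of the ring of p-adic integers. The diagonal quadratic form ∑ i, (u i) * (x i)^2 is anisotropic over ℚ_p if and only if the residue diagonal form ∑ i, (ū i) * (x i)^2 is anisotropic over 𝔽_p = ZMod p, where ū i denotes the image of u i under the residue map ℤ_p → ZMod p. -/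
open Polynomial

/-- The residue map of `ℤ_[p]` vanishes exactly on the elements of norm less than one. -/
theorem PadicInt.toZMod_eq_zero_iff_norm_lt_one {p : ℕ} [Fact p.Prime] (x : ℤ_[p]) :
    PadicInt.toZMod x = 0 ↔ ‖x‖ < 1 := by
  rw [← RingHom.mem_ker, PadicInt.ker_toZMod, IsLocalRing.mem_maximalIdeal,
    PadicInt.mem_nonunits]

/-- The residue map of `ℤ_[p]` is nonzero exactly on the elements of norm one. -/
theorem PadicInt.toZMod_ne_zero_iff_norm_eq_one {p : ℕ} [Fact p.Prime] (x : ℤ_[p]) :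
    PadicInt.toZMod x ≠ 0 ↔ ‖x‖ = 1 := by
  rw [Ne, PadicInt.toZMod_eq_zero_iff_norm_lt_one, not_lt]
  exact ⟨fun h => le_antisymm (PadicInt.norm_le_one x) h, fun h => h.ge⟩

/-- For odd `p`, a nonzero root of `a * X ^ 2 + c` modulo `p`, with `a` a unit, lifts to a nonzero
root in `ℤ_[p]`. -/
theorem PadicInt.exists_ne_zero_mul_sq_add_eq_zero {p : ℕ} [Fact p.Prime] (hp : p ≠ 2)
    (a : ℤ_[p]ˣ) (c y : ℤ_[p]) (hy : PadicInt.toZMod y ≠ 0)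
    (h : PadicInt.toZMod ((a : ℤ_[p]) * y ^ 2 + c) = 0) :
    ∃ z : ℤ_[p], z ≠ 0 ∧ (a : ℤ_[p]) * z ^ 2 + c = 0 := by
  set F : ℤ_[p][X] := C (a : ℤ_[p]) * X ^ 2 + C c with hF
  have hev (z : ℤ_[p]) : F.aeval z = (a : ℤ_[p]) * z ^ 2 + c := by simp [hF]
  have htwo : (2 : ZMod p) ≠ 0 := Ring.two_ne_zero (by rwa [ZMod.ringChar_zmod_n])
  have hder : ‖F.derivative.aeval y‖ = 1 := by
    rw [← PadicInt.toZMod_ne_zero_iff_norm_eq_one]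
    have ha : PadicInt.toZMod (a : ℤ_[p]) ≠ 0 := (a.isUnit.map PadicInt.toZMod).ne_zero
    have : F.derivative.aeval y = (a : ℤ_[p]) * (2 * y) := by simp [hF, one_add_one_eq_two]
    rw [this, map_mul, map_mul, map_ofNat]
    exact mul_ne_zero ha (mul_ne_zero htwo hy)
  obtain ⟨z, hz, hzy, -⟩ := hensels_lemma (F := F) (a := y) (by
    rw [hder, one_pow, hev]
    exact (PadicInt.toZMod_eq_zero_iff_norm_lt_one _).1 h)
  refine ⟨z, ?_, by rw [← hev, hz]⟩
  rintro rfl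
  rw [hder, zero_sub, norm_neg, ← PadicInt.toZMod_eq_zero_iff_norm_lt_one] at hzy
  exact hy hzy

/-- A nonzero finite family in `ℚ_[p]` is a scalar multiple of a family in `ℤ_[p]` having an
entry equal to one. -/
theorem PadicInt.exists_primitive_smul {p : ℕ} [Fact p.Prime] {ι : Type*} [Finite ι]
    {x : ι → ℚ_[p]} (hx : x ≠ 0) :
    ∃ (c : ℚ_[p]) (y : ι → ℤ_[p]) (k : ι),
      c ≠ 0 ∧ y k = 1 ∧ ∀ i, x i = c * (y i : ℚ_[p]) := by
  obtain ⟨j, hj⟩ := Function.ne_iff.1 hx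
  have : Nonempty ι := ⟨j⟩
  obtain ⟨k, hk⟩ := Finite.exists_max fun i => ‖x i‖
  have hk0 : x k ≠ 0 := norm_pos_iff.1 ((norm_pos_iff.2 hj).trans_le (hk j))
  refine ⟨x k, fun i => ⟨x i / x k, ?_⟩, k, hk0, ?_, fun i => ?_⟩
  · rw [norm_div]
    exact div_le_one_of_le₀ (hk i) (norm_nonneg _)
  · exact Subtype.ext (div_self hk0)
  · exact (mul_div_cancel₀ (x i) hk0).symm

/-- A diagonal quadratic form over ℚ_p (p odd) whose coefficients are units of ℤ_p
is anisotropic over ℚ_p if and only if its residue form is anisotropic over 𝔽_p. -/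
theorem padic_unit_form_anisotropic_iff_residue
    (p : ℕ) [Fact p.Prime] (hp : p ≠ 2) (r : ℕ) (hr : 1 ≤ r) (u : Fin r → ℤ_[p]ˣ) :
    (∀ x : Fin r → ℚ_[p], ∑ i, ((u i : ℤ_[p]) : ℚ_[p]) * (x i) ^ 2 = 0 → x = 0) ↔
      (∀ x : Fin r → ZMod p,
        ∑ i, PadicInt.toZMod ((u i : ℤ_[p])) * (x i) ^ 2 = 0 → x = 0) := by
  constructor
  · intro H x hx
    by_contra hne
    obtain ⟨j, hj⟩ := Function.ne_iff.1 hne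
    choose y hy using fun i => ZMod.ringHom_surjective (PadicInt.toZMod (p := p)) (x i)
    obtain ⟨z, hz0, hz⟩ := PadicInt.exists_ne_zero_mul_sq_add_eq_zero hp (u j)
      (∑ i ∈ {j}ᶜ, (u i : ℤ_[p]) * y i ^ 2) (y j) (by rw [hy]; exact hj) (by
        rw [← Fintype.sum_eq_add_sum_compl j fun i => (u i : ℤ_[p]) * y i ^ 2]
        simpa [hy] using hx)
    have hsum : ∑ i, (u i : ℤ_[p]) * Function.update y j z i ^ 2 = 0 := by
      rw [Fintype.sum_eq_add_sum_compl j, Function.update_self, ← hz]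
      congr 1
      refine Finset.sum_congr rfl fun i hi => ?_
      rw [Function.update_of_ne (by simpa using hi)]
    have := congrFun (H (fun i => (Function.update y j z i : ℚ_[p])) (by
      simpa [PadicInt.coe_sum] using congrArg ((↑) : ℤ_[p] → ℚ_[p]) hsum)) j
    simp [hz0] at this
  · intro H x hx
    by_contra hne
    obtain ⟨c, y, k, hc, hk, hxy⟩ := PadicInt.exists_primitive_smul hne
    have hsum : ∑ i, (u i : ℤ_[p]) * y i ^ 2 = 0 := by
      have : c ^ 2 * ∑ i, ((u i : ℤ_[p]) : ℚ_[p]) * (y i : ℚ_[p]) ^ 2 = 0 := by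
        rw [← hx, Finset.mul_sum]
        refine Finset.sum_congr rfl fun i _ => ?_
        rw [hxy]
        ring
      apply Subtype.coe_injective
      simpa [hc, PadicInt.coe_sum] using this
    have := congrFun (H (fun i => PadicInt.toZMod (y i)) (by
      simpa using congrArg PadicInt.toZMod hsum)) k
    simp [hk] at this
end

section
/- Let p be an odd prime, let r, s ≥ 1, let u : Fin r → ℤ_pˣ and v : Fin s → ℤ_pˣ be units of the ring of p-adic integers. The diagonal quadratic form ∑ i, (u i) * (x i)^2 + ∑ j, p * (v j) * (y j)^2 in the r + s variables (x, y) is anisotropic over ℚ_p if and only if both residue diagonal forms ∑ i, (ū i) * (x i)^2 and ∑ j, (v̄ j) * (y j)^2 are anisotropic over 𝔽_p = ZMod p, where ū i and v̄ j denote the images of u i and v j under the residue map ℤ_p → ZMod p. -/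
namespace PadicInt

open Polynomial

variable {p : ℕ} [Fact p.Prime]

theorem toZMod_eq_zero_iff_norm_lt_one_s6 {z : ℤ_[p]} : toZMod z = 0 ↔ ‖z‖ < 1 := by
  rw [← RingHom.mem_ker, ker_toZMod, IsLocalRing.mem_maximalIdeal, mem_nonunits]

theorem toZMod_eq_zero_iff_dvd {z : ℤ_[p]} : toZMod z = 0 ↔ (p : ℤ_[p]) ∣ z := by
  rw [toZMod_eq_zero_iff_norm_lt_one_s6, norm_lt_one_iff_dvd]

/-- For odd `p`, a nontrivial zero of a diagonal form over the residue field whose coefficients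
are reductions of units lifts to a nontrivial zero over `ℤ_[p]`. -/
theorem exists_ne_zero_sum_mul_sq_eq_zero {ι : Type*} [Fintype ι] (hp : p ≠ 2)
    (a : ι → ℤ_[p]ˣ) {x : ι → ZMod p} (hx : x ≠ 0)
    (h : ∑ i, toZMod (a i : ℤ_[p]) * x i ^ 2 = 0) :
    ∃ z : ι → ℤ_[p], z ≠ 0 ∧ ∑ i, (a i : ℤ_[p]) * z i ^ 2 = 0 := by
  classical
  obtain ⟨k, hk⟩ := Function.ne_iff.mp hx
  choose t ht using fun i ↦ ZMod.ringHom_surjective (toZMod (p := p)) (x i)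
  set c : ℤ_[p] := ∑ i ∈ Finset.univ.erase k, (a i : ℤ_[p]) * t i ^ 2 with hc
  set F : ℤ_[p][X] := C (a k : ℤ_[p]) * X ^ 2 + C c with hF
  have aeval_F (z : ℤ_[p]) : F.aeval z = a k * z ^ 2 + c := by simp [hF]
  have eval_lt : ‖F.aeval (t k)‖ < 1 := by
    rw [← toZMod_eq_zero_iff_norm_lt_one_s6, aeval_F, hc,
      Finset.add_sum_erase _ (fun i ↦ (a i : ℤ_[p]) * t i ^ 2) (Finset.mem_univ k)]
    simpa [ht] using h
  have two_ne : toZMod (2 : ℤ_[p]) ≠ 0 := by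
    rw [map_ofNat]
    exact Ring.two_ne_zero (by rwa [ZMod.ringChar_zmod_n])
  have deriv_norm : ‖F.derivative.aeval (t k)‖ = 1 := by
    refine le_antisymm (norm_le_one _) (not_lt.mp fun hlt ↦ ?_)
    rw [← toZMod_eq_zero_iff_norm_lt_one_s6] at hlt
    have ha : toZMod (a k : ℤ_[p]) ≠ 0 := ((a k).isUnit.map toZMod).ne_zero
    exact hk (by simpa [hF, ht, one_add_one_eq_two, two_ne, ha] using hlt)
  obtain ⟨z, hz, hzt, -⟩ := hensels_lemma (F := F) (a := t k) (by rwa [deriv_norm, one_pow])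
  rw [deriv_norm, ← toZMod_eq_zero_iff_norm_lt_one_s6, map_sub, ht, sub_eq_zero] at hzt
  refine ⟨Function.update t k z, fun h0 ↦ hk ?_, ?_⟩
  · have hz0 : z = 0 := by simpa using congrFun h0 k
    simpa [hz0] using hzt.symm
  · rw [← Finset.add_sum_erase _ _ (Finset.mem_univ k), Function.update_self,
      Finset.sum_congr rfl fun i hi ↦ by rw [Function.update_of_ne (Finset.ne_of_mem_erase hi)],
      ← aeval_F, hz]

/-- If both residue forms are anisotropic, every zero over `ℤ_[p]` of the form
`∑ aᵢ xᵢ² + p ∑ bⱼ yⱼ²` is imprimitive. -/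
theorem dvd_of_sum_mul_sq_add_p_mul_sum_mul_sq_eq_zero {ι κ : Type*} [Fintype ι] [Fintype κ]
    {a : ι → ℤ_[p]} {b : κ → ℤ_[p]}
    (ha : ∀ x : ι → ZMod p, ∑ i, toZMod (a i) * x i ^ 2 = 0 → x = 0)
    (hb : ∀ y : κ → ZMod p, ∑ j, toZMod (b j) * y j ^ 2 = 0 → y = 0)
    {x : ι → ℤ_[p]} {y : κ → ℤ_[p]}
    (h : ∑ i, a i * x i ^ 2 + p * ∑ j, b j * y j ^ 2 = 0) :
    (∀ i, (p : ℤ_[p]) ∣ x i) ∧ ∀ j, (p : ℤ_[p]) ∣ y j := by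
  have hx : ∀ i, (p : ℤ_[p]) ∣ x i := fun i ↦ toZMod_eq_zero_iff_dvd.mp <|
    congrFun (ha (fun i ↦ toZMod (x i)) (by simpa using congrArg toZMod h)) i
  refine ⟨hx, fun j ↦ toZMod_eq_zero_iff_dvd.mp <| congrFun (hb (fun j ↦ toZMod (y j)) ?_) j⟩
  choose w hw using hx
  have hdiv : p * ∑ i, a i * w i ^ 2 + ∑ j, b j * y j ^ 2 = 0 := by
    refine (mul_eq_zero.mp ?_).resolve_left (prime_p (p := p)).ne_zero
    rw [← h, mul_add, Finset.mul_sum, Finset.mul_sum]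
    congr 1
    exact Finset.sum_congr rfl fun i _ ↦ by rw [hw]; ring
  simpa using congrArg toZMod hdiv

end PadicInt

/-- A nonzero finite family of `p`-adic numbers is a nonzero multiple of a family of `p`-adic
integers having an entry equal to `1`. -/
theorem Padic.exists_eq_mul_padicInt {p : ℕ} [Fact p.Prime] {ι : Type*} [Finite ι]
    {w : ι → ℚ_[p]} (hw : w ≠ 0) :
    ∃ c : ℚ_[p], c ≠ 0 ∧ ∃ z : ι → ℤ_[p], (∀ i, w i = c * z i) ∧ ∃ k, z k = 1 := by
  obtain ⟨i, hi⟩ := Function.ne_iff.mp hw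
  have : Nonempty ι := ⟨i⟩
  obtain ⟨k, hk⟩ := Finite.exists_max fun i ↦ ‖w i‖
  have hpos : 0 < ‖w k‖ := (norm_pos_iff.mpr hi).trans_le (hk i)
  have hne : w k ≠ 0 := norm_pos_iff.mp hpos
  refine ⟨w k, hne, fun i ↦ ⟨w i / w k, ?_⟩, fun i ↦ (mul_div_cancel₀ _ hne).symm, k, ?_⟩
  · rw [norm_div]
    exact div_le_one_of_le₀ (hk i) hpos.le
  · exact PadicInt.ext (div_self hne)

/-- For an odd prime p and units u₁,…,u_r, v₁,…,v_s of ℤ_p, the diagonal form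
∑ uᵢ xᵢ² + ∑ p vⱼ yⱼ² is anisotropic over ℚ_p if and only if both residue forms
∑ ūᵢ xᵢ² and ∑ v̄ⱼ yⱼ² are anisotropic over 𝔽_p. -/
theorem padic_mixed_form_anisotropic_iff_residues
    (p : ℕ) [Fact p.Prime] (hp : p ≠ 2) (r s : ℕ) (hr : 1 ≤ r) (hs : 1 ≤ s)
    (u : Fin r → ℤ_[p]ˣ) (v : Fin s → ℤ_[p]ˣ) :
    (∀ (x : Fin r → ℚ_[p]) (y : Fin s → ℚ_[p]),
        (∑ i, ((u i : ℤ_[p]) : ℚ_[p]) * (x i) ^ 2)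
          + (∑ j, (p : ℚ_[p]) * ((v j : ℤ_[p]) : ℚ_[p]) * (y j) ^ 2) = 0 →
        x = 0 ∧ y = 0) ↔
      ((∀ x : Fin r → ZMod p,
          ∑ i, PadicInt.toZMod ((u i : ℤ_[p])) * (x i) ^ 2 = 0 → x = 0) ∧
        (∀ y : Fin s → ZMod p,
          ∑ j, PadicInt.toZMod ((v j : ℤ_[p])) * (y j) ^ 2 = 0 → y = 0)) := by
  constructor
  · intro h
    refine ⟨fun x hx ↦ by_contra fun hne ↦ ?_, fun y hy ↦ by_contra fun hne ↦ ?_⟩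
    · obtain ⟨z, hz, hsum⟩ := PadicInt.exists_ne_zero_sum_mul_sq_eq_zero hp u hne hx
      refine hz (funext fun i ↦ PadicInt.coe_eq_zero.mp <|
        congrFun (h (fun i ↦ z i) 0 ?_).1 i)
      simpa using congrArg ((↑) : ℤ_[p] → ℚ_[p]) hsum
    · obtain ⟨z, hz, hsum⟩ := PadicInt.exists_ne_zero_sum_mul_sq_eq_zero hp v hne hy
      refine hz (funext fun j ↦ PadicInt.coe_eq_zero.mp <|
        congrFun (h 0 (fun j ↦ z j) ?_).2 j)
      have hsum' := congrArg ((↑) : ℤ_[p] → ℚ_[p]) hsum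
      simp only [PadicInt.coe_sum, PadicInt.coe_mul, PadicInt.coe_pow, PadicInt.coe_zero] at hsum'
      simp [mul_assoc, ← Finset.mul_sum, hsum']
  · rintro ⟨hu, hv⟩ x y h
    suffices hxy : Sum.elim x y = 0 from
      ⟨funext fun i ↦ congrFun hxy (.inl i), funext fun j ↦ congrFun hxy (.inr j)⟩
    by_contra hne
    obtain ⟨c, hc, z, hz, k, hk⟩ := Padic.exists_eq_mul_padicInt hne
    have hx (i) : x i = c * z (.inl i) := hz (.inl i)
    have hy (j) : y j = c * z (.inr j) := hz (.inr j)
    have hsum : ∑ i, (u i : ℤ_[p]) * z (.inl i) ^ 2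
        + p * ∑ j, (v j : ℤ_[p]) * z (.inr j) ^ 2 = 0 := by
      refine PadicInt.ext ((mul_eq_zero.mp ?_).resolve_left (pow_ne_zero 2 hc))
      rw [← h]
      simp only [PadicInt.coe_add, PadicInt.coe_mul, PadicInt.coe_sum, PadicInt.coe_pow,
        PadicInt.coe_natCast, hx, hy, mul_add, Finset.mul_sum]
      congr 1 <;> exact Finset.sum_congr rfl fun _ _ ↦ by ring
    obtain ⟨hdx, hdy⟩ :=
      PadicInt.dvd_of_sum_mul_sq_add_p_mul_sum_mul_sq_eq_zero hu hv hsum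
    have hdvd : (p : ℤ_[p]) ∣ z k := by
      cases k with
      | inl i => exact hdx i
      | inr j => exact hdy j
    exact PadicInt.prime_p.not_dvd_one (hk ▸ hdvd)
end

section
/- Let p be an odd prime, let β ∈ ZMod p be a nonzero non-square, and let n ≥ 1. Then every diagonal quadratic form ∑ i, a i * (x i)^2 over ZMod p with all coefficients a i ≠ 0 is equivalent to exactly one of the two forms x_1² + ⋯ + x_n² and x_1² + ⋯ + x_{n−1}² + β x_n²; in particular these two forms of rank n are not equivalent to each other. -/
open QuadraticMap QuadraticForm

section CommRing

variable {R ι : Type*} [CommRing R] [Fintype ι] [DecidableEq ι]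

/-- If the binary form `⟨w i, w j⟩` represents `1`, it is equivalent to `⟨1, w i * w j⟩`. -/
theorem weightedSumSquares_equivalent_update_update (w : ι → R) {i j : ι} (hij : i ≠ j) {u v : R}
    (h : w i * u ^ 2 + w j * v ^ 2 = 1) :
    Equivalent (weightedSumSquares R (Function.update (Function.update w i 1) j (w i * w j)))
      (weightedSumSquares R w) := by
  refine ⟨{
    toFun := fun x ↦ Function.update (Function.update x i (u * x i - v * w j * x j)) j
      (v * x i + u * w i * x j)
    invFun := fun y ↦ Function.update (Function.update y i (u * w i * y i + v * w j * y j)) j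
      (u * y j - v * y i)
    map_add' := fun x y ↦ ?_
    map_smul' := fun c x ↦ ?_
    left_inv := fun x ↦ ?_
    right_inv := fun y ↦ ?_
    map_app' := fun x ↦ ?_ }⟩
  · ext k
    rcases eq_or_ne k j with rfl | hj
    · simp; ring
    rcases eq_or_ne k i with rfl | hi
    · simp [hij]; ring
    · simp [hi, hj]
  · ext k
    rcases eq_or_ne k j with rfl | hj
    · simp; ring
    rcases eq_or_ne k i with rfl | hi
    · simp [hij]; ring
    · simp [hi, hj]
  · ext k
    rcases eq_or_ne k j with rfl | hj
    · simp [hij]; linear_combination x k * h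
    rcases eq_or_ne k i with rfl | hi
    · simp [hij]; linear_combination x k * h
    · simp [hi, hj]
  · ext k
    rcases eq_or_ne k j with rfl | hj
    · simp [hij]; linear_combination y k * h
    rcases eq_or_ne k i with rfl | hi
    · simp [hij]; linear_combination y k * h
    · simp [hi, hj]
  · have hi : i ∈ Finset.univ.erase j := by simp [hij]
    simp only [weightedSumSquares_apply, smul_eq_mul]
    rw [← Finset.add_sum_erase _ _ (Finset.mem_univ j), ← Finset.add_sum_erase _ _ hi,
      ← Finset.add_sum_erase _ _ (Finset.mem_univ j), ← Finset.add_sum_erase _ _ hi,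
      ← add_assoc, ← add_assoc]
    congr 1
    · simp [hij]
      linear_combination (x i ^ 2 + w i * w j * x j ^ 2) * h
    · refine Finset.sum_congr rfl fun k hk ↦ ?_
      simp only [Finset.mem_erase] at hk
      simp [hk.1, hk.2.1]

theorem QuadraticForm.discr'_weightedSumSquares [Invertible (2 : R)] (w : ι → R) :
    discr' (weightedSumSquares R w) = ∏ i, w i := by
  have hQ : weightedSumSquares R w = (Matrix.diagonal w).toQuadraticForm' := by
    ext x
    simp [Matrix.toQuadraticForm', Matrix.toLinearMap₂'_apply', Matrix.mulVec_diagonal, dotProduct,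
      mul_left_comm]
  have hsymm (x y : ι → R) : Matrix.toLinearMap₂' R (Matrix.diagonal w) x y =
      Matrix.toLinearMap₂' R (Matrix.diagonal w) y x := by
    simp [Matrix.toLinearMap₂'_apply', Matrix.mulVec_diagonal, dotProduct, mul_comm, mul_left_comm]
  rw [discr', toMatrix', hQ, Matrix.toQuadraticForm', associated_left_inverse R hsymm,
    LinearMap.toMatrix'_toLinearMap₂', Matrix.det_diagonal]

theorem QuadraticMap.Equivalent.isSquare_prod_mul_prod [Invertible (2 : R)] {w w' : ι → R}
    (h : Equivalent (weightedSumSquares R w) (weightedSumSquares R w')) :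
    IsSquare ((∏ i, w i) * ∏ i, w' i) := by
  obtain ⟨φ⟩ := h
  have hcomp : weightedSumSquares R w =
      (weightedSumSquares R w').comp (φ.toLinearEquiv : (ι → R) →ₗ[R] ι → R) := by
    ext x
    exact (φ.map_app x).symm
  rw [← discr'_weightedSumSquares w, hcomp, discr'_comp, discr'_weightedSumSquares]
  exact ⟨_, by rw [mul_assoc, mul_mul_mul_comm]⟩

end CommRing

section FiniteField

variable {F ι : Type*} [Field F] [Finite F] [Fintype ι] [DecidableEq ι]

theorem FiniteField.exists_mul_sq_add_mul_sq_eq_one (hF : ringChar F ≠ 2) {a b : F}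
    (ha : a ≠ 0) (hb : b ≠ 0) : ∃ u v : F, a * u ^ 2 + b * v ^ 2 = 1 := by
  have := Fintype.ofFinite F
  open Polynomial in
  obtain ⟨u, v, h⟩ := FiniteField.exists_root_sum_quadratic (f := C a * X ^ 2)
    (g := C b * X ^ 2 - C 1) (by compute_degree!) (by compute_degree!)
    (FiniteField.odd_card_of_char_ne_two hF)
  exact ⟨u, v, by simpa [← add_sub_assoc, sub_eq_zero] using h⟩

theorem weightedSumSquares_equivalent_update_one_prod (hF : ringChar F ≠ 2) {w : ι → F}
    (hw : ∀ i, w i ≠ 0) (j : ι) :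
    Equivalent (weightedSumSquares F w)
      (weightedSumSquares F (Function.update 1 j (∏ i, w i))) := by
  suffices H : ∀ s : Finset ι, j ∉ s → Equivalent (weightedSumSquares F w)
      (weightedSumSquares F
        (Function.update (fun i ↦ if i ∈ s then 1 else w i) j (w j * ∏ i ∈ s, w i))) by
    convert H (Finset.univ.erase j) (by simp) using 2
    ext i
    rcases eq_or_ne i j with rfl | hi
    · simp [Finset.mul_prod_erase]
    · simp [hi]
  intro s
  induction s using Finset.induction_on with
  | empty => intro; simp; rfl
  | insert i s his ih =>
    intro hj
    simp only [Finset.mem_insert, not_or] at hj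
    refine (ih hj.2).trans ?_
    set w' := Function.update (fun i ↦ if i ∈ s then 1 else w i) j (w j * ∏ i ∈ s, w i) with hw'
    have hi : w' i = w i := by simp [hw', Ne.symm hj.1, his]
    have hj' : w' j = w j * ∏ i ∈ s, w i := by simp [hw']
    obtain ⟨u, v, huv⟩ := FiniteField.exists_mul_sq_add_mul_sq_eq_one hF (a := w' i) (b := w' j)
      (hi ▸ hw i) (hj' ▸ mul_ne_zero (hw j) (Finset.prod_ne_zero_iff.2 fun k _ ↦ hw k))
    convert! (weightedSumSquares_equivalent_update_update w' (Ne.symm hj.1) huv).symm using 2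
    ext k
    rcases eq_or_ne k j with rfl | hkj
    · simp [hi, hj', Finset.prod_insert his, mul_left_comm]
    rcases eq_or_ne k i with rfl | hki
    · simp [hkj]
    · simp [hkj, hki, hw']

/-- Nondegenerate diagonal forms of the same rank over a finite field of odd characteristic are
classified by their discriminant modulo squares. -/
theorem weightedSumSquares_equivalent_iff_isSquare [Nonempty ι] (hF : ringChar F ≠ 2)
    {w w' : ι → F} (hw : ∀ i, w i ≠ 0) (hw' : ∀ i, w' i ≠ 0) :
    Equivalent (weightedSumSquares F w) (weightedSumSquares F w') ↔
      IsSquare ((∏ i, w i) * ∏ i, w' i) := by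
  have := invertibleOfNonzero (Ring.two_ne_zero hF)
  refine ⟨fun h ↦ h.isSquare_prod_mul_prod, fun ⟨c, hc⟩ ↦ ?_⟩
  obtain ⟨j⟩ := ‹Nonempty ι›
  refine (weightedSumSquares_equivalent_update_one_prod hF hw j).trans
    (Equivalent.trans ⟨?_⟩ (weightedSumSquares_equivalent_update_one_prod hF hw' j).symm)
  have hd' : ∏ i, w' i ≠ 0 := Finset.prod_ne_zero_iff.2 fun k _ ↦ hw' k
  have hc0 : c ≠ 0 := by
    rintro rfl
    simp [Finset.prod_eq_zero_iff, hw, hw'] at hc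
  refine isometryEquivWeightedSumSquaresWeightedSumSquares
    (Function.update 1 j (Units.mk0 (c / ∏ i, w' i) (div_ne_zero hc0 hd'))) fun i ↦ ?_
  rcases eq_or_ne i j with rfl | hi
  · simp
    field_simp
    rw [pow_two, ← hc, mul_comm]
  · simp [hi]

end FiniteField

/-- Over 𝔽_p (p an odd prime), every nondegenerate diagonal quadratic form of rank n
is equivalent to exactly one of `x₁² + ⋯ + xₙ²` and `x₁² + ⋯ + x_{n-1}² + β xₙ²`,
where β is a fixed nonzero non-square; in particular these two forms are not
equivalent to each other. -/
theorem zmod_diagonal_form_classification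
    (p : ℕ) [Fact p.Prime] (hp : p ≠ 2) (β : ZMod p) (hβ0 : β ≠ 0) (hβ : ¬ IsSquare β)
    (n : ℕ) (hn : 1 ≤ n) (a : Fin n → ZMod p) (ha : ∀ i, a i ≠ 0) :
    (Xor'
      (∃ φ : (Fin n → ZMod p) ≃ₗ[ZMod p] (Fin n → ZMod p),
        ∀ x, ∑ i : Fin n, (φ x i) ^ 2 = ∑ i : Fin n, a i * (x i) ^ 2)
      (∃ φ : (Fin n → ZMod p) ≃ₗ[ZMod p] (Fin n → ZMod p),
        ∀ x, ∑ i : Fin n, (if (i : ℕ) = n - 1 then β else 1) * (φ x i) ^ 2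
          = ∑ i : Fin n, a i * (x i) ^ 2)) ∧
    ¬ (∃ φ : (Fin n → ZMod p) ≃ₗ[ZMod p] (Fin n → ZMod p),
        ∀ x, ∑ i : Fin n, (if (i : ℕ) = n - 1 then β else 1) * (φ x i) ^ 2
          = ∑ i : Fin n, (x i) ^ 2) := by
  have hF : ringChar (ZMod p) ≠ 2 := by rwa [ZMod.ringChar_zmod_n]
  have : Nonempty (Fin n) := ⟨⟨0, hn⟩⟩
  have equivalent_iff (w w' : Fin n → ZMod p) :
      (∃ φ : (Fin n → ZMod p) ≃ₗ[ZMod p] (Fin n → ZMod p),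
        ∀ x, ∑ i, w' i * (φ x i) ^ 2 = ∑ i, w i * (x i) ^ 2) ↔
      Equivalent (weightedSumSquares (ZMod p) w) (weightedSumSquares (ZMod p) w') := by
    refine ⟨fun ⟨φ, h⟩ ↦ ⟨⟨φ, fun x ↦ ?_⟩⟩, fun ⟨φ⟩ ↦ ⟨φ.toLinearEquiv, fun x ↦ ?_⟩⟩
    · simpa [weightedSumSquares_apply, pow_two] using h x
    · have h := φ.map_app x
      simp only [weightedSumSquares_apply, smul_eq_mul, ← pow_two] at h
      exact h
  have h1 : ∀ i : Fin n, (1 : Fin n → ZMod p) i ≠ 0 := by simp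
  have hb : ∀ i : Fin n, (if (i : ℕ) = n - 1 then β else 1) ≠ 0 := fun i ↦ by
    split_ifs <;> simp [hβ0]
  have hprod : ∏ i : Fin n, (if (i : ℕ) = n - 1 then β else 1) = β := by
    rw [Finset.prod_eq_single ⟨n - 1, by lia⟩ (fun i _ hi ↦ if_neg fun h ↦ hi (Fin.ext h))
      (by simp)]
    simp
  have hd : ∏ i, a i ≠ 0 := Finset.prod_ne_zero_iff.2 fun i _ ↦ ha i
  have hone := equivalent_iff a 1
  have hbeta := equivalent_iff a fun i ↦ if (i : ℕ) = n - 1 then β else 1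
  have honebeta := equivalent_iff 1 fun i ↦ if (i : ℕ) = n - 1 then β else 1
  rw [weightedSumSquares_equivalent_iff_isSquare hF ha h1] at hone
  rw [weightedSumSquares_equivalent_iff_isSquare hF ha hb, hprod] at hbeta
  rw [weightedSumSquares_equivalent_iff_isSquare hF h1 hb, hprod] at honebeta
  simp only [Pi.one_apply, one_mul, Finset.prod_const_one, mul_one] at hone honebeta
  rw [hone, hbeta, honebeta]
  refine ⟨?_, hβ⟩
  rw [← quadraticChar_one_iff_isSquare hd, ← quadraticChar_one_iff_isSquare (mul_ne_zero hd hβ0),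
    map_mul, quadraticChar_neg_one_iff_not_isSquare.2 hβ]
  rcases quadraticChar_dichotomy hd with h | h <;> simp [h, Xor']
end

section
/- Let p be a prime. There exist x, y ∈ ℚ_p with x² + y² = −1 if and only if p is odd. (Equivalently, the Hilbert symbol (−1, −1)_p equals 1 for odd p and equals −1 for p = 2.) -/
/-- `-1` is not a sum of two squares in `ℤ_[2]`, since it is not one modulo `4`. -/
theorem PadicInt.two_sq_add_sq_ne_neg_one (a b : ℤ_[2]) : a ^ 2 + b ^ 2 ≠ -1 := by
  intro h
  have hmod := congrArg (PadicInt.toZModPow 2) h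
  simp only [map_add, map_pow, map_neg, map_one] at hmod
  have key : ∀ u v : ZMod (2 ^ 2), u ^ 2 + v ^ 2 ≠ -1 := by decide
  exact key _ _ hmod

/-- `-1` is not a sum of two squares in `ℚ_[2]`. -/
theorem Padic.two_sq_add_sq_ne_neg_one (x y : ℚ_[2]) : x ^ 2 + y ^ 2 ≠ -1 := by
  -- A solution with a non-integral coordinate rescales to an integral one.
  have of_norm_le : ∀ x y : ℚ_[2], ‖y‖ ≤ ‖x‖ → x ^ 2 + y ^ 2 ≠ -1 := by
    intro x y hyx h
    by_cases hx : ‖x‖ ≤ 1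
    · refine PadicInt.two_sq_add_sq_ne_neg_one ⟨x, hx⟩ ⟨y, hyx.trans hx⟩ (Subtype.ext ?_)
      exact h
    · push Not at hx
      have hx0 : x ≠ 0 := norm_pos_iff.mp (one_pos.trans hx)
      have hinv : ‖x⁻¹‖ ≤ 1 := by
        rw [norm_inv]
        exact inv_le_one_of_one_le₀ hx.le
      have hdiv : ‖y / x‖ ≤ 1 := by
        rw [norm_div]
        exact div_le_one_of_le₀ hyx (norm_nonneg x)
      refine PadicInt.two_sq_add_sq_ne_neg_one ⟨y / x, hdiv⟩ ⟨x⁻¹, hinv⟩ (Subtype.ext ?_)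
      have : (y / x) ^ 2 + x⁻¹ ^ 2 = -1 := by
        field_simp
        linear_combination h
      exact this
  rcases le_total ‖y‖ ‖x‖ with hyx | hxy
  · exact of_norm_le x y hyx
  · rw [add_comm]
    exact of_norm_le y x hxy

/-- For odd `p`, a `p`-adic integer congruent modulo `p` to the square of a unit is a square. -/
theorem PadicInt.isSquare_of_toZMod_eq_sq {p : ℕ} [Fact p.Prime] (hp : p ≠ 2) {c : ℤ_[p]}
    {a : ZMod p} (ha : a ≠ 0) (hc : PadicInt.toZMod c = a ^ 2) : IsSquare c := by
  have norm_lt_one_iff : ∀ z : ℤ_[p], ‖z‖ < 1 ↔ PadicInt.toZMod z = 0 := fun z => by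
    rw [← RingHom.mem_ker, PadicInt.ker_toZMod, PadicInt.maximalIdeal_eq_span_p,
      Ideal.mem_span_singleton, PadicInt.norm_lt_one_iff_dvd]
  have h2 : (2 : ZMod p) ≠ 0 := Ring.two_ne_zero (by rwa [ZMod.ringChar_zmod_n])
  let F : Polynomial ℤ_[p] := Polynomial.X ^ 2 - Polynomial.C c
  let A : ℤ_[p] := (a.val : ℤ_[p])
  have hA : PadicInt.toZMod A = a := by simp [A]
  have hF : ‖F.aeval A‖ < 1 := by
    rw [norm_lt_one_iff]
    simp [F, hA, hc]
  have hF' : ‖F.derivative.aeval A‖ = 1 := by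
    refine le_antisymm (PadicInt.norm_le_one _) (not_lt.mp ?_)
    rw [norm_lt_one_iff]
    simpa [F, hA, ha] using one_add_one_eq_two (R := ZMod p) ▸ h2
  obtain ⟨z, hz, -⟩ := hensels_lemma (F := F) (a := A) (by rw [hF', one_pow]; exact hF)
  refine ⟨z, ?_⟩
  simp only [F, map_sub, map_pow, Polynomial.aeval_X, Polynomial.aeval_C, Algebra.algebraMap_self,
    RingHom.id_apply] at hz
  linear_combination -hz

/-- For odd `p`, `-1` is a sum of two squares in `ℤ_[p]`. -/
theorem PadicInt.exists_sq_add_sq_eq_neg_one {p : ℕ} [Fact p.Prime] (hp : p ≠ 2) :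
    ∃ x y : ℤ_[p], x ^ 2 + y ^ 2 = -1 := by
  have of_ne_zero : ∀ a b : ZMod p, a ≠ 0 → a ^ 2 + b ^ 2 = -1 →
      ∃ x y : ℤ_[p], x ^ 2 + y ^ 2 = -1 := by
    intro a b ha hab
    obtain ⟨x, hx⟩ := PadicInt.isSquare_of_toZMod_eq_sq hp (c := -1 - (b.val : ℤ_[p]) ^ 2) ha
      (by simp [← hab])
    exact ⟨x, b.val, by linear_combination -hx⟩
  obtain ⟨a, b, hab⟩ := ZMod.sq_add_sq p (-1)
  by_cases ha : a = 0
  · refine of_ne_zero b a ?_ (by rw [add_comm, hab])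
    rintro rfl
    simp [ha] at hab
  · exact of_ne_zero a b ha hab

/-- −1 is a sum of two squares in ℚ_p if and only if p is odd; equivalently the
Hilbert symbol (−1, −1)_p equals 1 exactly for odd primes p. -/
theorem padic_neg_one_sum_two_squares_iff_odd
    (p : ℕ) [Fact p.Prime] :
    (∃ x y : ℚ_[p], x ^ 2 + y ^ 2 = -1) ↔ p ≠ 2 := by
  constructor
  · rintro ⟨x, y, h⟩ rfl
    exact Padic.two_sq_add_sq_ne_neg_one x y h
  · intro hp
    obtain ⟨x, y, h⟩ := PadicInt.exists_sq_add_sq_eq_neg_one hp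
    exact ⟨x, y, by exact_mod_cast congrArg ((↑) : ℤ_[p] → ℚ_[p]) h⟩
end

section
/- Let F be a field with char F ≠ 2 and let q be a nondegenerate quadratic form on a finite-dimensional F-vector space V. Then there exist a natural number n and an anisotropic quadratic form q_an on a finite-dimensional F-vector space such that q is equivalent to the orthogonal direct sum of n copies of the hyperbolic plane (the rank-2 form x² − y²) with q_an. Moreover this decomposition is unique: if q is also equivalent to the orthogonal sum of m copies of the hyperbolic plane with an anisotropic form q'_an, then m = n and q_an is equivalent to q'_an. (Witt decomposition over a field of characteristic different from 2.) -/
namespace QuadraticMap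

variable {F V V₁ V₂ : Type*} [Field F] [AddCommGroup V] [Module F V]
  [AddCommGroup V₁] [Module F V₁] [AddCommGroup V₂] [Module F V₂]

theorem IsometryEquiv.polar_apply {Q₁ : QuadraticForm F V₁} {Q₂ : QuadraticForm F V₂}
    (f : Q₁.IsometryEquiv Q₂) (x y : V₁) : polar Q₂ (f x) (f y) = polar Q₁ x y := by
  simp only [polar, ← map_add, f.map_app]

theorem inv_smul_polarBilin_self (Q : QuadraticForm F V) {u : V} (hu : Q u ≠ 0) :
    ((Q u)⁻¹ • Q.polarBilin u) u = 2 := by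
  simp only [LinearMap.smul_apply, polarBilin_apply_apply, polar_self, smul_eq_mul, nsmul_eq_mul]
  push_cast
  field_simp

/-- The reflection along an anisotropic vector `u`, as an isometry. -/
noncomputable def reflectionIsometryEquiv (Q : QuadraticForm F V) {u : V} (hu : Q u ≠ 0) :
    Q.IsometryEquiv Q where
  toLinearEquiv := Module.reflection (inv_smul_polarBilin_self Q hu)
  map_app' x := by
    change Q (Module.reflection _ x) = Q x
    rw [Module.reflection_apply, sub_eq_add_neg, ← neg_smul, QuadraticMap.map_add Q,
      QuadraticMap.map_smul, polar_smul_right, polar_comm Q x u]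
    simp only [LinearMap.smul_apply, polarBilin_apply_apply, smul_eq_mul]
    field_simp
    ring

theorem reflectionIsometryEquiv_apply (Q : QuadraticForm F V) {u : V} (hu : Q u ≠ 0) (x : V) :
    reflectionIsometryEquiv Q hu x = x - ((Q u)⁻¹ * polar Q u x) • u :=
  Module.reflection_apply _ (inv_smul_polarBilin_self Q hu)

theorem reflectionIsometryEquiv_sub_apply (Q : QuadraticForm F V) {w e : V} (h : Q w = Q e)
    (hu : Q (w - e) ≠ 0) : reflectionIsometryEquiv Q hu w = e := by
  have key : polar Q (w - e) w = Q (w - e) := by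
    rw [polar_sub_left, polar_self, polar_comm, sub_eq_add_neg w e, QuadraticMap.map_add Q,
      QuadraticMap.map_neg, polar_neg_right, h, two_nsmul]
    ring
  rw [reflectionIsometryEquiv_apply, key, inv_mul_cancel₀ hu, one_smul, sub_sub_cancel]

/-- Isometries act transitively on the vectors of a given nonzero norm. -/
theorem exists_isometryEquiv_apply_eq (hF : (2 : F) ≠ 0) (Q : QuadraticForm F V) {w e : V}
    (h : Q w = Q e) (he : Q e ≠ 0) : ∃ τ : Q.IsometryEquiv Q, τ w = e := by
  by_cases hu : Q (w - e) = 0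
  · have hv : Q (w - -e) ≠ 0 := by
      intro hv
      rw [sub_neg_eq_add, QuadraticMap.map_add Q] at hv
      rw [sub_eq_add_neg, QuadraticMap.map_add Q, QuadraticMap.map_neg, polar_neg_right] at hu
      have h4 : (2 : F) * 2 * Q e = 0 := by linear_combination hu + hv - 2 * h
      simp [hF, he] at h4
    let neg : Q.IsometryEquiv Q := ⟨LinearEquiv.neg F, fun x => Q.map_neg x⟩
    refine ⟨(reflectionIsometryEquiv Q hv).trans neg, ?_⟩
    change -(reflectionIsometryEquiv Q hv w) = e
    rw [reflectionIsometryEquiv_sub_apply Q (by rw [h, QuadraticMap.map_neg]), neg_neg]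
  · exact ⟨_, reflectionIsometryEquiv_sub_apply Q h hu⟩

theorem IsometryEquiv.fst_apply_eq_zero (hF : (2 : F) ≠ 0) {a : F} (ha : a ≠ 0)
    {Q₁ : QuadraticForm F V₁} {Q₂ : QuadraticForm F V₂}
    (f : ((a • sq).prod Q₁).IsometryEquiv ((a • sq).prod Q₂)) (hf : f (1, 0) = (1, 0)) (v : V₁) :
    (f (0, v)).1 = 0 := by
  have h := f.polar_apply (0, v) (1, 0)
  rw [hf, polar_prod, polar_prod] at h
  have h' : 2 * a * (f (0, v)).1 = 0 := by
    simp [polar] at h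
    linear_combination h
  simpa [hF, ha] using h'

/-- Witt cancellation of a rank-one nondegenerate form. -/
theorem Equivalent.cancel_smul_sq (hF : (2 : F) ≠ 0) {a : F} (ha : a ≠ 0)
    {Q₁ : QuadraticForm F V₁} {Q₂ : QuadraticForm F V₂}
    (h : ((a • sq).prod Q₁).Equivalent ((a • sq).prod Q₂)) : Q₁.Equivalent Q₂ := by
  obtain ⟨g⟩ := h
  obtain ⟨τ, hτ⟩ := exists_isometryEquiv_apply_eq hF ((a • sq).prod Q₂) (w := g (1, 0))
    (e := (1, 0)) (by rw [g.map_app]; simp) (by simpa using ha)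
  obtain ⟨f, hf⟩ : ∃ f : ((a • sq).prod Q₁).IsometryEquiv ((a • sq).prod Q₂),
      f (1, 0) = (1, 0) := ⟨g.trans τ, hτ⟩
  have hf' : f.symm (1, 0) = (1, 0) := by rw [f.symm_apply_eq, hf]
  have h₁ (v : V₁) : ((0 : F), (f (0, v)).2) = f (0, v) :=
    Prod.ext (f.fst_apply_eq_zero hF ha hf v).symm rfl
  have h₂ (v : V₂) : ((0 : F), (f.symm (0, v)).2) = f.symm (0, v) :=
    Prod.ext (f.symm.fst_apply_eq_zero hF ha hf' v).symm rfl
  refine ⟨⟨LinearEquiv.ofLinearMap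
    (LinearMap.snd F F V₂ ∘ₗ f.toLinearEquiv.toLinearMap ∘ₗ LinearMap.inr F F V₁)
    (LinearMap.snd F F V₁ ∘ₗ f.symm.toLinearEquiv.toLinearMap ∘ₗ LinearMap.inr F F V₂)
    (LinearMap.ext fun v => ?_) (LinearMap.ext fun v => ?_), fun v => ?_⟩⟩
  · change (f (0, (f.symm (0, v)).2)).2 = v
    rw [h₂, f.apply_symm_apply]
  · change (f.symm (0, (f (0, v)).2)).2 = v
    rw [h₁, f.symm_apply_apply]
  · change Q₂ (f (0, v)).2 = Q₁ v
    have h := f.map_app (0, v)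
    rw [← h₁] at h
    simpa using h

/-- A vector of nonzero norm splits off as a rank-one orthogonal summand. -/
theorem equivalent_smul_sq_prod (hF : (2 : F) ≠ 0) (Q : QuadraticForm F V) {e : V} {a : F}
    (he : Q e = a) (ha : a ≠ 0) :
    Q.Equivalent ((a • sq).prod (Q.comp (LinearMap.ker (Q.polarBilin e)).subtype)) := by
  have hself : polar Q e e = 2 * a := by rw [polar_self, he, two_nsmul, two_mul]
  refine Equivalent.symm ⟨⟨LinearEquiv.ofBijective
    ((LinearMap.toSpanSingleton F V e).coprod (LinearMap.ker (Q.polarBilin e)).subtype)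
    ⟨?_, fun v => ?_⟩, ?_⟩⟩
  · rw [injective_iff_map_eq_zero]
    rintro ⟨t, w, hw⟩ h
    simp only [LinearMap.mem_ker, polarBilin_apply_apply] at hw
    simp only [LinearMap.coprod_apply, LinearMap.toSpanSingleton_apply,
      Submodule.subtype_apply] at h
    have ht : t = 0 := by
      have := congrArg (polar Q e) h
      rw [polar_add_right, polar_smul_right, hself, hw] at this
      simpa [hF, ha] using this
    subst ht
    simpa using h
  · refine ⟨(polar Q e v / (2 * a), ⟨v - (polar Q e v / (2 * a)) • e, ?_⟩), by simp⟩
    rw [LinearMap.mem_ker, polarBilin_apply_apply, polar_sub_right, polar_smul_right, hself,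
      smul_eq_mul]
    field_simp
    ring
  · rintro ⟨t, w, hw⟩
    simp only [LinearMap.mem_ker, polarBilin_apply_apply] at hw
    change Q (t • e + w) = _
    rw [QuadraticMap.map_add Q, QuadraticMap.map_smul, polar_smul_left, hw, he]
    simp [mul_comm]

/-- The orthogonal sum of `n` hyperbolic planes with `Q`, the positive and negative coordinates of
the planes being grouped together. -/
def hyperbolicProd (n : ℕ) (Q : QuadraticForm F V) :
    QuadraticForm F ((Fin n → F) × (Fin n → F) × V) :=
  (pi fun _ => sq).prod ((-pi fun _ => sq).prod Q)

theorem hyperbolicProd_apply (n : ℕ) (Q : QuadraticForm F V)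
    (x : (Fin n → F) × (Fin n → F) × V) :
    hyperbolicProd n Q x = ∑ i, x.1 i ^ 2 - ∑ i, x.2.1 i ^ 2 + Q x.2.2 := by
  simp [hyperbolicProd, pi_apply, pow_two]
  ring

theorem equivalent_hyperbolicProd_zero (Q : QuadraticForm F V) :
    Q.Equivalent (hyperbolicProd 0 Q) :=
  ⟨⟨LinearEquiv.ofBijective (LinearMap.inr F _ _ ∘ₗ LinearMap.inr F _ V)
    ⟨fun x y h => by simpa using h, fun x => ⟨x.2.2, Prod.ext (Subsingleton.elim _ _)
      (Prod.ext (Subsingleton.elim _ _) rfl)⟩⟩,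
    fun x => (hyperbolicProd_apply 0 Q _).trans (by simp; rfl)⟩⟩

theorem hyperbolicProd_succ_equivalent (n : ℕ) (Q : QuadraticForm F V) :
    (hyperbolicProd (n + 1) Q).Equivalent
      (((1 : F) • sq).prod (((-1 : F) • sq).prod (hyperbolicProd n Q))) := by
  refine ⟨⟨{
    toFun x := (x.1 0, x.2.1 0, Fin.tail x.1, Fin.tail x.2.1, x.2.2)
    invFun x := (Fin.cons x.1 x.2.2.1, Fin.cons x.2.1 x.2.2.2.1, x.2.2.2.2)
    map_add' _ _ := rfl
    map_smul' _ _ := rfl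
    left_inv x := by simp
    right_inv x := by simp }, fun x => ?_⟩⟩
  simp [hyperbolicProd_apply, Fin.sum_univ_succ, Fin.tail, pow_two]
  ring

theorem not_anisotropic_hyperbolicProd_succ (n : ℕ) (Q : QuadraticForm F V) :
    ¬ (hyperbolicProd (n + 1) Q).Anisotropic := by
  intro h
  have := h (Pi.single 0 1, Pi.single 0 1, 0) (by simp [hyperbolicProd_apply])
  simpa using congrFun (congrArg Prod.fst this) 0

theorem Equivalent.anisotropic {Q₁ : QuadraticForm F V₁} {Q₂ : QuadraticForm F V₂}
    (h : Q₁.Equivalent Q₂) (h₁ : Q₁.Anisotropic) : Q₂.Anisotropic := by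
  obtain ⟨f⟩ := h
  intro x hx
  have := h₁ (f.symm x) (by rw [f.symm.map_app, hx])
  rw [f.symm_apply_eq] at this
  rw [this, map_zero]

/-- Uniqueness in the Witt decomposition. -/
theorem Equivalent.hyperbolicProd_unique (hF : (2 : F) ≠ 0) {Q₁ : QuadraticForm F V₁}
    {Q₂ : QuadraticForm F V₂} (h₁ : Q₁.Anisotropic) (h₂ : Q₂.Anisotropic) {m n : ℕ}
    (h : (hyperbolicProd m Q₁).Equivalent (hyperbolicProd n Q₂)) :
    m = n ∧ Q₁.Equivalent Q₂ := by
  induction m generalizing n with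
  | zero =>
    replace h := (equivalent_hyperbolicProd_zero Q₁).trans h
    cases n with
    | zero => exact ⟨rfl, h.trans (equivalent_hyperbolicProd_zero Q₂).symm⟩
    | succ n => exact (not_anisotropic_hyperbolicProd_succ n Q₂ (h.anisotropic h₁)).elim
  | succ m ih =>
    cases n with
    | zero =>
      replace h := (equivalent_hyperbolicProd_zero Q₂).trans h.symm
      exact (not_anisotropic_hyperbolicProd_succ m Q₁ (h.anisotropic h₂)).elim
    | succ n =>
      replace h := (hyperbolicProd_succ_equivalent m Q₁).symm.trans
        (h.trans (hyperbolicProd_succ_equivalent n Q₂))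
      replace h := (h.cancel_smul_sq hF one_ne_zero).cancel_smul_sq hF (neg_ne_zero.mpr one_ne_zero)
      exact (ih h).imp_left (congrArg (· + 1))

theorem polar_nondegenerate_of_equivalent_prod {Q : QuadraticForm F V} {Q₁ : QuadraticForm F V₁}
    {Q₂ : QuadraticForm F V₂} (h : Q.Equivalent (Q₁.prod Q₂))
    (hQ : ∀ x, (∀ y, polar Q x y = 0) → x = 0) (x : V₂) (hx : ∀ y, polar Q₂ x y = 0) : x = 0 := by
  obtain ⟨f⟩ := h
  have := hQ (f.symm (0, x)) fun y => by
    rw [← f.polar_apply, f.apply_symm_apply, polar_prod, hx]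
    simp [polar]
  rw [f.symm_apply_eq, map_zero] at this
  exact congrArg Prod.snd this

/-- In a nondegenerate isotropic space there are orthogonal vectors of norms `1` and `-1`. -/
theorem exists_orthogonal_pair_of_not_anisotropic (Q : QuadraticForm F V)
    (hQ : ∀ x, (∀ y, polar Q x y = 0) → x = 0) (h : ¬ Q.Anisotropic) :
    ∃ e f : V, Q e = 1 ∧ Q f = -1 ∧ polar Q e f = 0 := by
  rw [not_anisotropic_iff_exists] at h
  obtain ⟨v, hv, hQv⟩ := h
  obtain ⟨w, hw⟩ : ∃ w, polar Q v w ≠ 0 := by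
    by_contra! hc
    exact hv (hQ v hc)
  obtain ⟨u, hu⟩ : ∃ u, polar Q v u = 1 :=
    ⟨(polar Q v w)⁻¹ • w, by rw [polar_smul_right, smul_eq_mul, inv_mul_cancel₀ hw]⟩
  have hvv : polar Q v v = 0 := by simp [polar_self, hQv]
  obtain ⟨e, he, hve⟩ : ∃ e, Q e = 1 ∧ polar Q v e = 1 := by
    refine ⟨u + (1 - Q u) • v, ?_, ?_⟩
    · rw [QuadraticMap.map_add Q, QuadraticMap.map_smul, polar_smul_right, polar_comm, hu, hQv]
      simp
    · rw [polar_add_right, polar_smul_right, hu, hvv, smul_zero, add_zero]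
  refine ⟨e, e + (-2 : F) • v, he, ?_, ?_⟩
  · rw [QuadraticMap.map_add Q, QuadraticMap.map_smul, polar_smul_right, polar_comm, hve, hQv, he]
    simp only [smul_eq_mul]
    ring
  · rw [polar_add_right, polar_smul_right, polar_self, polar_comm, hve, he]
    simp

/-- Existence in the Witt decomposition. -/
theorem exists_equivalent_hyperbolicProd (hF : (2 : F) ≠ 0) [FiniteDimensional F V]
    (Q : QuadraticForm F V) (hQ : ∀ x, (∀ y, polar Q x y = 0) → x = 0) :
    ∃ (n r : ℕ) (Q₀ : QuadraticForm F (Fin r → F)),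
      Q₀.Anisotropic ∧ Q.Equivalent (hyperbolicProd n Q₀) := by
  induction hd : Module.finrank F V using Nat.strong_induction_on generalizing V with
  | _ d ih =>
    by_cases h : Q.Anisotropic
    · have e : Q.Equivalent (Q.basisRepr (Module.finBasis F V)) :=
        ⟨Q.isometryEquivBasisRepr (Module.finBasis F V)⟩
      exact ⟨0, _, _, e.anisotropic h, e.trans (equivalent_hyperbolicProd_zero _)⟩
    · obtain ⟨e, f, he, hf, hef⟩ := exists_orthogonal_pair_of_not_anisotropic Q hQ h
      have h₁ := equivalent_smul_sq_prod hF Q he one_ne_zero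
      have hQ₁ := polar_nondegenerate_of_equivalent_prod h₁ hQ
      have h₂ := equivalent_smul_sq_prod hF (Q.comp (LinearMap.ker (Q.polarBilin e)).subtype)
        (e := ⟨f, hef⟩) hf (neg_ne_zero.mpr one_ne_zero)
      have hQ₂ := polar_nondegenerate_of_equivalent_prod h₂ hQ₁
      have hlt := h₁.elim fun g₁ => h₂.elim fun g₂ =>
        And.intro g₁.toLinearEquiv.finrank_eq g₂.toLinearEquiv.finrank_eq
      rw [Module.finrank_prod, Module.finrank_prod, Module.finrank_self] at hlt
      obtain ⟨n, r, Q₀, hQ₀, h₀⟩ := ih _ (by omega) _ hQ₂ rfl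
      exact ⟨n + 1, r, Q₀, hQ₀, h₁.trans (((Equivalent.refl _).prod (h₂.trans
        ((Equivalent.refl _).prod h₀))).trans (hyperbolicProd_succ_equivalent n Q₀).symm)⟩

end QuadraticMap

/-- Witt decomposition over a field of characteristic ≠ 2: every nondegenerate
quadratic form q on a finite-dimensional vector space is equivalent to an orthogonal
sum of n hyperbolic planes (x² − y²) and an anisotropic form, and both n and the
equivalence class of the anisotropic part are uniquely determined by q. -/
theorem witt_decomposition
    (F : Type*) [Field F] (hF : (2 : F) ≠ 0)
    (V : Type*) [AddCommGroup V] [Module F V] [FiniteDimensional F V]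
    (q : QuadraticForm F V)
    (hq : ∀ x : V, (∀ y : V, QuadraticMap.polar q x y = 0) → x = 0) :
    ∃ (n r : ℕ) (qan : QuadraticForm F (Fin r → F)),
      (∀ z : Fin r → F, qan z = 0 → z = 0) ∧
      (∃ φ : V ≃ₗ[F] ((Fin n → F) × (Fin n → F) × (Fin r → F)),
        ∀ v : V,
          (∑ i : Fin n, ((φ v).1 i) ^ 2) - (∑ i : Fin n, ((φ v).2.1 i) ^ 2)
            + qan ((φ v).2.2) = q v) ∧
      (∀ (m s : ℕ) (qan' : QuadraticForm F (Fin s → F)),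
        (∀ z : Fin s → F, qan' z = 0 → z = 0) →
        (∃ ψ : V ≃ₗ[F] ((Fin m → F) × (Fin m → F) × (Fin s → F)),
          ∀ v : V,
            (∑ i : Fin m, ((ψ v).1 i) ^ 2) - (∑ i : Fin m, ((ψ v).2.1 i) ^ 2)
              + qan' ((ψ v).2.2) = q v) →
        m = n ∧ ∃ χ : (Fin r → F) ≃ₗ[F] (Fin s → F),
          ∀ z : Fin r → F, qan' (χ z) = qan z) := by
  obtain ⟨n, r, qan, hqan, ⟨f⟩⟩ := QuadraticMap.exists_equivalent_hyperbolicProd hF q hq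
  refine ⟨n, r, qan, hqan, ⟨f.toLinearEquiv, fun v => ?_⟩, ?_⟩
  · exact (QuadraticMap.hyperbolicProd_apply n qan _).symm.trans (f.map_app v)
  · rintro m s qan' hqan' ⟨ψ, hψ⟩
    let g : q.IsometryEquiv (QuadraticMap.hyperbolicProd m qan') :=
      ⟨ψ, fun v => (QuadraticMap.hyperbolicProd_apply m qan' _).trans (hψ v)⟩
    obtain ⟨hmn, ⟨χ⟩⟩ :=
      QuadraticMap.Equivalent.hyperbolicProd_unique hF hqan hqan' ⟨f.symm.trans g⟩
    exact ⟨hmn.symm, χ.toLinearEquiv, χ.map_app⟩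
end

section
/- Let n ≥ 1 and let a : Fin n → ℚ with a i ≠ 0 for every i. Then there exist a natural number r ≤ 3, coefficients c : Fin r → ℚ with c i ≠ 0 for every i, and natural numbers u, v, s, t with n + 2t = r + u + v + 2s, such that the diagonal quadratic form over ℚ with coefficient list (a_1, …, a_n, followed by t pairs (1, −1)) is equivalent to the diagonal quadratic form with coefficient list (c_1, …, c_r, followed by u copies of 1, v copies of −1, and s pairs (1, −1)). (Every nondegenerate symmetric bilinear form over ℚ has rational Witt span at most 3: its image under the boundary map ∂ : W(ℚ) → ⊕_p W(𝔽_p) is realized by a form of rank at most 3.) -/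
/-- The defining relations of the Witt group of diagonal forms over `R`. -/
inductive WittRel (R : Type*) [CommRing R] : FreeAbelianGroup R → Prop
  | zero : WittRel R (FreeAbelianGroup.of 0)
  | mul_sq (a b : R) (hb : b ≠ 0) :
      WittRel R (FreeAbelianGroup.of (a * b ^ 2) - FreeAbelianGroup.of a)
  | add (a b : R) :
      WittRel R (FreeAbelianGroup.of a + FreeAbelianGroup.of b
        - (FreeAbelianGroup.of (a + b) + FreeAbelianGroup.of (a * b * (a + b))))

/-- The abelian group generated by symbols `⟨a⟩` for `a : R` with `⟨0⟩ = 0`, subject to the Witt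
relations `⟨a b²⟩ = ⟨a⟩` and `⟨a⟩ + ⟨b⟩ = ⟨a + b⟩ + ⟨a b (a + b)⟩`. -/
def WittGroup (R : Type*) [CommRing R] : Type _ :=
  FreeAbelianGroup R ⧸ AddSubgroup.closure {x | WittRel R x}

instance (R : Type*) [CommRing R] : AddCommGroup (WittGroup R) :=
  QuotientAddGroup.Quotient.addCommGroup _

namespace WittGroup

section Basic

variable {R : Type*} [CommRing R]

/-- The class of the rank one form `⟨a⟩`. -/
def mk (a : R) : WittGroup R := QuotientAddGroup.mk (FreeAbelianGroup.of a)

lemma mk_eq_of_rel {x y : FreeAbelianGroup R} (h : WittRel R (x - y)) :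
    (QuotientAddGroup.mk x : WittGroup R) = QuotientAddGroup.mk y := by
  rw [QuotientAddGroup.eq_iff_sub_mem]
  exact AddSubgroup.subset_closure h

@[simp] lemma mk_zero : mk (0 : R) = 0 :=
  mk_eq_of_rel (y := 0) (by simpa using WittRel.zero)

lemma mk_mul_sq (a : R) {b : R} (hb : b ≠ 0) : mk (a * b ^ 2) = mk a :=
  mk_eq_of_rel (WittRel.mul_sq a b hb)

lemma mk_add_mk (a b : R) : mk a + mk b = mk (a + b) + mk (a * b * (a + b)) :=
  mk_eq_of_rel (WittRel.add a b)

lemma mk_add_mk_neg (a : R) : mk a + mk (-a) = 0 := by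
  simp [mk_add_mk]

lemma mk_neg (a : R) : mk (-a) = -mk a :=
  (neg_eq_of_add_eq_zero_right (mk_add_mk_neg a)).symm

/-- The universal property of the Witt group. -/
def lift {G : Type*} [AddCommGroup G] (f : R → G) (h0 : f 0 = 0)
    (hsq : ∀ a b, b ≠ 0 → f (a * b ^ 2) = f a)
    (hadd : ∀ a b, f a + f b = f (a + b) + f (a * b * (a + b))) : WittGroup R →+ G :=
  QuotientAddGroup.lift _ (FreeAbelianGroup.lift f) <| by
    rw [AddSubgroup.closure_le]
    rintro x (_ | ⟨a, b, hb⟩ | ⟨a, b⟩)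
    · simpa using h0
    · simpa [sub_eq_zero] using hsq a b hb
    · simpa [sub_eq_zero] using hadd a b

@[simp] lemma lift_mk {G : Type*} [AddCommGroup G] (f : R → G) (h0 : f 0 = 0)
    (hsq : ∀ a b, b ≠ 0 → f (a * b ^ 2) = f a)
    (hadd : ∀ a b, f a + f b = f (a + b) + f (a * b * (a + b))) (a : R) :
    lift f h0 hsq hadd (mk a) = f a :=
  FreeAbelianGroup.lift_apply_of f a

lemma induction_on {P : WittGroup R → Prop} (x : WittGroup R) (h0 : P 0)
    (hadd : ∀ a x, P x → P (mk a + x)) : P x := by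
  have key : ∀ y z : FreeAbelianGroup R, P (QuotientAddGroup.mk z) →
      P (QuotientAddGroup.mk (y + z)) := by
    intro y
    induction y using FreeAbelianGroup.induction_on with
    | zero => intro z hz; simpa using hz
    | of a => intro z hz; exact hadd a _ hz
    | neg a _ =>
      intro z hz
      have := hadd (-a) _ hz
      rw [mk_neg] at this
      exact this
    | add a b ha hb =>
      intro z hz
      rw [add_assoc]
      exact ha _ (hb _ hz)
  induction x using QuotientAddGroup.induction_on with
  | H z => simpa using key z 0 h0

end Basic

section PrimeField

variable {p : ℕ} [Fact p.Prime]

/-- Over a prime field of odd order, a binary form is determined by its discriminant. -/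
lemma mk_add_mk_eq (hp : p ≠ 2) {u v r s c : ZMod p} (hu : u ≠ 0) (hv : v ≠ 0) (hr : r ≠ 0)
    (hc : c ≠ 0) (h : r * s = u * v * c ^ 2) : mk u + mk v = mk r + mk s := by
  have hs : mk s = mk (u * v * r) := by
    rw [← mk_mul_sq s hr, ← mk_mul_sq (u * v * r) hc]
    congr 1
    linear_combination r * h
  obtain ⟨x, y, hxy⟩ : ∃ x y : ZMod p, u * x ^ 2 + v * y ^ 2 = r := by
    obtain ⟨x, y, hxy⟩ := FiniteField.exists_root_sum_quadratic (R := ZMod p)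
      (f := Polynomial.C u * Polynomial.X ^ 2)
      (g := Polynomial.C v * Polynomial.X ^ 2 + Polynomial.C (-r))
      (by rw [Polynomial.degree_C_mul_X_pow _ hu]; rfl)
      (by rw [Polynomial.degree_add_C, Polynomial.degree_C_mul_X_pow _ hv]; rfl
          rw [Polynomial.degree_C_mul_X_pow _ hv]; decide)
      (by rw [ZMod.card]; exact (Fact.out : p.Prime).eq_two_or_odd.resolve_left hp)
    refine ⟨x, y, ?_⟩
    simp at hxy
    linear_combination hxy
  rw [hs]
  by_cases hx : x = 0
  · subst hx
    have hy : y ≠ 0 := by rintro rfl; apply hr; simpa using hxy.symm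
    have h1 : r = v * y ^ 2 := by rw [← hxy]; ring
    rw [h1, mk_mul_sq _ hy, show u * v * (v * y ^ 2) = u * (v * y) ^ 2 by ring,
      mk_mul_sq _ (mul_ne_zero hv hy), add_comm]
  by_cases hy : y = 0
  · subst hy
    have h1 : r = u * x ^ 2 := by rw [← hxy]; ring
    rw [h1, mk_mul_sq _ hx, show u * v * (u * x ^ 2) = v * (u * x) ^ 2 by ring,
      mk_mul_sq _ (mul_ne_zero hu hx)]
  rw [← mk_mul_sq u hx, ← mk_mul_sq v hy, mk_add_mk, hxy,
    show u * x ^ 2 * (v * y ^ 2) * r = u * v * r * (x * y) ^ 2 by ring,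
    mk_mul_sq _ (mul_ne_zero hx hy)]

/-- Over a prime field of odd order, every Witt class has rank one or two. -/
lemma exists_eq_mk_or_eq_add (hp : p ≠ 2) (x : WittGroup (ZMod p)) :
    (∃ u, u ≠ 0 ∧ x = mk u) ∨ ∃ u v, u ≠ 0 ∧ v ≠ 0 ∧ x = mk u + mk v := by
  induction x using induction_on with
  | h0 => exact Or.inr ⟨1, -1, one_ne_zero, by simp, by rw [mk_add_mk_neg]⟩
  | hadd a x ih =>
    by_cases ha : a = 0
    · simpa [ha] using ih
    rcases ih with ⟨u, hu, rfl⟩ | ⟨u, v, hu, hv, rfl⟩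
    · exact Or.inr ⟨a, u, ha, hu, rfl⟩
    · left
      refine ⟨-a * u * v, by simp [ha, hu, hv], ?_⟩
      rw [mk_add_mk_eq hp (r := -a) (s := -a * u * v) (c := a) hu hv (by simpa) ha (by ring),
        ← add_assoc, mk_add_mk_neg, zero_add]

lemma eq_zero_or_eq_mk_one (x : WittGroup (ZMod 2)) : x = 0 ∨ x = mk 1 := by
  have h2 : (mk 1 + mk 1 : WittGroup (ZMod 2)) = 0 := mk_add_mk_neg (1 : ZMod 2)
  induction x using induction_on with
  | h0 => exact Or.inl rfl
  | hadd a x ih =>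
    obtain rfl | rfl : a = 0 ∨ a = 1 := by revert a; decide
    · simpa using ih
    · rcases ih with rfl | rfl
      · simp
      · exact Or.inl h2

end PrimeField

section Residue

variable (p : ℕ) [Fact p.Prime]

/-- The residue at `p` of the rank one form `⟨z⟩`. -/
noncomputable def residueFun (z : ℤ) : WittGroup (ZMod p) :=
  if Odd (padicValInt p z) then mk ((z / (p : ℤ) ^ padicValInt p z : ℤ) : ZMod p) else 0

variable {p}

lemma prime_int : Prime (p : ℤ) := Nat.prime_iff_prime_int.mp Fact.out

lemma exists_eq_pow_mul {z : ℤ} (hz : z ≠ 0) :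
    ∃ (k : ℕ) (u : ℤ), ¬ (p : ℤ) ∣ u ∧ z = (p : ℤ) ^ k * u := by
  have hfin : FiniteMultiplicity (p : ℤ) z :=
    Int.finiteMultiplicity_iff.2 ⟨by simpa using (Fact.out : p.Prime).ne_one, hz⟩
  obtain ⟨u, h, hu⟩ := hfin.exists_eq_pow_mul_and_not_dvd
  exact ⟨_, u, hu, h⟩

lemma residueFun_pow_mul {k : ℕ} {u : ℤ} (hu : ¬ (p : ℤ) ∣ u) :
    residueFun p ((p : ℤ) ^ k * u) = if Odd k then mk (u : ZMod p) else 0 := by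
  have hp0 : (p : ℤ) ^ k ≠ 0 := pow_ne_zero _ prime_int.ne_zero
  have hu0 : u ≠ 0 := by rintro rfl; simp at hu
  have hval : padicValInt p ((p : ℤ) ^ k * u) = k := by
    rw [padicValInt.mul hp0 hu0, padicValInt.eq_zero_of_not_dvd hu, add_zero, padicValInt,
      Int.natAbs_pow, Int.natAbs_natCast, padicValNat.prime_pow]
  rw [residueFun, hval, Int.mul_ediv_cancel_left _ hp0]

lemma residueFun_zero : residueFun p 0 = 0 := by simp [residueFun]

lemma residueFun_eq_zero {u : ℤ} (hu : ¬ (p : ℤ) ∣ u) : residueFun p u = 0 := by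
  simpa using residueFun_pow_mul (k := 0) hu

lemma residueFun_prime_mul {u : ℤ} (hu : ¬ (p : ℤ) ∣ u) :
    residueFun p (p * u) = mk (u : ZMod p) := by
  simpa using residueFun_pow_mul (k := 1) hu

lemma intCast_ne_zero {u : ℤ} (hu : ¬ (p : ℤ) ∣ u) : (u : ZMod p) ≠ 0 := by
  rwa [Ne, ZMod.intCast_zmod_eq_zero_iff_dvd]

lemma residueFun_mul_sq (a b : ℤ) (hb : b ≠ 0) :
    residueFun p (a * b ^ 2) = residueFun p a := by
  rcases eq_or_ne a 0 with rfl | ha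
  · simp
  obtain ⟨i, u, hu, rfl⟩ := exists_eq_pow_mul (p := p) ha
  obtain ⟨j, v, hv, rfl⟩ := exists_eq_pow_mul (p := p) hb
  rw [show (p : ℤ) ^ i * u * (p ^ j * v) ^ 2 = p ^ (i + 2 * j) * (u * v ^ 2) by ring,
    residueFun_pow_mul hu,
    residueFun_pow_mul (prime_int.not_dvd_mul hu fun h => hv (prime_int.dvd_of_dvd_pow h))]
  have : Odd (i + 2 * j) ↔ Odd i := by simp [Nat.odd_add]
  simp only [this]
  push_cast
  rw [mk_mul_sq _ (intCast_ne_zero hv)]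

lemma residueFun_add_of_lt {i j : ℕ} (hij : i < j) {u v : ℤ} (hu : ¬ (p : ℤ) ∣ u)
    (hv : ¬ (p : ℤ) ∣ v) :
    residueFun p (p ^ i * u) + residueFun p (p ^ j * v) =
      residueFun p (p ^ i * u + p ^ j * v) +
        residueFun p (p ^ i * u * (p ^ j * v) * (p ^ i * u + p ^ j * v)) := by
  obtain ⟨d, rfl⟩ := Nat.exists_eq_add_of_lt hij
  have hdvd : (p : ℤ) ∣ p ^ (d + 1) * v := Dvd.dvd.mul_right (dvd_pow_self _ (by omega)) _
  have huv : ¬ (p : ℤ) ∣ u + p ^ (d + 1) * v := fun h => hu ((Int.dvd_iff_dvd_of_dvd_add h).2 hdvd)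
  have e1 : (p : ℤ) ^ i * u + p ^ (i + d + 1) * v = p ^ i * (u + p ^ (d + 1) * v) := by ring
  have e2 : (p : ℤ) ^ i * u * (p ^ (i + d + 1) * v) * (p ^ i * (u + p ^ (d + 1) * v)) =
      p ^ (i + d + 1 + 2 * i) * (v * u * (u + p ^ (d + 1) * v)) := by ring
  rw [e1, e2, residueFun_pow_mul hu, residueFun_pow_mul hv, residueFun_pow_mul huv,
    residueFun_pow_mul (prime_int.not_dvd_mul (prime_int.not_dvd_mul hv hu) huv)]
  have : Odd (i + d + 1 + 2 * i) ↔ Odd (i + d + 1) := by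
    rw [Nat.odd_add]; simp
  have hz : ((u + p ^ (d + 1) * v : ℤ) : ZMod p) = u := by
    push_cast; simp
  have hz' : ((v * u * (u + p ^ (d + 1) * v) : ℤ) : ZMod p) = v * u ^ 2 := by
    rw [Int.cast_mul, hz]; push_cast; ring
  simp only [this, hz, hz', mk_mul_sq _ (intCast_ne_zero hu)]

lemma residueFun_add (a b : ℤ) :
    residueFun p a + residueFun p b = residueFun p (a + b) + residueFun p (a * b * (a + b)) := by
  rcases eq_or_ne a 0 with rfl | ha
  · simp [residueFun_zero]
  rcases eq_or_ne b 0 with rfl | hb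
  · simp [residueFun_zero]
  obtain ⟨i, u, hu, rfl⟩ := exists_eq_pow_mul (p := p) ha
  obtain ⟨j, v, hv, rfl⟩ := exists_eq_pow_mul (p := p) hb
  rcases lt_trichotomy i j with hij | rfl | hij
  · exact residueFun_add_of_lt hij hu hv
  · have e1 : (p : ℤ) ^ i * u + p ^ i * v = p ^ i * (u + v) := by ring
    rw [e1, residueFun_pow_mul hu, residueFun_pow_mul hv]
    rcases eq_or_ne (u + v) 0 with h0 | h0
    · have : (v : ZMod p) = -u := by
        rw [eq_neg_iff_add_eq_zero, add_comm]; exact_mod_cast congrArg (Int.cast (R := ZMod p)) h0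
      simp only [h0, mul_zero, residueFun_zero, this]
      split_ifs <;> simp [mk_add_mk_neg]
    obtain ⟨k, c, hc, hk⟩ := exists_eq_pow_mul (p := p) h0
    have e2 : (p : ℤ) ^ i * u * (p ^ i * v) * (p ^ i * (p ^ k * c)) =
        p ^ (i + k + 2 * i) * (u * v * c) := by ring
    have e3 : (p : ℤ) ^ i * (p ^ k * c) = p ^ (i + k) * c := by ring
    rw [hk, e2, e3, residueFun_pow_mul hc,
      residueFun_pow_mul (prime_int.not_dvd_mul (prime_int.not_dvd_mul hu hv) hc)]
    have hodd : Odd (i + k + 2 * i) ↔ Odd (i + k) := by rw [Nat.odd_add]; simp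
    simp only [hodd]
    rcases Nat.eq_zero_or_pos k with rfl | hkpos
    · have hcz : (c : ZMod p) = u + v := by
        rw [← Int.cast_add, hk]; simp
      simp only [add_zero]
      split_ifs
      · push_cast
        rw [hcz, mk_add_mk]
      · rfl
    · have hvz : (v : ZMod p) = -u := by
        rw [eq_neg_iff_add_eq_zero, add_comm, ← Int.cast_add, hk]
        simp [hkpos.ne']
      have e4 : ((u * v * c : ℤ) : ZMod p) = -c * u ^ 2 := by
        push_cast; rw [hvz]; ring
      rw [e4, mk_mul_sq _ (intCast_ne_zero hu), hvz]
      split_ifs <;> simp [mk_add_mk_neg]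
  · have := residueFun_add_of_lt hij hv hu
    rw [add_comm, this]
    congr 2 <;> ring

variable (p) in
/-- The residue homomorphism at `p`. -/
noncomputable def residue : WittGroup ℤ →+ WittGroup (ZMod p) :=
  lift (residueFun p) residueFun_zero residueFun_mul_sq residueFun_add

@[simp] lemma residue_mk (z : ℤ) : residue p (mk z) = residueFun p z := lift_mk ..

end Residue

section Filtration

/-- All prime factors of `z` are below `k`. -/
def FactorsBelow (k : ℕ) (z : ℤ) : Prop := ∀ q : ℕ, q.Prime → (q : ℤ) ∣ z → q < k

lemma FactorsBelow.mul {k : ℕ} {y z : ℤ} (hy : FactorsBelow k y) (hz : FactorsBelow k z) :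
    FactorsBelow k (y * z) := fun q hq hd =>
  (Int.Prime.dvd_mul' hq hd).elim (hy q hq) (hz q hq)

lemma FactorsBelow.mono {k l : ℕ} {z : ℤ} (h : k ≤ l) (hz : FactorsBelow k z) :
    FactorsBelow l z := fun q hq hd => (hz q hq hd).trans_le h

lemma FactorsBelow.of_lt {k : ℕ} {z : ℤ} (h0 : z ≠ 0) (h : z.natAbs < k) : FactorsBelow k z :=
  fun _ _ hd => (Nat.le_of_dvd (Int.natAbs_pos.2 h0) (Int.natCast_dvd.1 hd)).trans_lt h

lemma FactorsBelow.not_dvd {p : ℕ} [Fact p.Prime] {z : ℤ} (h : FactorsBelow p z) :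
    ¬ (p : ℤ) ∣ z := fun hd => (h p Fact.out hd).false

lemma FactorsBelow.ne_zero {k : ℕ} {z : ℤ} (h : FactorsBelow k z) : z ≠ 0 := by
  rintro rfl
  obtain ⟨q, hq, hqp⟩ := Nat.exists_infinite_primes k
  have := h q hqp (dvd_zero _)
  omega

/-- The subgroup generated by the classes of integers all of whose prime factors are below `k`. -/
def smooth (k : ℕ) : AddSubgroup (WittGroup ℤ) :=
  AddSubgroup.closure {x | ∃ z : ℤ, FactorsBelow k z ∧ x = mk z}

lemma mk_mem_smooth {k : ℕ} {z : ℤ} (h : FactorsBelow k z) : mk z ∈ smooth k :=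
  AddSubgroup.subset_closure ⟨z, h, rfl⟩

lemma smooth_mono {k l : ℕ} (h : k ≤ l) : smooth k ≤ smooth l :=
  AddSubgroup.closure_mono fun _ ⟨z, hz, hx⟩ => ⟨z, hz.mono h, hx⟩

lemma exists_mem_smooth (x : WittGroup ℤ) : ∃ k, x ∈ smooth k := by
  induction x using induction_on with
  | h0 => exact ⟨0, zero_mem _⟩
  | hadd a x ih =>
    obtain ⟨k, hk⟩ := ih
    rcases eq_or_ne a 0 with rfl | ha
    · exact ⟨k, by simpa⟩
    exact ⟨max k (a.natAbs + 1), add_mem (mk_mem_smooth (.of_lt ha (by omega)))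
      (smooth_mono (le_max_left _ _) hk)⟩

lemma residue_eq_zero_of_mem_smooth {p k : ℕ} [Fact p.Prime] (hp : k ≤ p) {x : WittGroup ℤ}
    (hx : x ∈ smooth k) : residue p x = 0 := by
  have : smooth k ≤ (residue p).ker := by
    rw [smooth, AddSubgroup.closure_le]
    rintro _ ⟨z, hz, rfl⟩
    simpa using residueFun_eq_zero (hz.mono hp).not_dvd
  exact this hx

end Filtration

section Graded

variable {p : ℕ} [Fact p.Prime]

/-- The class of `⟨p z⟩` modulo the classes of integers with prime factors below `p`. -/
def primeMul (p : ℕ) (z : ℤ) : WittGroup ℤ ⧸ smooth p := QuotientAddGroup.mk (mk (p * z))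

lemma quotient_mk_eq_zero {p : ℕ} {z : ℤ} (h : FactorsBelow p z) :
    (QuotientAddGroup.mk (mk z) : WittGroup ℤ ⧸ smooth p) = 0 :=
  (QuotientAddGroup.eq_zero_iff _).2 (mk_mem_smooth h)

lemma primeMul_congr_mul {x r s c : ℤ} (hx : FactorsBelow p x) (hr : FactorsBelow p r)
    (hc : FactorsBelow p c) (hs : s.natAbs < p) (h : x = r + p * s) :
    primeMul p (x * c) = primeMul p (r * c) := by
  rcases eq_or_ne s 0 with rfl | hs0
  · simp_all
  have hs' : FactorsBelow p s := .of_lt hs0 hs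
  have hp0 : (p : ℤ) ≠ 0 := prime_int.ne_zero
  have key := mk_add_mk (p * (r * c)) (s * c * (p : ℤ) ^ 2)
  rw [mk_mul_sq _ hp0, show (p : ℤ) * (r * c) + s * c * p ^ 2 = p * (x * c) by rw [h]; ring,
    show (p : ℤ) * (r * c) * (s * c * p ^ 2) * (p * (x * c)) =
      r * s * x * c * (c * p ^ 2) ^ 2 by ring,
    mk_mul_sq _ (mul_ne_zero hc.ne_zero (pow_ne_zero _ hp0))] at key
  have key' := congrArg (QuotientAddGroup.mk (s := smooth p)) key
  simp only [QuotientAddGroup.mk_add, quotient_mk_eq_zero (hs'.mul hc),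
    quotient_mk_eq_zero (((hr.mul hs').mul hx).mul hc), add_zero] at key'
  exact key'.symm

lemma two_mul_natAbs_valMinAbs_le (a : ZMod p) : 2 * a.valMinAbs.natAbs ≤ p := by
  have := a.natAbs_valMinAbs_le
  omega

lemma factorsBelow_valMinAbs {a : ZMod p} (ha : a ≠ 0) : FactorsBelow p a.valMinAbs :=
  .of_lt (by simpa) (by
    have := two_mul_natAbs_valMinAbs_le a
    have := (Fact.out : p.Prime).pos
    omega)

/-- A product of two integers below `p` can be replaced by its residue modulo `p`. -/
lemma primeMul_mul_mul {x y c : ℤ} (hx : x ≠ 0) (hxp : x.natAbs < p) (hy : y ≠ 0)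
    (hyp : y.natAbs < p) (hc : FactorsBelow p c) :
    primeMul p (x * y * c) = primeMul p (((x * y : ℤ) : ZMod p).valMinAbs * c) := by
  have hxy : FactorsBelow p (x * y) := (FactorsBelow.of_lt hx hxp).mul (.of_lt hy hyp)
  set r := ((x * y : ℤ) : ZMod p).valMinAbs with hr
  have hrp := two_mul_natAbs_valMinAbs_le ((x * y : ℤ) : ZMod p)
  rw [← hr] at hrp
  obtain ⟨s, hs⟩ : (p : ℤ) ∣ x * y - r := by
    rw [← ZMod.intCast_zmod_eq_zero_iff_dvd]; simp [hr]
  refine primeMul_congr_mul hxy (factorsBelow_valMinAbs (intCast_ne_zero hxy.not_dvd)) hc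
    (s := s) ?_ (by linarith)
  have h1 : p * s.natAbs ≤ x.natAbs * y.natAbs + r.natAbs := by
    rw [← Int.natAbs_mul x y]
    have := congrArg Int.natAbs hs
    rw [Int.natAbs_mul, Int.natAbs_natCast] at this
    omega
  by_contra! hsp
  have h2 : p * p ≤ p * s.natAbs := Nat.mul_le_mul_left _ hsp
  have h3 : x.natAbs * y.natAbs ≤ (p - 1) * (p - 1) := Nat.mul_le_mul (by omega) (by omega)
  obtain ⟨m, rfl⟩ : ∃ m, p = m + 1 := ⟨p - 1, by omega⟩
  simp only [Nat.add_sub_cancel] at h3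
  nlinarith

lemma primeMul_mul_eq {x : ℤ} (hx : x ≠ 0) (hxp : x.natAbs < p) {a : ℕ}
    (ha : FactorsBelow p a) :
    primeMul p (x * a) = primeMul p ((x * a : ℤ) : ZMod p).valMinAbs := by
  have hone : FactorsBelow p 1 := .of_lt one_ne_zero (Fact.out : p.Prime).one_lt
  induction a using induction_on_primes generalizing x with
  | zero => exact absurd rfl ha.ne_zero
  | one =>
    simpa using primeMul_mul_mul hx hxp one_ne_zero (Fact.out : p.Prime).one_lt hone
  | prime_mul q a hq ih =>
    have hqp : q < p := ha q hq (by simp)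
    have ha' : FactorsBelow p a := fun l hl hd => ha l hl (by push_cast; exact hd.mul_left _)
    have hq0 : (q : ℤ) ≠ 0 := by exact_mod_cast hq.ne_zero
    have hxq := (FactorsBelow.of_lt hx hxp).mul (.of_lt hq0 (by simpa using hqp))
    have hr := factorsBelow_valMinAbs (intCast_ne_zero hxq.not_dvd)
    have hrp := two_mul_natAbs_valMinAbs_le ((x * q : ℤ) : ZMod p)
    rw [Nat.cast_mul, ← mul_assoc, primeMul_mul_mul hx hxp hq0 (by simpa using hqp) ha',
      ih hr.ne_zero (by omega) ha']
    congr 2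
    simp

/-- Modulo smaller primes, `⟨p a⟩` only depends on `a` modulo `p`. -/
lemma primeMul_eq {a : ℤ} (ha : FactorsBelow p a) :
    primeMul p a = primeMul p (a : ZMod p).valMinAbs := by
  have hp := (Fact.out : p.Prime).one_lt
  have ha' : FactorsBelow p a.natAbs := fun q hq hd => ha q hq (by simpa using hd)
  rcases Int.natAbs_eq a with h | h
  · have := primeMul_mul_eq (p := p) one_ne_zero hp ha'
    rwa [one_mul, ← h] at this
  · have := primeMul_mul_eq (p := p) (x := -1) (by simp) (by simpa using hp) ha'
    rwa [neg_one_mul, ← h] at this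

/-- The homomorphism sending `⟨a⟩` to `⟨p a⟩` modulo smaller primes. -/
noncomputable def coresidue (p : ℕ) [Fact p.Prime] :
    WittGroup (ZMod p) →+ WittGroup ℤ ⧸ smooth p := by
  refine lift (fun a => primeMul p a.valMinAbs) (by simp [primeMul]) ?_ ?_
  · intro a b hb
    rcases eq_or_ne a 0 with rfl | ha
    · simp
    have hb' := factorsBelow_valMinAbs hb
    have key := primeMul_eq ((factorsBelow_valMinAbs ha).mul (hb'.mul hb'))
    simp only [← sq, Int.cast_mul, Int.cast_pow, ZMod.coe_valMinAbs] at key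
    rw [← key, primeMul, ← mul_assoc, mk_mul_sq _ hb'.ne_zero, primeMul]
  · intro a b
    rcases eq_or_ne a 0 with rfl | ha
    · simp [primeMul]
    rcases eq_or_ne b 0 with rfl | hb
    · simp [primeMul]
    have ha' := factorsBelow_valMinAbs ha
    have hb' := factorsBelow_valMinAbs hb
    have hp0 : (p : ℤ) ≠ 0 := prime_int.ne_zero
    have hsum : primeMul p a.valMinAbs + primeMul p b.valMinAbs =
        primeMul p (a.valMinAbs + b.valMinAbs) +
          primeMul p (a.valMinAbs * b.valMinAbs * (a.valMinAbs + b.valMinAbs)) := by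
      simp only [primeMul, ← QuotientAddGroup.mk_add]
      rw [mk_add_mk, ← mul_add, ← mk_mul_sq (p * (a.valMinAbs * b.valMinAbs * _)) hp0]
      congr 3
      ring
    have hcast : ((a.valMinAbs + b.valMinAbs : ℤ) : ZMod p) = a + b := by simp
    have hle : (a.valMinAbs + b.valMinAbs).natAbs ≤ p := by
      have := two_mul_natAbs_valMinAbs_le a
      have := two_mul_natAbs_valMinAbs_le b
      omega
    rw [hsum]
    set c := a.valMinAbs + b.valMinAbs
    rcases eq_or_ne (a + b) 0 with hab | hab
    · rw [hab]
      simp only [ZMod.valMinAbs_zero, mul_zero]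
      obtain ⟨d, hd⟩ : (p : ℤ) ∣ c := by rwa [← ZMod.intCast_zmod_eq_zero_iff_dvd, hcast]
      rcases eq_or_ne d 0 with rfl | hd0
      · simp [hd]
      have hd' : FactorsBelow p d := by
        refine .of_lt hd0 ?_
        rw [hd, Int.natAbs_mul, Int.natAbs_natCast] at hle
        have := (Fact.out : p.Prime).one_lt
        nlinarith
      have h0 : primeMul p 0 = 0 := by simp [primeMul]
      rw [h0, hd, primeMul, primeMul, show (p : ℤ) * (p * d) = d * p ^ 2 by ring,
        show (p : ℤ) * (a.valMinAbs * b.valMinAbs * (p * d)) =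
          a.valMinAbs * b.valMinAbs * d * p ^ 2 by ring, mk_mul_sq _ hp0, mk_mul_sq _ hp0,
        quotient_mk_eq_zero hd', quotient_mk_eq_zero ((ha'.mul hb').mul hd')]
    · have hc0 : c ≠ 0 := by intro h; apply hab; rw [← hcast, h]; simp
      have hcp : c.natAbs ≠ p := by
        intro h
        apply hab
        rw [← hcast, ZMod.intCast_zmod_eq_zero_iff_dvd, ← Int.dvd_natAbs, h]
      have hc : FactorsBelow p c := .of_lt hc0 (by omega)
      rw [primeMul_eq hc, primeMul_eq ((ha'.mul hb').mul hc), Int.cast_mul, hcast]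
      simp

lemma coresidue_residue {x : WittGroup ℤ} (hx : x ∈ smooth (p + 1)) :
    coresidue p (residue p x) = QuotientAddGroup.mk x := by
  have : smooth (p + 1) ≤
      (((coresidue p).comp (residue p)).eqLocus (QuotientAddGroup.mk' (smooth p))) := by
    rw [smooth, AddSubgroup.closure_le]
    rintro _ ⟨z, hz, rfl⟩
    change coresidue p (residue p (mk z)) = QuotientAddGroup.mk (mk z)
    obtain ⟨k, u, hu, rfl⟩ := exists_eq_pow_mul (p := p) hz.ne_zero
    have hu' : FactorsBelow p u := fun q hq hd => by
      have h1 := hz q hq (hd.mul_left _)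
      have h2 : q ≠ p := by rintro rfl; exact hu hd
      omega
    rw [residue_mk, residueFun_pow_mul hu]
    split_ifs with hk
    · obtain ⟨m, rfl⟩ := hk
      rw [show (p : ℤ) ^ (2 * m + 1) * u = p * u * (p ^ m) ^ 2 by ring,
        mk_mul_sq _ (pow_ne_zero _ prime_int.ne_zero)]
      exact (lift_mk ..).trans (primeMul_eq hu').symm
    · obtain ⟨m, rfl⟩ := Nat.not_odd_iff_even.1 hk
      rw [show (p : ℤ) ^ (m + m) * u = u * (p ^ m) ^ 2 by ring,
        mk_mul_sq _ (pow_ne_zero _ prime_int.ne_zero), map_zero, quotient_mk_eq_zero hu']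
  exact this hx

/-- A class all of whose residues vanish is generated by `⟨1⟩` and `⟨-1⟩`. -/
theorem mem_smooth_zero {x : WittGroup ℤ}
    (h : ∀ (p : ℕ) [Fact p.Prime], residue p x = 0) : x ∈ smooth 0 := by
  obtain ⟨k, hk⟩ := exists_mem_smooth x
  induction k with
  | zero => exact hk
  | succ k ih =>
    apply ih
    by_cases hp : k.Prime
    · have : Fact k.Prime := ⟨hp⟩
      rw [← QuotientAddGroup.eq_zero_iff, ← coresidue_residue hk, h, map_zero]
    · refine AddSubgroup.closure_mono ?_ hk
      rintro _ ⟨z, hz, rfl⟩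
      refine ⟨z, fun q hq hd => ?_, rfl⟩
      have h1 := hz q hq hd
      have h2 : q ≠ k := by rintro rfl; exact hp hq
      omega

end Graded

section Ternary

/-- The class of the ternary form `m ⟨δ, δ ℓ, n ℓ⟩`. -/
def ternary (m n l δ : ℤ) : WittGroup ℤ := mk (m * δ) + mk (m * δ * l) + mk (m * n * l)

variable {p : ℕ} [Fact p.Prime]

lemma eq_one_of_ne_zero {a : ZMod 2} (ha : a ≠ 0) : a = 1 := by
  revert a; decide

lemma not_dvd_sign {δ : ℤ} (hδ : δ = 1 ∨ δ = -1) : ¬ (p : ℤ) ∣ δ := by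
  intro h
  rcases hδ with rfl | rfl
  · exact prime_int.not_dvd_one h
  · exact prime_int.not_dvd_one (by simpa using h)

lemma residue_ternary_of_dvd_left (hp : p ≠ 2) {m n l δ : ℤ} (hδ : δ = 1 ∨ δ = -1)
    {u v : ZMod p} (hu : u ≠ 0) (hv : v ≠ 0) (hm : ¬ (p : ℤ) ∣ m) (hn : ¬ (p : ℤ) ∣ n)
    (hl : (l : ZMod p) = u * v) :
    residue p (ternary (p * m) (p * n) l δ) = mk u + mk v := by
  have hl' : ¬ (p : ℤ) ∣ l := by
    rw [← ZMod.intCast_zmod_eq_zero_iff_dvd, hl]; exact mul_ne_zero hu hv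
  have hδ' := not_dvd_sign (p := p) hδ
  have hmd := prime_int.not_dvd_mul hm hδ'
  rw [ternary, show (p : ℤ) * m * (p * n) * l = m * n * l * p ^ 2 by ring,
    mk_mul_sq _ prime_int.ne_zero, show p * m * δ * l = p * (m * δ * l) by ring,
    mul_assoc (p : ℤ) m]
  simp only [map_add, residue_mk, residueFun_prime_mul hmd, residueFun_prime_mul
    (prime_int.not_dvd_mul hmd hl'),
    residueFun_eq_zero (prime_int.not_dvd_mul (prime_int.not_dvd_mul hm hn) hl'), add_zero]
  refine (mk_add_mk_eq hp hu hv (intCast_ne_zero hmd) (intCast_ne_zero hmd) ?_).symm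
  push_cast
  rw [hl]
  ring

lemma residue_ternary_of_dvd_right {m n l δ : ℤ} (hδ : δ = 1 ∨ δ = -1)
    {u : ZMod p} (hm : ¬ (p : ℤ) ∣ m) (hn : ¬ (p : ℤ) ∣ n) (hu : u ≠ 0)
    (hl : (l : ZMod p) = u * m * n) :
    residue p (ternary m (p * n) l δ) = mk u := by
  have hm' := intCast_ne_zero hm
  have hn' := intCast_ne_zero hn
  have hl' : ¬ (p : ℤ) ∣ l := by
    rw [← ZMod.intCast_zmod_eq_zero_iff_dvd, hl]; simp_all
  have hmd := prime_int.not_dvd_mul hm (not_dvd_sign (p := p) hδ)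
  rw [ternary, show m * (p * n) * l = p * (m * n * l) by ring]
  simp only [map_add, residue_mk, residueFun_eq_zero hmd,
    residueFun_eq_zero (prime_int.not_dvd_mul hmd hl'),
    residueFun_prime_mul (prime_int.not_dvd_mul (prime_int.not_dvd_mul hm hn) hl'), zero_add]
  push_cast
  rw [hl, show (m : ZMod p) * n * (u * m * n) = u * (m * n) ^ 2 by ring,
    mk_mul_sq _ (mul_ne_zero hm' hn')]

lemma residue_ternary_self {m n δ : ℤ} (hδ : δ = 1 ∨ δ = -1) (hm : ¬ (p : ℤ) ∣ m)
    (hn : ¬ (p : ℤ) ∣ n) (hsq : IsSquare ((-δ * n : ℤ) : ZMod p)) :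
    residue p (ternary m n p δ) = 0 := by
  have hδ' := not_dvd_sign (p := p) hδ
  have hmd := prime_int.not_dvd_mul hm hδ'
  obtain ⟨s, hs⟩ := hsq
  have hs0 : s ≠ 0 := by
    rintro rfl
    rw [mul_zero, ZMod.intCast_zmod_eq_zero_iff_dvd, neg_mul, dvd_neg] at hs
    exact prime_int.not_dvd_mul hδ' hn hs
  have hδ2 : (δ : ZMod p) * δ = 1 := by rcases hδ with rfl | rfl <;> simp
  have hmn : ((m * n : ℤ) : ZMod p) = -((m * δ : ℤ) : ZMod p) * s ^ 2 := by
    push_cast at hs ⊢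
    linear_combination (-(m : ZMod p) * n) * hδ2 - m * δ * hs
  rw [ternary, mul_comm (m * δ) (p : ℤ), mul_comm (m * n) (p : ℤ)]
  simp only [map_add, residue_mk, residueFun_eq_zero hmd, residueFun_prime_mul hmd,
    residueFun_prime_mul (prime_int.not_dvd_mul hm hn), zero_add]
  rw [hmn, mk_mul_sq _ hs0, mk_add_mk_neg]

lemma residue_ternary_eq_zero {m n l δ : ℤ} (hδ : δ = 1 ∨ δ = -1) (hm : ¬ (p : ℤ) ∣ m)
    (hn : ¬ (p : ℤ) ∣ n) (hl : ¬ (p : ℤ) ∣ l) : residue p (ternary m n l δ) = 0 := by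
  have hmd := prime_int.not_dvd_mul hm (not_dvd_sign (p := p) hδ)
  simp [ternary, residueFun_eq_zero hmd, residueFun_eq_zero (prime_int.not_dvd_mul hmd hl),
    residueFun_eq_zero (prime_int.not_dvd_mul (prime_int.not_dvd_mul hm hn) hl)]

lemma exists_sign_isSquare (hp : p % 4 = 3) (n : ℤ) :
    ∃ δ : ℤ, (δ = 1 ∨ δ = -1) ∧ IsSquare ((-δ * n : ℤ) : ZMod p) := by
  by_cases h : IsSquare (n : ZMod p)
  · exact ⟨-1, Or.inr rfl, by simpa using h⟩
  refine ⟨1, Or.inl rfl, ?_⟩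
  have hn : (n : ZMod p) ≠ 0 := by intro h0; simp [h0] at h
  have h1 : legendreSym p (-1 * n) = 1 := by
    rw [legendreSym.mul, (legendreSym.eq_neg_one_iff p).2 h, (legendreSym.eq_neg_one_iff p).2]
    · simp
    · have := (ZMod.exists_sq_eq_neg_one_iff (p := p)).not.2 (by simp [hp])
      simpa using this
  exact (legendreSym.eq_one_iff p (by simpa using hn)).1 h1

lemma not_dvd_prod_primes {P : Finset ℕ} (hP : ∀ q ∈ P, q.Prime) (hp : p ∉ P) :
    ¬ (p : ℤ) ∣ ((∏ q ∈ P, q : ℕ) : ℤ) := by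
  rw [Int.natCast_dvd_natCast, (Fact.out : p.Prime).prime.dvd_finsetProd_iff]
  rintro ⟨q, hq, hd⟩
  rw [(Nat.prime_dvd_prime_iff_eq Fact.out (hP q hq)).1 hd] at hp
  exact hp hq

/-- A prime congruent to `3` modulo `4` with prescribed nonzero residues at finitely many odd
primes. -/
lemma exists_prime_three_mod_four (S : Finset ℕ) (hS : ∀ q ∈ S, q.Prime ∧ q ≠ 2)
    (c : (q : ℕ) → ZMod q) (hc : ∀ q ∈ S, c q ≠ 0) (N : ℕ) :
    ∃ l > N, l.Prime ∧ l % 4 = 3 ∧ ∀ q ∈ S, (l : ZMod q) = c q := by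
  classical
  let M : ℕ → ℕ := fun q => if q = 2 then 4 else q
  let a : ℕ → ℕ := fun q => if q = 2 then 3 else (c q).val
  have hM : ∀ q ∈ S, M q = q := fun q hq => if_neg (hS q hq).2
  have ha : ∀ q ∈ S, a q = (c q).val := fun q hq => if_neg (hS q hq).2
  have hM0 : ∀ q ∈ insert 2 S, M q ≠ 0 := by
    intro q hq
    rcases Finset.mem_insert.1 hq with rfl | hq
    · simp [M]
    · rw [hM q hq]; exact (hS q hq).1.ne_zero
  have hcop4 : ∀ q ∈ S, Nat.Coprime 4 q := fun q hq => by
    rw [show 4 = 2 ^ 2 by rfl]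
    exact Nat.Coprime.pow_left _
      ((Nat.coprime_primes Nat.prime_two (hS q hq).1).2 (hS q hq).2.symm)
  have hpair : Set.Pairwise (↑(insert 2 S) : Set ℕ) (Function.onFun Nat.Coprime M) := by
    intro q hq r hr hqr
    rw [Finset.coe_insert, Set.mem_insert_iff, Finset.mem_coe] at hq hr
    rw [Function.onFun]
    rcases hq with rfl | hq <;> rcases hr with rfl | hr
    · exact absurd rfl hqr
    · rw [hM r hr]; exact hcop4 r hr
    · rw [hM q hq]; exact (hcop4 q hq).symm
    · rw [hM q hq, hM r hr]; exact (Nat.coprime_primes (hS q hq).1 (hS r hr).1).2 hqr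
  obtain ⟨b, hb⟩ := Nat.chineseRemainderOfFinset a M (insert 2 S) hM0 hpair
  have hbS : ∀ q ∈ S, (b : ZMod q) = c q := fun q hq => by
    have h1 := hb q (Finset.mem_insert_of_mem hq)
    rw [hM q hq, ha q hq] at h1
    have : NeZero q := ⟨(hS q hq).1.ne_zero⟩
    rw [(ZMod.natCast_eq_natCast_iff _ _ _).2 h1, ZMod.natCast_zmod_val]
  have hb4 : b ≡ 3 [MOD 4] := by simpa [M, a] using hb 2 (Finset.mem_insert_self _ _)
  have hcop : b.Coprime (∏ q ∈ insert 2 S, M q) := by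
    refine Nat.Coprime.prod_right fun q hq => ?_
    rcases Finset.mem_insert.1 hq with rfl | hq
    · change b.Coprime 4
      rw [Nat.Coprime, hb4.gcd_eq]
      rfl
    · rw [hM q hq, Nat.coprime_comm, (hS q hq).1.coprime_iff_not_dvd, ← ZMod.natCast_eq_zero_iff,
        hbS q hq]
      exact hc q hq
  obtain ⟨l, hlN, hl, hlb⟩ := Nat.forall_exists_prime_gt_and_modEq N
    (Finset.prod_ne_zero_iff.2 hM0) hcop
  refine ⟨l, hlN, hl, ?_, fun q hq => ?_⟩
  · exact (hlb.of_dvd (Finset.dvd_prod_of_mem M (Finset.mem_insert_self 2 S))).trans hb4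
  · rw [← hbS q hq, ZMod.natCast_eq_natCast_iff]
    have := Finset.dvd_prod_of_mem M (Finset.mem_insert_of_mem (a := q) (b := 2) hq)
    rw [hM q hq] at this
    exact hlb.of_dvd this

/-- Every Witt class has the same residues as some ternary form. -/
theorem exists_ternary (x : WittGroup ℤ) :
    ∃ m n l δ : ℤ, m ≠ 0 ∧ n ≠ 0 ∧ l ≠ 0 ∧ δ ≠ 0 ∧
      ∀ (p : ℕ) [Fact p.Prime], residue p (ternary m n l δ) = residue p x := by
  classical
  obtain ⟨k, hk⟩ := exists_mem_smooth x
  have : Fact (Nat.Prime 2) := ⟨Nat.prime_two⟩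
  let S := (Finset.range k).filter fun q => q.Prime ∧ q ≠ 2
  have hSprop : ∀ q ∈ S, q.Prime ∧ q ≠ 2 := fun q hq => (Finset.mem_filter.1 hq).2
  let S₂ := S.filter fun q =>
    ∀ [Fact q.Prime], ∃ u v : ZMod q, u ≠ 0 ∧ v ≠ 0 ∧ residue q x = mk u + mk v
  have hSprime : ∀ q ∈ S, q.Prime := fun q hq => (hSprop q hq).1
  have hS₂prime : ∀ q ∈ S₂, q.Prime := fun q hq => hSprime q (Finset.mem_filter.1 hq).1
  let e : ℕ := if residue 2 x = 0 then 1 else 2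
  have he : ∀ q : ℕ, q.Prime → q ≠ 2 → ¬ (q : ℤ) ∣ (e : ℤ) := by
    intro q hq hq2 hd
    have hd' : q ∣ 2 := (Int.natCast_dvd_natCast.1 hd).trans (by simp only [e]; split_ifs <;> simp)
    exact hq2 ((Nat.prime_dvd_prime_iff_eq hq Nat.prime_two).1 hd')
  have he0 : (e : ℤ) ≠ 0 := by simp only [e]; split_ifs <;> simp
  let m : ℤ := ((∏ q ∈ S₂, q : ℕ) : ℤ)
  let n₀ : ℤ := ((∏ q ∈ S, q : ℕ) : ℤ)
  have hm0 : m ≠ 0 := by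
    exact Nat.cast_ne_zero.2 <| Finset.prod_ne_zero_iff.2 fun q hq => (hS₂prime q hq).ne_zero
  have hn0 : n₀ ≠ 0 := by
    exact Nat.cast_ne_zero.2 <| Finset.prod_ne_zero_iff.2 fun q hq => (hSprime q hq).ne_zero
  have hlocal : ∀ q : ℕ, ∃ c : ZMod q, q ∈ S → c ≠ 0 ∧ ∀ [Fact q.Prime] (l δ : ℤ),
      (l : ZMod q) = c → (δ = 1 ∨ δ = -1) → residue q (ternary m (e * n₀) l δ) = residue q x := by
    intro q
    by_cases hq : q ∈ S
    swap
    · exact ⟨0, fun h => absurd h hq⟩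
    obtain ⟨hqp, hq2⟩ := hSprop q hq
    have : Fact q.Prime := ⟨hqp⟩
    obtain ⟨n', hn', hn'q⟩ : ∃ n' : ℤ, e * n₀ = q * n' ∧ ¬ (q : ℤ) ∣ n' := by
      refine ⟨e * ((∏ r ∈ S.erase q, r : ℕ) : ℤ), ?_, prime_int.not_dvd_mul (he q hqp hq2)
        (not_dvd_prod_primes (fun r hr => hSprime r (Finset.mem_of_mem_erase hr))
          (Finset.notMem_erase q S))⟩
      simp only [n₀, ← Finset.mul_prod_erase S _ hq]
      push_cast
      ring
    by_cases hq₂ : q ∈ S₂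
    · obtain ⟨u, v, hu, hv, huv⟩ := (Finset.mem_filter.1 hq₂).2
      refine ⟨u * v, fun _ => ⟨mul_ne_zero hu hv, fun l δ hl hδ => ?_⟩⟩
      have hm' : m = q * ((∏ r ∈ S₂.erase q, r : ℕ) : ℤ) := by
        simp only [m, ← Finset.mul_prod_erase S₂ _ hq₂]
        push_cast
        ring
      rw [hm', hn', residue_ternary_of_dvd_left hq2 hδ hu hv
        (not_dvd_prod_primes (fun r hr => hS₂prime r (Finset.mem_of_mem_erase hr))
          (Finset.notMem_erase q S₂)) hn'q hl, huv]
    · have hmq : ¬ (q : ℤ) ∣ m := not_dvd_prod_primes hS₂prime hq₂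
      obtain ⟨u, hu, hxu⟩ : ∃ u : ZMod q, u ≠ 0 ∧ residue q x = mk u := by
        refine (exists_eq_mk_or_eq_add hq2 (residue q x)).resolve_right fun h => ?_
        exact hq₂ (Finset.mem_filter.2 ⟨hq, h⟩)
      refine ⟨u * m * n', fun _ => ⟨mul_ne_zero (mul_ne_zero hu (intCast_ne_zero hmq))
        (intCast_ne_zero hn'q), fun l δ hl hδ => ?_⟩⟩
      rw [hn', residue_ternary_of_dvd_right hδ hmq hn'q hu hl, hxu]
  choose c hc using hlocal
  obtain ⟨l, hlk, hlp, hl4, hlc⟩ := exists_prime_three_mod_four S hSprop c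
    (fun q hq => (hc q hq).1) (max k 2)
  have : Fact l.Prime := ⟨hlp⟩
  obtain ⟨δ, hδ, hsq⟩ := exists_sign_isSquare hl4 (e * n₀)
  have hlprime : ∀ q : ℕ, q.Prime → q ≠ l → ¬ (q : ℤ) ∣ (l : ℤ) := fun q hq hql hd =>
    hql ((Nat.prime_dvd_prime_iff_eq hq hlp).1 (Int.natCast_dvd_natCast.1 hd))
  refine ⟨m, e * n₀, l, δ, hm0, mul_ne_zero he0 hn0, by exact_mod_cast hlp.ne_zero,
    by rcases hδ with rfl | rfl <;> simp, fun p hp => ?_⟩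
  by_cases hpS : p ∈ S
  · exact (hc p hpS).2 l δ (by simpa using hlc p hpS) hδ
  have hpm : ¬ (p : ℤ) ∣ m :=
    not_dvd_prod_primes hS₂prime fun h => hpS (Finset.mem_filter.1 h).1
  have hpn : ¬ (p : ℤ) ∣ n₀ := not_dvd_prod_primes hSprime hpS
  rcases eq_or_ne p 2 with rfl | hp2
  · have hl2 : ¬ ((2 : ℕ) : ℤ) ∣ (l : ℤ) := hlprime 2 Nat.prime_two (by omega)
    by_cases hx2 : residue 2 x = 0
    · rw [hx2]
      exact residue_ternary_eq_zero hδ hpm (by simpa [e, hx2] using hpn) hl2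
    · rw [(eq_zero_or_eq_mk_one _).resolve_left hx2, show (e : ℤ) = ((2 : ℕ) : ℤ) by simp [e, hx2]]
      refine residue_ternary_of_dvd_right hδ hpm hpn one_ne_zero ?_
      rw [eq_one_of_ne_zero (intCast_ne_zero hpm), eq_one_of_ne_zero (intCast_ne_zero hpn),
        eq_one_of_ne_zero (intCast_ne_zero hl2)]
      rfl
  have hkp : k ≤ p := by
    by_contra! h
    exact hpS (Finset.mem_filter.2 ⟨Finset.mem_range.2 h, hp.out, hp2⟩)
  have hpen := prime_int.not_dvd_mul (he p hp.out hp2) hpn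
  rw [residue_eq_zero_of_mem_smooth hkp hk]
  rcases eq_or_ne p l with rfl | hpl
  · exact residue_ternary_self hδ hpm hpen hsq
  · exact residue_ternary_eq_zero hδ hpm hpen (hlprime p hp.out hpl)

end Ternary

end WittGroup

section DiagonalForms

open QuadraticMap

/-- Two multisets of rationals are the coefficients of equivalent diagonal forms. -/
def DiagEquiv (s t : Multiset ℚ) : Prop :=
  ∃ (ι κ : Type) (_ : Fintype ι) (_ : Fintype κ) (a : ι → ℚ) (b : κ → ℚ),
    Finset.univ.val.map a = s ∧ Finset.univ.val.map b = t ∧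
      (weightedSumSquares ℚ a).Equivalent (weightedSumSquares ℚ b)

lemma weightedSumSquares_equivalent_reindex {ι κ : Type} [Fintype ι] [Fintype κ] (e : ι ≃ κ)
    (a : κ → ℚ) :
    (weightedSumSquares ℚ (a ∘ e)).Equivalent (weightedSumSquares ℚ a) := by
  refine ⟨⟨LinearEquiv.funCongrLeft ℚ ℚ e.symm, fun x => ?_⟩⟩
  simp only [weightedSumSquares_apply]
  rw [← e.sum_comp]
  simp [LinearEquiv.funCongrLeft, LinearMap.funLeft]

lemma weightedSumSquares_equivalent_of_map_eq {ι κ : Type} [Fintype ι] [Fintype κ] {a : ι → ℚ}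
    {b : κ → ℚ} (h : Finset.univ.val.map a = Finset.univ.val.map b) :
    (weightedSumSquares ℚ a).Equivalent (weightedSumSquares ℚ b) := by
  have hfiber : ∀ y : ℚ, Nonempty ({i // a i = y} ≃ {j // b j = y}) := fun y => by
    have hcount := congrArg (Multiset.count y) h
    rw [Multiset.count_map, Multiset.count_map] at hcount
    refine ⟨Fintype.equivOfCardEq ?_⟩
    rw [Fintype.card_subtype, Fintype.card_subtype]
    simpa [Finset.card_def, Finset.filter_val, eq_comm] using hcount
  let f := fun y => (hfiber y).some
  let e : ι ≃ κ := (Equiv.sigmaFiberEquiv a).symm.trans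
    ((Equiv.sigmaCongrRight f).trans (Equiv.sigmaFiberEquiv b))
  have he : b ∘ e = a := funext fun i => (f (a i) ⟨i, rfl⟩).2
  rw [← he]
  exact weightedSumSquares_equivalent_reindex e b

lemma weightedSumSquares_equivalent_sum {ι κ ι' κ' : Type} [Fintype ι] [Fintype κ] [Fintype ι']
    [Fintype κ'] {a : ι → ℚ} {b : κ → ℚ} {a' : ι' → ℚ} {b' : κ' → ℚ}
    (h : (weightedSumSquares ℚ a).Equivalent (weightedSumSquares ℚ b))
    (h' : (weightedSumSquares ℚ a').Equivalent (weightedSumSquares ℚ b')) :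
    (weightedSumSquares ℚ (Sum.elim a a')).Equivalent (weightedSumSquares ℚ (Sum.elim b b')) := by
  obtain ⟨f⟩ := h
  obtain ⟨f'⟩ := h'
  refine ⟨⟨(LinearEquiv.sumArrowLequivProdArrow ι ι' ℚ ℚ).trans
    ((f.toLinearEquiv.prodCongr f'.toLinearEquiv).trans
      (LinearEquiv.sumArrowLequivProdArrow κ κ' ℚ ℚ).symm), fun x => ?_⟩⟩
  have h1 := f.map_app (x ∘ Sum.inl)
  have h2 := f'.map_app (x ∘ Sum.inr)
  simp only [weightedSumSquares_apply] at h1 h2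
  simp only [weightedSumSquares_apply, Fintype.sum_sum_type, Sum.elim_inl, Sum.elim_inr]
  exact congrArg₂ (· + ·) h1 h2

namespace DiagEquiv

lemma exists_rep (s : Multiset ℚ) :
    ∃ (n : ℕ) (a : Fin n → ℚ), Finset.univ.val.map a = s := by
  refine ⟨s.toList.length, s.toList.get, ?_⟩
  rw [Fin.univ_val_map, List.ofFn_get, Multiset.coe_toList]

lemma refl (s : Multiset ℚ) : DiagEquiv s s := by
  obtain ⟨n, a, ha⟩ := exists_rep s
  exact ⟨_, _, _, _, a, a, ha, ha, .refl _⟩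

lemma symm {s t : Multiset ℚ} (h : DiagEquiv s t) : DiagEquiv t s := by
  obtain ⟨ι, κ, _, _, a, b, ha, hb, h⟩ := h
  exact ⟨κ, ι, _, _, b, a, hb, ha, h.symm⟩

lemma equivalent {s t : Multiset ℚ} (h : DiagEquiv s t) {ι κ : Type} [Fintype ι] [Fintype κ]
    {a : ι → ℚ} {b : κ → ℚ} (ha : Finset.univ.val.map a = s) (hb : Finset.univ.val.map b = t) :
    (weightedSumSquares ℚ a).Equivalent (weightedSumSquares ℚ b) := by
  obtain ⟨ι', κ', _, _, a', b', ha', hb', h⟩ := h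
  exact (weightedSumSquares_equivalent_of_map_eq (ha.trans ha'.symm)).trans
    (h.trans (weightedSumSquares_equivalent_of_map_eq (hb'.trans hb.symm)))

lemma trans {s t w : Multiset ℚ} (h : DiagEquiv s t) (h' : DiagEquiv t w) : DiagEquiv s w := by
  obtain ⟨_, a, ha⟩ := exists_rep s
  obtain ⟨_, b, hb⟩ := exists_rep t
  obtain ⟨_, c, hc⟩ := exists_rep w
  exact ⟨_, _, _, _, a, c, ha, hc, (h.equivalent ha hb).trans (h'.equivalent hb hc)⟩

lemma add {s t s' t' : Multiset ℚ} (h : DiagEquiv s t) (h' : DiagEquiv s' t') :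
    DiagEquiv (s + s') (t + t') := by
  obtain ⟨ι, κ, _, _, a, b, rfl, rfl, h⟩ := h
  obtain ⟨ι', κ', _, _, a', b', rfl, rfl, h'⟩ := h'
  refine ⟨ι ⊕ ι', κ ⊕ κ', inferInstance, inferInstance, Sum.elim a a', Sum.elim b b', ?_, ?_,
    weightedSumSquares_equivalent_sum h h'⟩ <;>
  simp [← Finset.univ_disjSum_univ, Multiset.disjSum]

lemma singleton_mul_sq (a : ℚ) {b : ℚ} (hb : b ≠ 0) : DiagEquiv {a * b ^ 2} {a} := by
  refine ⟨Fin 1, Fin 1, inferInstance, inferInstance, fun _ => a * b ^ 2, fun _ => a,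
    by simp, by simp, ⟨⟨LinearEquiv.smulOfNeZero ℚ _ b hb, fun x => ?_⟩⟩⟩
  simp [weightedSumSquares_apply]
  ring

/-- A binary substitution with nonzero determinant. -/
lemma pair {a b c d p q r s : ℚ} (hdet : p * s - q * r ≠ 0)
    (h1 : c * p ^ 2 + d * r ^ 2 = a) (h2 : c * q ^ 2 + d * s ^ 2 = b)
    (h3 : c * p * q + d * r * s = 0) : DiagEquiv {a, b} {c, d} := by
  have hdet' : IsUnit (!![p, q; r, s] : Matrix (Fin 2) (Fin 2) ℚ).det := by
    rw [Matrix.det_fin_two_of]; exact hdet.isUnit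
  refine ⟨Fin 2, Fin 2, inferInstance, inferInstance, ![a, b], ![c, d],
    by simp [Fin.univ_val_map]; rfl, by simp [Fin.univ_val_map]; rfl,
    ⟨⟨Matrix.toLinearEquiv' _ (Matrix.invertibleOfIsUnitDet _ hdet'), fun x => ?_⟩⟩⟩
  simp only [AddHom.toFun_eq_coe, LinearMap.coe_toAddHom,
    Matrix.toLinearEquiv'_apply, Matrix.toLin'_apply, weightedSumSquares_apply,
    Fin.sum_univ_two, Matrix.mulVec, dotProduct, Matrix.of_apply, Matrix.cons_val_zero,
    Matrix.cons_val_one, smul_eq_mul]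
  linear_combination x 0 ^ 2 * h1 + x 1 ^ 2 * h2 + 2 * x 0 * x 1 * h3

lemma pair_add {a b : ℚ} (hab : a + b ≠ 0) :
    DiagEquiv {a, b} {a + b, a * b * (a + b)} := by
  refine symm (pair (p := 1) (q := -b) (r := 1) (s := a) ?_ ?_ ?_ ?_)
  · simpa [add_comm] using hab
  all_goals ring

lemma pair_neg {a : ℚ} (ha : a ≠ 0) : DiagEquiv {a, -a} {1, -1} := by
  refine pair (p := (a + 1) / 2) (q := (a - 1) / 2) (r := (a - 1) / 2) (s := (a + 1) / 2)
    ?_ ?_ ?_ ?_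
  · ring_nf; exact ha
  all_goals ring

end DiagEquiv

end DiagonalForms

section StableEquivalence

/-- The coefficients of a sum of `u` copies of `⟨1⟩` and `v` copies of `⟨-1⟩`. -/
def unitCoeffs (u v : ℕ) : Multiset ℚ := Multiset.replicate u 1 + Multiset.replicate v (-1)

lemma unitCoeffs_add (u v u' v' : ℕ) :
    unitCoeffs u v + unitCoeffs u' v' = unitCoeffs (u + u') (v + v') := by
  simp only [unitCoeffs, Multiset.replicate_add]
  abel

/-- Equivalence of the nondegenerate parts of diagonal forms up to adding forms `⟨1⟩`, `⟨-1⟩`. -/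
def stableCon : AddCon (Multiset ℚ) where
  r s t := ∃ u v u' v', DiagEquiv (s.filter (· ≠ 0) + unitCoeffs u v)
    (t.filter (· ≠ 0) + unitCoeffs u' v')
  iseqv :=
    { refl := fun s => ⟨0, 0, 0, 0, .refl _⟩
      symm := fun ⟨u, v, u', v', h⟩ => ⟨u', v', u, v, h.symm⟩
      trans := by
        rintro s t w ⟨u₁, v₁, u₂, v₂, h⟩ ⟨u₃, v₃, u₄, v₄, h'⟩
        refine ⟨u₁ + u₃, v₁ + v₃, u₄ + u₂, v₄ + v₂, ?_⟩
        rw [← unitCoeffs_add, ← unitCoeffs_add, ← add_assoc, ← add_assoc]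
        refine (h.add (.refl (unitCoeffs u₃ v₃))).trans ?_
        rw [add_right_comm]
        exact h'.add (.refl _) }
  add' := by
    rintro s t s' t' ⟨u₁, v₁, u₂, v₂, h⟩ ⟨u₃, v₃, u₄, v₄, h'⟩
    refine ⟨u₁ + u₃, v₁ + v₃, u₂ + u₄, v₂ + v₄, ?_⟩
    rw [← unitCoeffs_add, ← unitCoeffs_add, Multiset.filter_add, Multiset.filter_add,
      add_add_add_comm, add_add_add_comm (t.filter _)]
    exact h.add h'

/-- The stable class of a diagonal form. -/
def stableClass : Multiset ℚ →+ stableCon.Quotient := stableCon.mk'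

lemma stableClass_eq_iff {s t : Multiset ℚ} : stableClass s = stableClass t ↔
    ∃ u v u' v', DiagEquiv (s.filter (· ≠ 0) + unitCoeffs u v)
      (t.filter (· ≠ 0) + unitCoeffs u' v') :=
  AddCon.eq stableCon

lemma stableClass_eq {s t : Multiset ℚ}
    (h : DiagEquiv (s.filter (· ≠ 0)) (t.filter (· ≠ 0))) : stableClass s = stableClass t :=
  stableClass_eq_iff.2 ⟨0, 0, 0, 0, h.add (.refl _)⟩

lemma stableClass_zero : stableClass {0} = 0 := by
  rw [← map_zero stableClass]
  exact stableClass_eq (by simpa [Multiset.filter_singleton] using DiagEquiv.refl 0)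

lemma stableClass_one : stableClass {1} = 0 := by
  rw [← map_zero stableClass, stableClass_eq_iff]
  exact ⟨0, 0, 1, 0, by simpa [Multiset.filter_singleton, unitCoeffs] using DiagEquiv.refl {1}⟩

lemma stableClass_neg_one : stableClass {-1} = 0 := by
  rw [← map_zero stableClass, stableClass_eq_iff]
  exact ⟨0, 0, 0, 1, by simpa [Multiset.filter_singleton, unitCoeffs] using DiagEquiv.refl {-1}⟩

lemma stableClass_mul_sq (a : ℚ) {b : ℚ} (hb : b ≠ 0) :
    stableClass {a * b ^ 2} = stableClass {a} := by
  rcases eq_or_ne a 0 with rfl | ha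
  · simp
  apply stableClass_eq
  simpa [Multiset.filter_singleton, ha, hb] using DiagEquiv.singleton_mul_sq a hb

lemma filter_pair {a b : ℚ} (ha : a ≠ 0) (hb : b ≠ 0) :
    (({a} + {b} : Multiset ℚ).filter (· ≠ 0)) = {a, b} := by
  simp [Multiset.filter_add, Multiset.filter_singleton, ha, hb]

lemma stableClass_add_neg (a : ℚ) : stableClass {a} + stableClass {-a} = 0 := by
  rcases eq_or_ne a 0 with rfl | ha
  · simp [stableClass_zero]
  have h : stableClass ({a} + {-a}) = stableClass ({1} + {-1}) := by
    apply stableClass_eq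
    rw [filter_pair ha (neg_ne_zero.2 ha), filter_pair one_ne_zero (neg_ne_zero.2 one_ne_zero)]
    exact DiagEquiv.pair_neg ha
  rw [← map_add, h, map_add, stableClass_one, stableClass_neg_one, add_zero]

lemma stableClass_add (a b : ℚ) :
    stableClass {a} + stableClass {b} =
      stableClass {a + b} + stableClass {a * b * (a + b)} := by
  rcases eq_or_ne a 0 with rfl | ha
  · simp [stableClass_zero]
  rcases eq_or_ne b 0 with rfl | hb
  · simp [stableClass_zero]
  rcases eq_or_ne (a + b) 0 with hab | hab
  · rw [hab, mul_zero, stableClass_zero, eq_neg_of_add_eq_zero_right hab, stableClass_add_neg,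
      add_zero]
  rw [← map_add, ← map_add]
  apply stableClass_eq
  rw [filter_pair ha hb, filter_pair hab (mul_ne_zero (mul_ne_zero ha hb) hab)]
  exact DiagEquiv.pair_add hab

/-- The stable class of `⟨z⟩`, with its additive inverse. -/
def stableUnit (z : ℤ) : AddUnits stableCon.Quotient :=
  ⟨stableClass {(z : ℚ)}, stableClass {-(z : ℚ)}, stableClass_add_neg _,
    by rw [add_comm, stableClass_add_neg]⟩

/-- The homomorphism from the Witt group of the integers to stable classes. -/
def toStableClass : WittGroup ℤ →+ AddUnits stableCon.Quotient :=
  WittGroup.lift stableUnit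
    (AddUnits.ext (by simpa [stableUnit] using stableClass_zero))
    (fun a b hb => AddUnits.ext (by
      simpa [stableUnit] using stableClass_mul_sq a (b := b) (by exact_mod_cast hb)))
    (fun a b => AddUnits.ext (by simpa [stableUnit] using stableClass_add a b))

lemma toStableClass_mk (z : ℤ) :
    (toStableClass (WittGroup.mk z) : stableCon.Quotient) = stableClass {(z : ℚ)} := by
  simp [toStableClass, stableUnit]

lemma toStableClass_eq_zero {x : WittGroup ℤ} (hx : x ∈ WittGroup.smooth 0) :
    toStableClass x = 0 := by
  have : WittGroup.smooth 0 ≤ toStableClass.ker := by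
    rw [WittGroup.smooth, AddSubgroup.closure_le]
    rintro _ ⟨z, hz, rfl⟩
    rw [SetLike.mem_coe, AddMonoidHom.mem_ker, ← AddUnits.val_inj, toStableClass_mk]
    have hz1 : z.natAbs = 1 := by
      by_contra h
      obtain ⟨q, hq, hd⟩ := Nat.exists_prime_and_dvd h
      exact absurd (hz q hq (Int.natCast_dvd.2 hd)) (by omega)
    rcases Int.natAbs_eq_iff.1 hz1 with rfl | rfl
    · simpa using stableClass_one
    · simpa using stableClass_neg_one
  exact this hx

lemma stableClass_eq_stableClass_num_mul_den (a : ℚ) :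
    stableClass {((a.num * a.den : ℤ) : ℚ)} = stableClass {a} := by
  rw [← stableClass_mul_sq a (Nat.cast_ne_zero.2 a.den_ne_zero)]
  congr 2
  push_cast
  nth_rewrite 3 [← Rat.num_div_den a]
  field_simp

/-- Every diagonal form is stably equivalent to a ternary one. -/
theorem exists_stableClass_eq_ternary {n : ℕ} (a : Fin n → ℚ) :
    ∃ c : Fin 3 → ℚ, (∀ i, c i ≠ 0) ∧
      stableClass (Finset.univ.val.map a) = stableClass (Finset.univ.val.map c) := by
  obtain ⟨m, k, l, δ, hm, hk, hl, hδ, h⟩ :=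
    WittGroup.exists_ternary (∑ i, WittGroup.mk ((a i).num * (a i).den))
  have hmem := WittGroup.mem_smooth_zero
    (x := WittGroup.ternary m k l δ - ∑ i, WittGroup.mk ((a i).num * (a i).den)) fun p _ => by
    rw [map_sub, h p, sub_self]
  have hzero := toStableClass_eq_zero hmem
  rw [map_sub, sub_eq_zero, ← AddUnits.val_inj] at hzero
  refine ⟨![(m * δ : ℤ), (m * δ * l : ℤ), (m * k * l : ℤ)], ?_, ?_⟩
  · intro i
    fin_cases i <;> simp [hm, hk, hl, hδ]
  have hsum : ∀ {r : ℕ} (b : Fin r → ℚ),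
      stableClass (Finset.univ.val.map b) = ∑ i, stableClass {b i} := fun b => by
    rw [← map_sum]
    congr 1
    exact (Multiset.sum_map_singleton _).symm.trans (by rw [Multiset.map_map]; rfl)
  rw [hsum, hsum]
  simp only [Fin.sum_univ_three, ← stableClass_eq_stableClass_num_mul_den (a _)]
  refine Eq.trans ?_ (hzero.symm.trans ?_)
  · rw [map_sum]
    change _ = AddUnits.coeHom _ _
    rw [map_sum]
    simp only [AddUnits.coeHom_apply, toStableClass_mk]
  · rw [WittGroup.ternary, map_add, map_add, AddUnits.val_add, AddUnits.val_add,
      toStableClass_mk, toStableClass_mk, toStableClass_mk]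
    rfl

end StableEquivalence

section Coefficients

lemma ofFn_alternating (t : ℕ) :
    ((List.ofFn fun i : Fin (2 * t) => if (i : ℕ) % 2 = 0 then (1 : ℚ) else -1 : List ℚ) :
      Multiset ℚ) = unitCoeffs t t := by
  induction t with
  | zero => simp [unitCoeffs]
  | succ t ih =>
    rw [show 2 * (t + 1) = 2 * t + 2 by ring, List.ofFn_add, ← Multiset.coe_add]
    have h2 : unitCoeffs (t + 1) (t + 1) = unitCoeffs t t + {1, -1} := by
      rw [← unitCoeffs_add]; rfl
    rw [h2, ← ih]
    congr 1
    simp [Nat.add_mod]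
    rfl

end Coefficients

/-- Every nondegenerate diagonal form over ℚ has rational Witt span at most 3:
after adding t hyperbolic pairs (1, −1) to the coefficient list (a₁, …, aₙ), the
resulting diagonal form is equivalent to a diagonal form whose coefficient list
consists of at most 3 nonzero rationals c₁, …, c_r, followed by u copies of 1,
v copies of −1 and s hyperbolic pairs (1, −1). -/
theorem rational_witt_span_le_three
    (n : ℕ) (hn : 1 ≤ n) (a : Fin n → ℚ) (ha : ∀ i, a i ≠ 0) :
    ∃ r : ℕ, r ≤ 3 ∧ ∃ c : Fin r → ℚ, (∀ i, c i ≠ 0) ∧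
      ∃ u v s t : ℕ, n + 2 * t = r + u + v + 2 * s ∧
        ∃ φ : (Fin (n + 2 * t) → ℚ) ≃ₗ[ℚ] (Fin (r + u + v + 2 * s) → ℚ),
          ∀ x : Fin (n + 2 * t) → ℚ,
            (∑ i : Fin (r + u + v + 2 * s),
              (if h : (i : ℕ) < r then c ⟨(i : ℕ), h⟩
                else if (i : ℕ) < r + u then 1
                else if (i : ℕ) < r + u + v then -1
                else if ((i : ℕ) - (r + u + v)) % 2 = 0 then 1 else -1)
              * (φ x i) ^ 2)
            = ∑ i : Fin (n + 2 * t),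
                (if h : (i : ℕ) < n then a ⟨(i : ℕ), h⟩
                  else if ((i : ℕ) - n) % 2 = 0 then 1 else -1)
                * (x i) ^ 2 := by
  obtain ⟨c, hc, hac⟩ := exists_stableClass_eq_ternary a
  obtain ⟨u, v, u', v', h⟩ := stableClass_eq_iff.1 hac
  have hfilter : ∀ {r : ℕ} {b : Fin r → ℚ}, (∀ i, b i ≠ 0) →
      (Finset.univ.val.map b).filter (· ≠ 0) = Finset.univ.val.map b := fun hb =>
    Multiset.filter_eq_self.2 fun q hq => by
      obtain ⟨i, _, rfl⟩ := Multiset.mem_map.1 hq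
      exact hb i
  rw [hfilter ha, hfilter hc] at h
  have h' := h.add (.refl (unitCoeffs v u))
  rw [add_assoc, add_assoc, unitCoeffs_add, unitCoeffs_add, add_comm v u] at h'
  refine ⟨3, le_rfl, c, hc, u' + v, v' + u, 0, u + v, ?_⟩
  have hleft : Finset.univ.val.map (fun i : Fin (n + 2 * (u + v)) =>
      if h : (i : ℕ) < n then a ⟨i, h⟩ else if ((i : ℕ) - n) % 2 = 0 then 1 else -1) =
        Finset.univ.val.map a + unitCoeffs (u + v) (u + v) := by
    rw [Fin.univ_val_map, Fin.univ_val_map, List.ofFn_add, ← Multiset.coe_add,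
      ← ofFn_alternating]
    simp
  have hright : Finset.univ.val.map (fun i : Fin (3 + (u' + v) + (v' + u) + 2 * 0) =>
      if h : (i : ℕ) < 3 then c ⟨i, h⟩
      else if (i : ℕ) < 3 + (u' + v) then 1
      else if (i : ℕ) < 3 + (u' + v) + (v' + u) then -1
      else if ((i : ℕ) - (3 + (u' + v) + (v' + u))) % 2 = 0 then 1 else -1) =
        Finset.univ.val.map c + unitCoeffs (u' + v) (v' + u) := by
    rw [Fin.univ_val_map, Fin.univ_val_map, List.ofFn_add, List.ofFn_add, List.ofFn_add]
    simp [unitCoeffs, ← Multiset.coe_replicate, add_assoc]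
  obtain ⟨φ⟩ := h'.equivalent hleft hright
  refine ⟨by simpa using φ.toLinearEquiv.finrank_eq, φ.toLinearEquiv, fun x => ?_⟩
  have := φ.map_app x
  simp only [QuadraticMap.weightedSumSquares_apply, smul_eq_mul, ← pow_two] at this
  exact this
end
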